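/- For every ε ∈ (0,1) there exists a positive integer K (depending only on ε) with the following property. Let W, H be positive integers and let R be a finite family of rectangles, each of width at most W, that admits a feasible packing into [0,W]×[0,H]. Then there exist at most K axis-aligned rectangular regions (containers) with pairwise disjoint interiors, each contained in [0,W]×[0,⌈(4/3+ε)·H⌉] and each labeled horizontal or vertical, together with a feasible packing into [0,W]×[0,⌈(4/3+ε)·H⌉] of the subfamily R' ⊆ R of all rectangles with h_i > ε·H or w_i > ε·W, such that every rectangle of R' lies inside one of the containers, any vertical line intersects the interior of at most one rectangle packed in each vertical container, and any horizontal line intersects the interior of at most one rectangle packed in each horizontal container. -/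

import Mathlib

open scoped Classical

/-- Open axis-aligned rectangles `(x₁, x₁+w₁) × (y₁, y₁+h₁)` and `(x₂, x₂+w₂) × (y₂, y₂+h₂)`
are disjoint. -/
def RectDisjoint (x₁ y₁ w₁ h₁ x₂ y₂ w₂ h₂ : ℕ) : Prop :=
  x₁ + w₁ ≤ x₂ ∨ x₂ + w₂ ≤ x₁ ∨ y₁ + h₁ ≤ y₂ ∨ y₂ + h₂ ≤ y₁

/-- A feasible packing of the family of rectangles `(w i, h i)` at positions `(x i, y i)`
inside `[0,W]×[0,H]`. -/
def IsPacking {ι : Type*} (w h x y : ι → ℕ) (W H : ℕ) : Prop :=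
  (∀ i, x i + w i ≤ W ∧ y i + h i ≤ H) ∧
  Pairwise fun i j => RectDisjoint (x i) (y i) (w i) (h i) (x j) (y j) (w j) (h j)

/-- Two axis-aligned rectangular regions (real coordinates) have disjoint interiors. -/
def RegionDisjoint (cx cy cw ch cx' cy' cw' ch' : ℝ) : Prop :=
  cx + cw ≤ cx' ∨ cx' + cw' ≤ cx ∨ cy + ch ≤ cy' ∨ cy' + ch' ≤ cy

/-- The rectangle of width `wi`, height `hi` placed at `(x,y)` lies inside the region with
bottom-left corner `(cx,cy)`, width `cw` and height `ch`. -/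
def InRegion (x y wi hi : ℕ) (cx cy cw ch : ℝ) : Prop :=
  cx ≤ (x : ℝ) ∧ (x : ℝ) + wi ≤ cx + cw ∧ cy ≤ (y : ℝ) ∧ (y : ℝ) + hi ≤ cy + ch

/-!
The core is the case of a grid with boundedly many rows. By pigeonhole there is a gap between the
widths of the items, up to short items of small total width. The boundedly many items above the gap
are obstacles, which stay in their columns, and their sides cut the grid into slabs. Every item of
more than a third of the `n` rows contains one of two fixed rows, so it is on the low or the high
track. Moving everything that starts above row `n / 3` up by `n / 3` decouples the tracks: the
columns of a slab can then be sorted separately for each of them, by the items on the track and then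
by the state of the column, and thereby items of the same type come together in containers. Only
items on both tracks have to be moved consistently, so their columns are listed first. Short items
are cut to pieces in this way. They are packed again into the places of the pieces of their type;
those that do not fit go to the `n / 3` rows that become free between the tracks, in the columns
with the most frequent state of a slab.

In general, group the heights into scales. There is a scale whose rectangles, all of them wide, have
small total height, and these are stacked on top. The higher rectangles are rounded to a grid after
stretching the strip slightly. The lower ones are wide and much thinner than a row of the grid, and
within a row they lie in boundedly many slots between the rounded rectangles. The slots become
obstacles of height one. Inside a slot, horizontal lines are sorted by the numbers of rectangles
they meet in each of boundedly many groups of similar width. This yields boundedly many boxes, and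
moving each group to the boxes of the next wider one loses little height.
-/

namespace StripPacking

open Finset

universe u

section Sums

variable {ι κ : Type*}

theorem sum_union_le (s t : Finset ι) (f : ι → ℕ) :
    ∑ i ∈ s ∪ t, f i ≤ ∑ i ∈ s, f i + ∑ i ∈ t, f i := by
  rw [← sum_union_inter]
  exact Nat.le_add_right _ _

theorem sum_biUnion_le (s : Finset κ) (t : κ → Finset ι) (f : ι → ℕ) :
    ∑ i ∈ s.biUnion t, f i ≤ ∑ k ∈ s, ∑ i ∈ t k, f i := by
  induction s using Finset.induction_on with
  | empty => simp
  | insert k s hk ih =>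
    rw [biUnion_insert, sum_insert hk]
    exact (sum_union_le _ _ _).trans (Nat.add_le_add_left ih _)

theorem exists_mul_sum_le_of_pairwiseDisjoint {s : Finset ι} {r : κ → Finset ι} {K : Finset κ}
    (hK : K.Nonempty) (hr : ∀ k ∈ K, r k ⊆ s) (hd : (K : Set κ).PairwiseDisjoint r) (f : ι → ℕ) :
    ∃ k ∈ K, #K * ∑ i ∈ r k, f i ≤ ∑ i ∈ s, f i := by
  refine exists_le_of_sum_le hK ?_
  rw [← mul_sum, ← sum_biUnion hd, sum_const, smul_eq_mul]
  exact Nat.mul_le_mul_left _ (sum_le_sum_of_subset (biUnion_subset.2 hr))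

end Sums

section Intervals

variable {ι : Type*} {s : Finset ι} {l p : ι → ℕ}

theorem sum_length_le_card {T : Finset ℕ} (hT : ∀ i ∈ s, Ico (p i) (p i + l i) ⊆ T)
    (hd : (s : Set ι).Pairwise fun i j => p i + l i ≤ p j ∨ p j + l j ≤ p i) :
    ∑ i ∈ s, l i ≤ #T := by
  have hdisj : (s : Set ι).PairwiseDisjoint fun i => Ico (p i) (p i + l i) := by
    intro i hi j hj hij
    refine Finset.disjoint_left.2 fun z hz hz' => ?_
    rw [mem_Ico] at hz hz'
    have := hd hi hj hij
    omega
  calc ∑ i ∈ s, l i = ∑ i ∈ s, #(Ico (p i) (p i + l i)) := by simp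
    _ = #(s.biUnion fun i => Ico (p i) (p i + l i)) := (card_biUnion hdisj).symm
    _ ≤ #T := card_le_card (biUnion_subset.2 hT)

theorem sum_length_le {L : ℕ} (hL : ∀ i ∈ s, p i + l i ≤ L)
    (hd : (s : Set ι).Pairwise fun i j => p i + l i ≤ p j ∨ p j + l j ≤ p i) :
    ∑ i ∈ s, l i ≤ L := by
  rw [← card_range L]
  refine sum_length_le_card (fun i hi z hz => ?_) hd
  have := hL i hi
  rw [mem_Ico] at hz
  exact mem_range.2 (by omega)

theorem card_le_of_lt_mul_length {W e : ℕ} (hL : ∀ i ∈ s, p i + l i ≤ W)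
    (hd : (s : Set ι).Pairwise fun i j => p i + l i ≤ p j ∨ p j + l j ≤ p i)
    (hl : ∀ i ∈ s, W < e * l i) : #s ≤ e := by
  have hsum : #s * (W + 1) ≤ e * W :=
    calc
      #s * (W + 1) ≤ ∑ i ∈ s, e * l i := by
        simpa using card_nsmul_le_sum s (fun i => e * l i) (W + 1) hl
      _ = e * ∑ i ∈ s, l i := (mul_sum ..).symm
      _ ≤ e * W := Nat.mul_le_mul_left _ (sum_length_le hL hd)
  by_contra! hcard
  nlinarith

theorem exists_stacking {γ : Type*} (s : Finset ι) (l : ι → ℕ) (c : ι → γ) : ∃ p : ι → ℕ,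
    ((s : Set ι).Pairwise fun i j => c i = c j → p i + l i ≤ p j ∨ p j + l j ≤ p i) ∧
      ∀ i ∈ s, p i + l i ≤ ∑ j ∈ s with c j = c i, l j := by
  induction s using Finset.induction_on with
  | empty => exact ⟨fun _ => 0, by simp, by simp⟩
  | insert a s ha ih =>
    obtain ⟨p, hp, hle⟩ := ih
    have hne : ∀ i ∈ s, i ≠ a := fun i hi => ne_of_mem_of_not_mem hi ha
    have hlast : ∀ i ∈ s, c i = c a → p i + l i ≤ ∑ j ∈ s with c j = c a, l j :=
      fun i hi hc => hc ▸ hle i hi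
    refine ⟨Function.update p a (∑ j ∈ s with c j = c a, l j), ?_, ?_⟩
    · rw [coe_insert, Set.pairwise_insert]
      refine ⟨fun i hi j hj hij => ?_, fun i hi _ => ?_⟩
      · simpa [hne i hi, hne j hj] using hp hi hj hij
      · simp only [Function.update_self, Function.update_of_ne (hne i hi)]
        exact ⟨fun hc => Or.inr (hlast i hi hc.symm), fun hc => Or.inl (hlast i hi hc)⟩
    · intro i hi
      rcases mem_insert.1 hi with rfl | hi
      · rw [Function.update_self, filter_insert, if_pos rfl, sum_insert (by simp [ha]), add_comm]
      · rw [Function.update_of_ne (hne i hi)]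
        exact (hle i hi).trans (sum_le_sum_of_subset (filter_subset_filter _ (subset_insert _ _)))

theorem exists_antitone_stacking {α : Type*} [LinearOrder α] (s : Finset ι) (w : ι → α)
    (hl : ∀ i ∈ s, 0 < l i) : ∃ p : ι → ℕ,
    ((s : Set ι).Pairwise fun i j => p i + l i ≤ p j ∨ p j + l j ≤ p i) ∧
      (∀ i ∈ s, ∀ j ∈ s, p i < p j → w j ≤ w i) ∧
      (∀ i ∈ s, p i = ∑ j ∈ s with p j < p i, l j) := by
  suffices ∃ p : ι → ℕ,
      ((s : Set ι).Pairwise fun i j => p i + l i ≤ p j ∨ p j + l j ≤ p i) ∧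
      (∀ i ∈ s, ∀ j ∈ s, p i < p j → w j ≤ w i) ∧
      (∀ i ∈ s, p i = ∑ j ∈ s with p j < p i, l j) ∧ ∀ i ∈ s, p i + l i ≤ ∑ j ∈ s, l j by
    obtain ⟨p, h₁, h₂, h₃, -⟩ := this
    exact ⟨p, h₁, h₂, h₃⟩
  induction s using induction_on_min_value w with
  | empty => exact ⟨fun _ => 0, by simp⟩
  | insert a s ha hmin ih =>
    obtain ⟨p, hd, hmono, hsum, hle⟩ := ih fun i hi => hl i (mem_insert_of_mem hi)
    have hne : ∀ i ∈ s, i ≠ a := fun i hi => ne_of_mem_of_not_mem hi ha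
    have hlt : ∀ i ∈ s, p i < ∑ j ∈ s, l j := fun i hi => by
      have := hle i hi
      have := hl i (mem_insert_of_mem hi)
      omega
    set p' := Function.update p a (∑ j ∈ s, l j)
    have ha' : p' a = ∑ j ∈ s, l j := Function.update_self ..
    have hs' : ∀ i ∈ s, p' i = p i := fun i hi => Function.update_of_ne (hne i hi) ..
    refine ⟨p', ?_, ?_, ?_, ?_⟩
    · rw [coe_insert, Set.pairwise_insert]
      refine ⟨fun i hi j hj hij => ?_, fun i hi _ => ?_⟩
      · simpa only [hs' i hi, hs' j hj] using hd hi hj hij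
      · rw [ha', hs' i hi]
        exact ⟨Or.inr (hle i hi), Or.inl (hle i hi)⟩
    · simp only [mem_insert, forall_eq_or_imp, lt_self_iff_false, false_imp_iff, true_and, ha']
      refine ⟨fun j hj hlt' => ?_, fun i hi => ⟨fun _ => hmin i hi, fun j hj => ?_⟩⟩
      · rw [hs' j hj] at hlt'
        exact absurd hlt' (hlt j hj).le.not_gt
      · simpa only [hs' i hi, hs' j hj] using hmono i hi j hj
    · simp only [mem_insert, forall_eq_or_imp, filter_insert, lt_self_iff_false, if_false, ha']
      refine ⟨sum_congr (filter_true_of_mem fun i hi => (hs' i hi).trans_lt (hlt i hi)).symm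
        fun _ _ => rfl, fun i hi => ?_⟩
      rw [hs' i hi, if_neg (hlt i hi).le.not_gt]
      exact (hsum i hi).trans (sum_congr (filter_congr fun j hj => by rw [hs' j hj]) fun _ _ => rfl)
    · simp only [mem_insert, forall_eq_or_imp, sum_insert ha, ha']
      refine ⟨(add_comm _ _).le, fun i hi => ?_⟩
      rw [hs' i hi]
      exact (hle i hi).trans (Nat.le_add_left _ _)

end Intervals

section Filling

variable {ι γ : Type*} {l : ι → ℕ} {ν : ℕ}

theorem exists_subset_filling (s : Finset ι) (cap : ℕ) (hν : ∀ i ∈ s, l i ≤ ν) :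
    ∃ t ⊆ s, ∑ i ∈ t, l i ≤ cap ∧ (t = s ∨ cap ≤ ∑ i ∈ t, l i + ν) := by
  induction s using Finset.induction_on with
  | empty => exact ⟨∅, by simp⟩
  | insert a s ha ih =>
    obtain ⟨t, hts, hcap, rfl | hfull⟩ := ih fun i hi => hν i (mem_insert_of_mem hi)
    · by_cases hfit : ∑ i ∈ insert a t, l i ≤ cap
      · exact ⟨insert a t, subset_rfl, hfit, Or.inl rfl⟩
      · have := hν a (mem_insert_self a t)
        rw [sum_insert ha] at hfit
        exact ⟨t, hts.trans (subset_insert _ _), hcap, Or.inr (by omega)⟩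
    · exact ⟨t, hts.trans (subset_insert _ _), hcap, Or.inr hfull⟩

theorem exists_filling [Nonempty γ] (C : Finset γ) (cap : γ → ℕ) (s : Finset ι)
    (hν : ∀ i ∈ s, l i ≤ ν) : ∃ lost ⊆ s, ∃ c : ι → γ, (∀ i ∈ s \ lost, c i ∈ C) ∧
      (∀ k ∈ C, ∑ i ∈ s \ lost with c i = k, l i ≤ cap k) ∧
      (lost = ∅ ∨ ∑ i ∈ lost, l i + ∑ k ∈ C, cap k ≤ ∑ i ∈ s, l i + #C * ν) := by
  induction C using Finset.induction_on generalizing s with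
  | empty => exact ⟨s, subset_rfl, fun _ => Classical.arbitrary γ, by simp⟩
  | insert a C ha ih =>
    obtain ⟨t, hts, hcap, hfull⟩ := exists_subset_filling s (cap a) hν
    obtain ⟨lost, hlost, c, hc, hload, hsum⟩ := ih (s \ t) fun i hi => hν i (mem_sdiff.1 hi).1
    have hrest : ∀ i ∈ s \ lost, i ∉ t → i ∈ (s \ t) \ lost := fun i hi ht => by
      simp only [mem_sdiff] at hi ⊢
      exact ⟨⟨hi.1, ht⟩, hi.2⟩
    refine ⟨lost, hlost.trans sdiff_subset, fun i => if i ∈ t then a else c i, ?_, ?_, ?_⟩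
    · intro i hi
      beta_reduce
      split_ifs with ht
      · exact mem_insert_self _ _
      · exact mem_insert_of_mem (hc i (hrest i hi ht))
    · intro k hk
      rcases mem_insert.1 hk with rfl | hkC
      · refine (sum_le_sum_of_subset fun i hi => ?_).trans hcap
        obtain ⟨hi, hik⟩ := mem_filter.1 hi
        by_contra ht
        beta_reduce at hik
        rw [if_neg ht] at hik
        exact ha (hik ▸ hc i (hrest i hi ht))
      · refine (sum_le_sum_of_subset fun i hi => ?_).trans (hload k hkC)
        obtain ⟨hi, hik⟩ := mem_filter.1 hi
        beta_reduce at hik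
        split_ifs at hik with ht
        · exact absurd (hik ▸ hkC) ha
        · exact mem_filter.2 ⟨hrest i hi ht, hik⟩
    · rcases hfull with rfl | hfull
      · exact Or.inl (by simpa using hlost)
      · refine hsum.imp_right fun hsum => ?_
        have := sum_sdiff (f := l) hts
        rw [sum_insert ha, card_insert_of_notMem ha, add_mul]
        omega

end Filling

/-! ### Packings into containers -/

/-- Rectangles `w i × h i`, `i ∈ s`, of positive size, placed with lower left corners `(x i, y i)`,
are disjoint and lie in `[0,W] × [0,H]`. This is `IsPacking` relative to a finite index set. -/
structure IsPackingOn {ι : Type*} (s : Finset ι) (w h x y : ι → ℕ) (W H : ℕ) : Prop where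
  width_pos : ∀ i ∈ s, 0 < w i
  height_pos : ∀ i ∈ s, 0 < h i
  right_le : ∀ i ∈ s, x i + w i ≤ W
  top_le : ∀ i ∈ s, y i + h i ≤ H
  disjoint : (s : Set ι).Pairwise fun i j =>
    RectDisjoint (x i) (y i) (w i) (h i) (x j) (y j) (w j) (h j)

namespace IsPackingOn

variable {ι : Type*} {s t : Finset ι} {w h x y : ι → ℕ} {W H : ℕ}

theorem comap {κ : Type*} {t : Finset κ} {f : κ → ι} (hP : IsPackingOn s w h x y W H)
    (hf : ∀ i ∈ t, f i ∈ s) (hinj : Set.InjOn f t) :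
    IsPackingOn t (w ∘ f) (h ∘ f) (x ∘ f) (y ∘ f) W H where
  width_pos i hi := hP.width_pos _ (hf i hi)
  height_pos i hi := hP.height_pos _ (hf i hi)
  right_le i hi := hP.right_le _ (hf i hi)
  top_le i hi := hP.top_le _ (hf i hi)
  disjoint _ hi _ hj hij := hP.disjoint (hf _ hi) (hf _ hj) (hinj.ne hi hj hij)

theorem mono (hP : IsPackingOn s w h x y W H) (ht : t ⊆ s) : IsPackingOn t w h x y W H :=
  hP.comap (f := id) (fun _ hi => ht hi) Function.injective_id.injOn

theorem sum_area_le (hP : IsPackingOn s w h x y W H) : ∑ i ∈ s, w i * h i ≤ W * H := by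
  set cells : ι → Finset (ℕ × ℕ) := fun i => Ico (x i) (x i + w i) ×ˢ Ico (y i) (y i + h i)
  have hdisj : (s : Set ι).PairwiseDisjoint cells := by
    intro i hi j hj hij
    refine Finset.disjoint_left.2 fun z hz hz' => ?_
    simp only [cells, mem_product, mem_Ico] at hz hz'
    have := hP.disjoint hi hj hij
    unfold RectDisjoint at this
    omega
  have hsub : s.biUnion cells ⊆ range W ×ˢ range H := by
    refine biUnion_subset.2 fun i hi z hz => ?_
    simp only [cells, mem_product, mem_Ico] at hz
    have := hP.right_le i hi
    have := hP.top_le i hi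
    simp only [mem_product, mem_range]
    omega
  calc ∑ i ∈ s, w i * h i = #(s.biUnion cells) := by simp [card_biUnion hdisj, cells]
    _ ≤ W * H := (card_le_card hsub).trans_eq (by simp)

theorem sum_height_le_of_lt_mul_width (hP : IsPackingOn s w h x y W H) {V e : ℕ} (hV : 0 < V)
    (hWV : W ≤ V) (hwide : ∀ i ∈ s, V < e * w i) : ∑ i ∈ s, h i ≤ e * H := by
  refine Nat.le_of_mul_le_mul_left ?_ hV
  calc V * ∑ i ∈ s, h i = ∑ i ∈ s, V * h i := mul_sum ..
    _ ≤ ∑ i ∈ s, e * (w i * h i) :=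
      sum_le_sum fun i hi => by rw [← mul_assoc]; exact Nat.mul_le_mul_right _ (hwide i hi).le
    _ = e * ∑ i ∈ s, w i * h i := (mul_sum ..).symm
    _ ≤ e * (V * H) := Nat.mul_le_mul_left _ (hP.sum_area_le.trans (Nat.mul_le_mul_right _ hWV))
    _ = V * (e * H) := by ring

end IsPackingOn

/-- The region `[left, left + width] × [bottom, bottom + height]`; `vertical` tells whether the
rectangles in it are separated by vertical lines (otherwise by horizontal lines). -/
structure Container where
  left : ℕ
  bottom : ℕ
  width : ℕ
  height : ℕ
  vertical : Bool

namespace Container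

instance : Inhabited Container := ⟨⟨0, 0, 0, 0, true⟩⟩

/-- The interiors are disjoint. -/
def Disjoint (C D : Container) : Prop :=
  RectDisjoint C.left C.bottom C.width C.height D.left D.bottom D.width D.height

/-- The region of `C` is part of the region of `D`. -/
def Subregion (C D : Container) : Prop :=
  D.left ≤ C.left ∧ C.left + C.width ≤ D.left + D.width ∧
    D.bottom ≤ C.bottom ∧ C.bottom + C.height ≤ D.bottom + D.height

/-- The rectangle `w × h` at `(x, y)` lies in `C`. -/
def Holds (C : Container) (w h x y : ℕ) : Prop :=
  C.left ≤ x ∧ x + w ≤ C.left + C.width ∧ C.bottom ≤ y ∧ y + h ≤ C.bottom + C.height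

/-- The image under `(a, b) ↦ (a, g * b)`. -/
def scale (g : ℕ) (C : Container) : Container :=
  { C with bottom := C.bottom * g, height := C.height * g }

/-- The translate by `(a, b)`. -/
def shift (a b : ℕ) (C : Container) : Container :=
  { C with left := a + C.left, bottom := b + C.bottom }

variable {C C' D D' : Container} {w h x y g : ℕ}

theorem Disjoint.symm (hCD : C.Disjoint D) : D.Disjoint C := by
  unfold Disjoint RectDisjoint at *
  omega

theorem Disjoint.mono (hCD : C.Disjoint D) (hC : C'.Subregion C) (hD : D'.Subregion D) :
    C'.Disjoint D' := by
  unfold Disjoint RectDisjoint Subregion at *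
  omega

theorem Disjoint.ne_of_holds (hCD : C.Disjoint D) (hC : C.Holds w h x y) (hw : 0 < w)
    (hh : 0 < h) : C ≠ D := by
  rintro rfl
  unfold Disjoint RectDisjoint Holds at *
  omega

theorem Subregion.refl (C : Container) : C.Subregion C :=
  ⟨le_rfl, le_rfl, le_rfl, le_rfl⟩

theorem Disjoint.scale (hCD : C.Disjoint D) : (C.scale g).Disjoint (D.scale g) := by
  simp only [Disjoint, RectDisjoint, Container.scale, ← add_mul] at *
  exact hCD.imp_right (Or.imp_right (Or.imp (Nat.mul_le_mul_right g) (Nat.mul_le_mul_right g)))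

theorem scale_injective (hg : 0 < g) : Function.Injective (scale g) := by
  rintro ⟨⟩ ⟨⟩ h
  simpa [scale, hg.ne'] using h

theorem shift_injective (a b : ℕ) : Function.Injective (shift a b) := by
  rintro ⟨⟩ ⟨⟩ h
  simpa [shift] using h

theorem Disjoint.shift (hCD : C.Disjoint D) (a b : ℕ) : (C.shift a b).Disjoint (D.shift a b) := by
  simp only [Disjoint, RectDisjoint, Container.shift] at *
  omega

end Container

/-- A packing of the rectangles `w i × h i`, `i ∈ s`, into pairwise disjoint containers inside
`[0,W] × [0,H]`: rectangle `i` lies in `container i` with its lower left corner at `(x i, y i)`. -/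
structure ContainerPacking {ι : Type*} (s : Finset ι) (w h : ι → ℕ) (W H : ℕ) where
  containers : Finset Container
  container : ι → Container
  x : ι → ℕ
  y : ι → ℕ
  container_mem : ∀ i ∈ s, container i ∈ containers
  right_le : ∀ C ∈ containers, C.left + C.width ≤ W
  top_le : ∀ C ∈ containers, C.bottom + C.height ≤ H
  disjoint : (containers : Set Container).Pairwise Container.Disjoint
  holds : ∀ i ∈ s, (container i).Holds (w i) (h i) (x i) (y i)
  separated : (s : Set ι).Pairwise fun i j => container i = container j →
    if (container i).vertical then x i + w i ≤ x j ∨ x j + w j ≤ x i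
    else y i + h i ≤ y j ∨ y j + h j ≤ y i

namespace ContainerPacking

variable {ι κ β : Type*} {s t : Finset ι} {w h : ι → ℕ} {W H : ℕ}

/-- The same packing in a larger region. -/
def mono (P : ContainerPacking s w h W H) {W' H' : ℕ} (hW : W ≤ W') (hH : H ≤ H') :
    ContainerPacking s w h W' H' :=
  { P with
    right_le := fun C hC => (P.right_le C hC).trans hW
    top_le := fun C hC => (P.top_le C hC).trans hH }

/-- The packing of a family that is mapped injectively to not smaller rectangles; the containers
without a rectangle of the new family are discarded. -/
noncomputable def comap (P : ContainerPacking s w h W H) {t : Finset κ} {w' h' : κ → ℕ} (f : κ → ι)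
    (hf : ∀ i ∈ t, f i ∈ s) (hinj : Set.InjOn f t) (hw : ∀ i ∈ t, w' i ≤ w (f i))
    (hh : ∀ i ∈ t, h' i ≤ h (f i)) : ContainerPacking t w' h' W H where
  containers := t.image (P.container ∘ f)
  container := P.container ∘ f
  x := P.x ∘ f
  y := P.y ∘ f
  container_mem _ hi := mem_image_of_mem _ hi
  right_le := forall_mem_image.2 fun i hi => P.right_le _ (P.container_mem _ (hf i hi))
  top_le := forall_mem_image.2 fun i hi => P.top_le _ (P.container_mem _ (hf i hi))
  disjoint := P.disjoint.mono (coe_subset.2 (image_subset_iff.2 fun i hi =>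
    P.container_mem _ (hf i hi)))
  holds i hi := by
    obtain ⟨hleft, hright, hbot, htop⟩ := P.holds _ (hf i hi)
    exact ⟨hleft, (Nat.add_le_add_left (hw i hi) _).trans hright, hbot,
      (Nat.add_le_add_left (hh i hi) _).trans htop⟩
  separated i hi j hj hij hC := by
    have hsep := P.separated (hf _ hi) (hf _ hj) (fun h => hij (hinj hi hj h)) hC
    have := hw i hi
    have := hw j hj
    have := hh i hi
    have := hh j hj
    simp only [Function.comp] at hsep ⊢
    split_ifs at hsep ⊢ <;> omega

/-- Vertical stretching of the containers and positions by the factor `g`, for rectangles that are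
not higher than the stretched ones. -/
noncomputable def scale (P : ContainerPacking s w h W H) {g : ℕ} (hg : 0 < g) {h' : ι → ℕ}
    (hh : ∀ i ∈ s, h' i ≤ h i * g) : ContainerPacking s w h' W (H * g) where
  containers := P.containers.image (Container.scale g)
  container i := (P.container i).scale g
  x := P.x
  y i := P.y i * g
  container_mem i hi := mem_image_of_mem _ (P.container_mem i hi)
  right_le := forall_mem_image.2 P.right_le
  top_le := forall_mem_image.2 fun C hC => by
    simpa only [Container.scale, add_mul] using Nat.mul_le_mul_right g (P.top_le C hC)
  disjoint := by
    rw [coe_image]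
    rintro _ ⟨C, hC, rfl⟩ _ ⟨D, hD, rfl⟩ hne
    exact (P.disjoint hC hD fun hCD => hne (hCD ▸ rfl)).scale
  holds i hi := by
    obtain ⟨hleft, hright, hbot, htop⟩ := P.holds i hi
    refine ⟨hleft, hright, Nat.mul_le_mul_right g hbot, ?_⟩
    have := hh i hi
    have := Nat.mul_le_mul_right g htop
    simp only [Container.scale, add_mul] at this ⊢
    omega
  separated i hi j hj hij hC := by
    have hsep := P.separated hi hj hij (Container.scale_injective hg hC)
    have hiy := Nat.mul_le_mul_right g (n := P.y i + h i) (m := P.y j)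
    have hjy := Nat.mul_le_mul_right g (n := P.y j + h j) (m := P.y i)
    have := hh i hi
    have := hh j hj
    simp only [add_mul] at hiy hjy
    change if (P.container i).vertical then _ else _
    split_ifs at hsep ⊢ <;> omega

/-- The translate by `(a, b)`. -/
noncomputable def shift (P : ContainerPacking s w h W H) (a b : ℕ) :
    ContainerPacking s w h (a + W) (b + H) where
  containers := P.containers.image (Container.shift a b)
  container i := (P.container i).shift a b
  x i := a + P.x i
  y i := b + P.y i
  container_mem i hi := mem_image_of_mem _ (P.container_mem i hi)
  right_le := forall_mem_image.2 fun C hC => by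
    have := P.right_le C hC
    simp only [Container.shift]
    omega
  top_le := forall_mem_image.2 fun C hC => by
    have := P.top_le C hC
    simp only [Container.shift]
    omega
  disjoint := by
    rw [coe_image]
    rintro _ ⟨C, hC, rfl⟩ _ ⟨D, hD, rfl⟩ hne
    exact (P.disjoint hC hD fun hCD => hne (hCD ▸ rfl)).shift a b
  holds i hi := by
    have := P.holds i hi
    simp only [Container.Holds, Container.shift] at this ⊢
    omega
  separated i hi j hj hij hC := by
    have := P.separated hi hj hij (Container.shift_injective a b hC)
    change if (P.container i).vertical then _ else _
    split_ifs at this ⊢ <;> omega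

/-- The packing into containers `box k`, `k ∈ S`, in which rectangle `i` lies in `box (c i)`. -/
noncomputable def ofBoxes (box : κ → Container) (c : ι → κ) (S : Finset κ) (hc : ∀ i ∈ s, c i ∈ S)
    (hw : ∀ i ∈ s, 0 < w i) (hh : ∀ i ∈ s, 0 < h i)
    (hright : ∀ k ∈ S, (box k).left + (box k).width ≤ W)
    (htop : ∀ k ∈ S, (box k).bottom + (box k).height ≤ H)
    (hd : (S : Set κ).Pairwise fun k l => (box k).Disjoint (box l)) (x y : ι → ℕ)
    (hbox : ∀ i ∈ s, (box (c i)).Holds (w i) (h i) (x i) (y i))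
    (hsep : (s : Set ι).Pairwise fun i j => c i = c j →
      if (box (c i)).vertical then x i + w i ≤ x j ∨ x j + w j ≤ x i
      else y i + h i ≤ y j ∨ y j + h j ≤ y i) :
    ContainerPacking s w h W H where
  containers := S.image box
  container i := box (c i)
  x := x
  y := y
  container_mem i hi := mem_image_of_mem _ (hc i hi)
  right_le := forall_mem_image.2 hright
  top_le := forall_mem_image.2 htop
  disjoint := by
    rw [coe_image]
    rintro _ ⟨k, hk, rfl⟩ _ ⟨l, hl, rfl⟩ hne
    exact hd hk hl fun hkl => hne (hkl ▸ rfl)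
  holds := hbox
  separated i hi j hj hij hC := by
    refine hsep hi hj hij ?_
    by_contra hcij
    exact (hd (hc i hi) (hc j hj) hcij).ne_of_holds (hbox i hi) (hw i hi) (hh i hi) hC

theorem exists_of_horizontal_boxes {box : κ → Container} {c : ι → κ} {S : Finset κ}
    (hc : ∀ i ∈ s, c i ∈ S) (hw : ∀ i ∈ s, 0 < w i) (hh : ∀ i ∈ s, 0 < h i)
    (hhor : ∀ k ∈ S, (box k).vertical = false)
    (hright : ∀ k ∈ S, (box k).left + (box k).width ≤ W)
    (htop : ∀ k ∈ S, (box k).bottom + (box k).height ≤ H)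
    (hd : (S : Set κ).Pairwise fun k l => (box k).Disjoint (box l))
    (hwidth : ∀ i ∈ s, w i ≤ (box (c i)).width)
    (hload : ∀ k ∈ S, ∑ i ∈ s with c i = k, h i ≤ (box k).height) :
    ∃ P : ContainerPacking s w h W H, P.containers = S.image box := by
  obtain ⟨p, hp, hle⟩ := exists_stacking s h c
  refine ⟨ofBoxes box c S hc hw hh hright htop hd (fun i => (box (c i)).left)
    (fun i => (box (c i)).bottom + p i) (fun i hi => ?_) fun i hi j hj hij hcij => ?_, rfl⟩
  · have := hwidth i hi
    have := (hle i hi).trans (hload _ (hc i hi))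
    unfold Container.Holds
    omega
  · have := hp hi hj hij hcij
    rw [hhor _ (hc i hi), if_neg Bool.false_ne_true, hcij]
    omega

theorem exists_of_vertical_boxes {box : κ → Container} {c : ι → κ} {S : Finset κ}
    (hc : ∀ i ∈ s, c i ∈ S) (hw : ∀ i ∈ s, 0 < w i) (hh : ∀ i ∈ s, 0 < h i)
    (hver : ∀ k ∈ S, (box k).vertical)
    (hright : ∀ k ∈ S, (box k).left + (box k).width ≤ W)
    (htop : ∀ k ∈ S, (box k).bottom + (box k).height ≤ H)
    (hd : (S : Set κ).Pairwise fun k l => (box k).Disjoint (box l))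
    (hheight : ∀ i ∈ s, h i ≤ (box (c i)).height)
    (hload : ∀ k ∈ S, ∑ i ∈ s with c i = k, w i ≤ (box k).width) :
    ∃ P : ContainerPacking s w h W H,
      P.containers = S.image box ∧ P.container = box ∘ c := by
  obtain ⟨p, hp, hle⟩ := exists_stacking s w c
  refine ⟨ofBoxes box c S hc hw hh hright htop hd (fun i => (box (c i)).left + p i)
    (fun i => (box (c i)).bottom) (fun i hi => ?_) (fun i hi j hj hij hcij => ?_), rfl, rfl⟩
  · have := hheight i hi
    have := (hle i hi).trans (hload _ (hc i hi))
    unfold Container.Holds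
    omega
  · have := hp hi hj hij hcij
    rw [hver _ (hc i hi), if_pos rfl, hcij]
    omega

/-- The union of packings `P k` of the classes of a partition of the rectangles. -/
noncomputable def glue [DecidableEq κ] (c : ι → κ) (S : Finset κ) (hc : ∀ i ∈ s, c i ∈ S)
    (hw : ∀ i ∈ s, 0 < w i) (hh : ∀ i ∈ s, 0 < h i)
    (P : ∀ k, ContainerPacking {i ∈ s | c i = k} w h W H)
    (hP : (S : Set κ).Pairwise fun k l =>
      ∀ C ∈ (P k).containers, ∀ D ∈ (P l).containers, C.Disjoint D) :
    ContainerPacking s w h W H where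
  containers := S.biUnion fun k => (P k).containers
  container i := (P (c i)).container i
  x i := (P (c i)).x i
  y i := (P (c i)).y i
  container_mem i hi := mem_biUnion.2
    ⟨c i, hc i hi, (P (c i)).container_mem i (mem_filter.2 ⟨hi, rfl⟩)⟩
  right_le C hC := by
    obtain ⟨k, -, hC⟩ := mem_biUnion.1 hC
    exact (P k).right_le C hC
  top_le C hC := by
    obtain ⟨k, -, hC⟩ := mem_biUnion.1 hC
    exact (P k).top_le C hC
  disjoint C hC D hD hne := by
    obtain ⟨k, hk, hC⟩ := mem_biUnion.1 hC
    obtain ⟨l, hl, hD⟩ := mem_biUnion.1 hD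
    by_cases hkl : k = l
    · subst hkl
      exact (P k).disjoint hC hD hne
    · exact hP hk hl hkl C hC D hD
  holds i hi := (P (c i)).holds i (mem_filter.2 ⟨hi, rfl⟩)
  separated i hi j hj hij hC := by
    have hi' : i ∈ ({i' ∈ s | c i' = c i} : Finset ι) := mem_filter.2 ⟨hi, rfl⟩
    have hj' : j ∈ ({i' ∈ s | c i' = c j} : Finset ι) := mem_filter.2 ⟨hj, rfl⟩
    by_cases hcij : c j = c i
    · rw [hcij] at hC hj' ⊢
      exact (P (c i)).separated hi' hj' hij hC
    · exact absurd hC <| (hP (hc i hi) (hc j hj) (Ne.symm hcij) _ ((P _).container_mem i hi') _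
        ((P _).container_mem j hj')).ne_of_holds ((P _).holds i hi') (hw i hi) (hh i hi)

/-- The packing without rectangles and containers. -/
def empty (hs : s = ∅) : ContainerPacking s w h W H where
  containers := ∅
  container _ := default
  x _ := 0
  y _ := 0
  container_mem := by simp [hs]
  right_le := by simp
  top_le := by simp
  disjoint := by simp
  holds := by simp [hs]
  separated := by simp [hs]

theorem exists_glue [DecidableEq κ] {c : ι → κ} {S : Finset κ} (hc : ∀ i ∈ s, c i ∈ S)
    (hw : ∀ i ∈ s, 0 < w i) (hh : ∀ i ∈ s, 0 < h i) {m : κ → ℕ} {Q : κ → Container → Prop}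
    (hQ : ∀ k ∈ S, ∀ l ∈ S, k ≠ l → ∀ C D, Q k C → Q l D → C.Disjoint D)
    (hP : ∀ k ∈ S, ∃ P : ContainerPacking {i ∈ s | c i = k} w h W H,
      #P.containers ≤ m k ∧ ∀ C ∈ P.containers, Q k C) :
    ∃ P : ContainerPacking s w h W H, #P.containers ≤ ∑ k ∈ S, m k := by
  have hP' : ∀ k, ∃ P : ContainerPacking {i ∈ s | c i = k} w h W H,
      k ∈ S → #P.containers ≤ m k ∧ ∀ C ∈ P.containers, Q k C := fun k => by
    by_cases hk : k ∈ S
    · exact (hP k hk).imp fun _ hP _ => hP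
    · exact ⟨empty (filter_eq_empty_iff.2 fun i hi hik => hk (hik ▸ hc i hi)), fun h => absurd h hk⟩
  choose P hP' using hP'
  refine ⟨glue c S hc hw hh P fun k hk l hl hkl C hC D hD =>
    hQ k hk l hl hkl C D ((hP' k hk).2 C hC) ((hP' l hl).2 D hD), ?_⟩
  exact card_biUnion_le.trans (sum_le_sum fun k hk => (hP' k hk).1)

end ContainerPacking

/-! ### Columns and slabs -/

section Sorting

variable {Λ : Type*} [LinearOrder Λ] {W : ℕ} {f g : ℕ → Λ} {b c : Λ} {j : ℕ}

/-- The permutation of the columns `0, …, W - 1` that sorts them by the key `f`: after sorting, the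
`j`-th column is `sortColumns W f j`. Columns from `W` on are left in place. -/
noncomputable def sortColumns (W : ℕ) (f : ℕ → Λ) (j : ℕ) : ℕ :=
  if h : j < W then Tuple.sort (fun k : Fin W => f k) ⟨j, h⟩ else j

/-- The number of columns below `W` whose key is less than `b`, which is the position at which the
keys from `b` on start after sorting. -/
def keyRank (W : ℕ) (f : ℕ → Λ) (b : Λ) : ℕ := #{z ∈ range W | f z < b}

theorem keyRank_le : keyRank W f b ≤ W :=
  (card_filter_le _ _).trans (card_range W).le

theorem keyRank_congr (h : ∀ z < W, (f z < b ↔ g z < b)) : keyRank W f b = keyRank W g b :=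
  congrArg card (filter_congr fun z hz => h z (mem_range.1 hz))

theorem keyRank_add_card (hbc : b ≤ c) :
    keyRank W f b + #{z ∈ range W | b ≤ f z ∧ f z < c} = keyRank W f c := by
  rw [keyRank, keyRank, ← card_filter_add_card_filter_not (s := {z ∈ range W | f z < c})
    (p := fun z => f z < b), filter_filter, filter_filter]
  congr 2 <;> refine filter_congr fun z _ => ?_
  · exact ⟨fun h => ⟨h.trans_le hbc, h⟩, And.right⟩
  · rw [not_lt, and_comm]

theorem lt_card_iff_mem_of_isLowerSet {T : Finset ℕ} (hT : IsLowerSet (T : Set ℕ)) :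
    j < #T ↔ j ∈ T := by
  refine ⟨fun h => ?_, fun h => ?_⟩
  · by_contra hj
    have hsub : T ⊆ range j := fun i hi => mem_range.2 <| by
      by_contra hij
      exact hj (hT (not_lt.1 hij) hi)
    exact absurd h (not_lt.2 ((card_le_card hsub).trans (card_range j).le))
  · have hsub : range (j + 1) ⊆ T := fun i hi => hT (Nat.lt_succ_iff.1 (mem_range.1 hi)) h
    simpa using card_le_card hsub

theorem lt_keyRank_iff (hj : j < W) : j < keyRank W f b ↔ f (sortColumns W f j) < b := by
  set F : Fin W → Λ := fun k => f k
  have hcard : keyRank W f b = #{k ∈ range W | f (sortColumns W f k) < b} := by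
    rw [keyRank, card_filter, card_filter, sum_range, sum_range,
      ← Equiv.sum_comp (Tuple.sort F) fun k : Fin W => if f k < b then 1 else 0]
    refine sum_congr rfl fun k _ => ?_
    rw [sortColumns, dif_pos k.is_lt]
  have hlow : IsLowerSet (({k ∈ range W | f (sortColumns W f k) < b} : Finset ℕ) : Set ℕ) := by
    intro k i hik hk
    obtain ⟨hkW, hkb⟩ := mem_filter.1 (mem_coe.1 hk)
    have hkW := mem_range.1 hkW
    refine mem_coe.2 (mem_filter.2 ⟨mem_range.2 (hik.trans_lt hkW), lt_of_le_of_lt ?_ hkb⟩)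
    rw [sortColumns, sortColumns, dif_pos hkW, dif_pos (hik.trans_lt hkW)]
    exact Tuple.monotone_sort F (Fin.mk_le_mk.2 hik)
  rw [hcard, lt_card_iff_mem_of_isLowerSet hlow, mem_filter, mem_range, and_iff_right hj]

theorem sortColumns_key_lt_iff (hf : ∀ y z, y ≤ z → f z < b → f y < b) (hj : j < W) :
    f (sortColumns W f j) < b ↔ f j < b := by
  have hlow : IsLowerSet (({z ∈ range W | f z < b} : Finset ℕ) : Set ℕ) := by
    intro z y hyz hz
    obtain ⟨hzW, hzb⟩ := mem_filter.1 (mem_coe.1 hz)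
    exact mem_coe.2 (mem_filter.2
      ⟨mem_range.2 (hyz.trans_lt (mem_range.1 hzW)), hf y z hyz hzb⟩)
  rw [← lt_keyRank_iff hj, keyRank, lt_card_iff_mem_of_isLowerSet hlow, mem_filter, mem_range,
    and_iff_right hj]

end Sorting

section Slabs

variable {B : Finset ℕ} {b y z : ℕ}

/-- The left end of the slab containing column `z` when the strip is sliced at the cuts `B`: the
largest cut that is at most `z` (and `0` if there is none). -/
noncomputable def slab (B : Finset ℕ) (z : ℕ) : ℕ := Nat.findGreatest (· ∈ B) z

/-- Some cut in `B` passes through the interior of the interval of length `l` starting at `a`. -/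
def Straddles (B : Finset ℕ) (a l : ℕ) : Prop := ∃ b ∈ B, a < b ∧ b < a + l

theorem slab_le : slab B z ≤ z := Nat.findGreatest_le z

theorem le_slab (hb : b ∈ B) (hbz : b ≤ z) : b ≤ slab B z := Nat.le_findGreatest hbz hb

theorem slab_mem (h₀ : 0 ∈ B) : slab B z ∈ B :=
  Nat.findGreatest_spec (P := (· ∈ B)) (Nat.zero_le z) h₀

theorem slab_lt_iff (hb : b ∈ B) : slab B z < b ↔ z < b :=
  ⟨fun h => not_le.1 fun hbz => (le_slab hb hbz).not_gt h, slab_le.trans_lt⟩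

theorem slab_mono (h₀ : 0 ∈ B) (h : y ≤ z) : slab B y ≤ slab B z :=
  le_slab (slab_mem h₀) (slab_le.trans h)

theorem slab_eq_slab (h₀ : 0 ∈ B) (h : ∀ b ∈ B, b ≤ y ↔ b ≤ z) : slab B y = slab B z :=
  le_antisymm (le_slab (slab_mem h₀) ((h _ (slab_mem h₀)).1 slab_le))
    (le_slab (slab_mem h₀) ((h _ (slab_mem h₀)).2 slab_le))

variable {ι : Type*} {s : Finset ι} {x w : ι → ℕ}

/-- The intervals that, among those not straddled by `B`, are leftmost in their slab. -/
noncomputable def slabLeaders (B : Finset ℕ) (s : Finset ι) (x w : ι → ℕ) : Finset ι :=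
  {i ∈ s | ¬ Straddles B (x i) (w i) ∧
    ∀ j ∈ s, ¬ Straddles B (x j) (w j) → slab B (x j) = slab B (x i) → x i ≤ x j}

theorem card_image_slabLeaders_le (h₀ : 0 ∈ B) : #((slabLeaders B s x w).image x) ≤ #B := by
  refine card_le_card_of_injOn (slab B) (fun b _ => slab_mem h₀) ?_
  simp only [coe_image]
  rintro _ ⟨i, hi, rfl⟩ _ ⟨j, hj, rfl⟩ hij
  obtain ⟨his, hni, hi⟩ := mem_filter.1 (mem_coe.1 hi)
  obtain ⟨hjs, hnj, hj⟩ := mem_filter.1 (mem_coe.1 hj)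
  exact le_antisymm (hi j hjs hnj hij.symm) (hj i his hni hij)

theorem exists_slabLeader_le {i : ι} (hi : i ∈ s) (hni : ¬ Straddles B (x i) (w i)) :
    ∃ k ∈ slabLeaders B s x w, slab B (x k) = slab B (x i) ∧ x k ≤ x i := by
  obtain ⟨k, hk, hmin⟩ := exists_min_image
    {j ∈ s | ¬ Straddles B (x j) (w j) ∧ slab B (x j) = slab B (x i)} x
    ⟨i, mem_filter.2 ⟨hi, hni, rfl⟩⟩
  obtain ⟨hks, hnk, hki⟩ := mem_filter.1 hk
  exact ⟨k, mem_filter.2 ⟨hks, hnk, fun j hj hnj hjk =>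
    hmin j (mem_filter.2 ⟨hj, hnj, hjk.trans hki⟩)⟩, hki, hmin i (mem_filter.2 ⟨hi, hni, rfl⟩)⟩

theorem exists_refined_cuts (h₀ : 0 ∈ B) (hw : ∀ i ∈ s, 0 < w i)
    (hd : ∀ i ∈ s, ∀ j ∈ s, i ≠ j → x i + w i ≤ x j ∨ x j + w j ≤ x i) :
    ∃ B', B ⊆ B' ∧ #B' ≤ 2 * #B ∧ ∀ i ∈ s, ¬ Straddles B' (x i) (w i) →
      ∃ k ∈ s, ¬ Straddles B' (x k) (w k) ∧ x k = slab B' (x i) := by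
  set first := slabLeaders B s x w
  have hunstraddled : ∀ i ∈ s, ¬ Straddles B (x i) (w i) →
      ¬ Straddles (B ∪ first.image x) (x i) (w i) := by
    rintro i hi hni ⟨b, hb, hib, hbi⟩
    rcases mem_union.1 hb with hb | hb
    · exact hni ⟨b, hb, hib, hbi⟩
    · obtain ⟨j, hj, rfl⟩ := mem_image.1 hb
      have hjs := (mem_filter.1 hj).1
      have := hd i hi j hjs (by rintro rfl; omega)
      have := hw j hjs
      omega
  refine ⟨B ∪ first.image x, subset_union_left, ?_, fun i hi hni => ?_⟩
  · have := card_union_le B (first.image x)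
    have : #(first.image x) ≤ #B := card_image_slabLeaders_le h₀
    omega
  obtain ⟨k, hk, hki, hkx⟩ :=
    exists_slabLeader_le hi fun ⟨b, hb, h⟩ => hni ⟨b, mem_union_left _ hb, h⟩
  obtain ⟨hks, hnk, -⟩ := mem_filter.1 hk
  refine ⟨k, hks, hunstraddled k hks hnk, le_antisymm
    (le_slab (mem_union_right _ (mem_image_of_mem x hk)) hkx) ?_⟩
  have hslab : slab (B ∪ first.image x) (x i) ≤ x i := slab_le
  rcases mem_union.1 (slab_mem (z := x i) (mem_union_left (first.image x) h₀)) with hb | hb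
  · exact ((le_slab hb hslab).trans_eq hki.symm).trans slab_le
  · obtain ⟨j, hj, hji⟩ := mem_image.1 hb
    rw [← hji] at hslab ⊢
    by_contra! hkj
    have h₁ : slab B (x k) ≤ slab B (x j) := slab_mono h₀ hkj.le
    have h₂ : slab B (x j) ≤ slab B (x i) := slab_mono h₀ hslab
    exact hkj.not_ge ((mem_filter.1 hj).2.2 k hks hnk (by omega))

end Slabs

section RowIntervals

/-- The rows `τ.1, …, τ.2 - 1` out of `n` rows are more than `n / 3` many. -/
def IsTall (n : ℕ) (τ : ℕ × ℕ) : Prop := τ.1 + n / 3 < τ.2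

/-- The row common to all tall row intervals of a track, where `false` stands for the low track and
`true` for the high one. -/
def trackRow (n : ℕ) : Bool → ℕ
  | false => n / 3
  | true => 2 * (n / 3) + 1

/-- The row interval is tall and contains the common row of the track `t`. -/
def OnTrack (n : ℕ) (t : Bool) (τ : ℕ × ℕ) : Prop :=
  IsTall n τ ∧ τ.1 ≤ trackRow n t ∧ trackRow n t < τ.2

/-- The row interval is on both tracks. -/
def Spanning (n : ℕ) (τ : ℕ × ℕ) : Prop := τ.1 ≤ n / 3 ∧ 2 * (n / 3) + 1 < τ.2

/-- The track along which an item with this row interval is moved: `true` if it starts above the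
row `n / 3`. -/
def track (n : ℕ) (τ : ℕ × ℕ) : Bool := decide (n / 3 < τ.1)

variable {n : ℕ} {τ : ℕ × ℕ}

theorem track_eq_false : track n τ = false ↔ τ.1 ≤ n / 3 := by simp [track]

theorem track_eq_true : track n τ = true ↔ n / 3 < τ.1 := by simp [track]

theorem Spanning.onTrack (h : Spanning n τ) (t : Bool) : OnTrack n t τ := by
  cases t <;> simp only [Spanning, OnTrack, IsTall, trackRow] at * <;> omega

theorem IsTall.onTrack (h : IsTall n τ) (hn : τ.2 ≤ n) : OnTrack n (track n τ) τ := by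
  rcases ht : track n τ with _ | _
  · rw [track_eq_false] at ht
    simp only [OnTrack, IsTall, trackRow] at *
    omega
  · rw [track_eq_true] at ht
    simp only [OnTrack, IsTall, trackRow] at *
    omega

end RowIntervals

/-! ### Rearranging the columns of a grid -/

/-- A packing of finitely many items into a grid of `rows × columns` cells, in which some items are
declared to be obstacles and the columns are cut into slabs. No slab is cut by an obstacle, and a
slab that contains spanning items which are neither obstacles nor straddle a cut starts with such an
item. -/
structure SlabbedGrid (ι : Type u) [Fintype ι] where
  rows : ℕ
  columns : ℕ
  w : ι → ℕ
  h : ι → ℕ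
  x : ι → ℕ
  y : ι → ℕ
  isPackingOn : IsPackingOn univ w h x y columns rows
  obstacles : Finset ι
  cuts : Finset ℕ
  zero_mem_cuts : 0 ∈ cuts
  left_mem_cuts : ∀ o ∈ obstacles, x o ∈ cuts
  right_mem_cuts : ∀ o ∈ obstacles, x o + w o ∈ cuts
  exists_leading : ∀ i, i ∉ obstacles → Spanning rows (y i, y i + h i) →
    ¬ Straddles cuts (x i) (w i) → ∃ k, k ∉ obstacles ∧ Spanning rows (y k, y k + h k) ∧
      ¬ Straddles cuts (x k) (w k) ∧ x k = slab cuts (x i)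

namespace SlabbedGrid

variable {ι : Type u} [Fintype ι] (G : SlabbedGrid ι) {i j : ι} {z z' : ℕ} {t t' : Bool}
  {τ τ' : ℕ × ℕ}

/-- The rows occupied by an item. -/
def type (i : ι) : ℕ × ℕ := (G.y i, G.y i + G.h i)

/-- The item `i` meets the column `z`. -/
def Covers (i : ι) (z : ℕ) : Prop := G.x i ≤ z ∧ z < G.x i + G.w i

/-- The state of a column: the types of the items that meet it. -/
noncomputable def state (z : ℕ) : Finset (ℕ × ℕ) :=
  ({i | G.Covers i z} : Finset ι).image G.type

/-- The item straddles a cut. -/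
def Crosses (i : ι) : Prop := Straddles G.cuts (G.x i) (G.w i)

/-- The tall items that straddle a cut are not moved by the rearrangement. -/
def Pinned (i : ι) : Prop := i ∉ G.obstacles ∧ IsTall G.rows (G.type i) ∧ G.Crosses i

/-- The class of a column with respect to a track. It is `0` where a pinned item enters the slab
from the left, `3` where one leaves it to the right, and otherwise `1` or `2` according to whether
the column meets a spanning item. -/
noncomputable def columnClass (t : Bool) (z : ℕ) : ℕ :=
  if ∃ i, G.Pinned i ∧ OnTrack G.rows t (G.type i) ∧ G.Covers i z ∧
    G.Covers i (slab G.cuts z) then 0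
  else if ∃ i, G.Pinned i ∧ OnTrack G.rows t (G.type i) ∧ G.Covers i z then 3
  else if ∃ τ ∈ G.state z, Spanning G.rows τ then 1 else 2

variable {G}

theorem mem_state : τ ∈ G.state z ↔ ∃ i, G.Covers i z ∧ G.type i = τ := by
  simp [state]

theorem type_mem_state (h : G.Covers i z) : G.type i ∈ G.state z := mem_state.2 ⟨i, h, rfl⟩

theorem bottom_lt_top (i : ι) : (G.type i).1 < (G.type i).2 :=
  Nat.lt_add_of_pos_right (G.isPackingOn.height_pos i (mem_univ i))

theorem top_le_rows (i : ι) : (G.type i).2 ≤ G.rows := G.isPackingOn.top_le i (mem_univ i)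

theorem Covers.lt_columns (h : G.Covers i z) : z < G.columns :=
  h.2.trans_le (G.isPackingOn.right_le i (mem_univ i))

theorem covers_left (i : ι) : G.Covers i (G.x i) :=
  ⟨le_rfl, Nat.lt_add_of_pos_right (G.isPackingOn.width_pos i (mem_univ i))⟩

theorem Covers.disjoint (hi : G.Covers i z) (hj : G.Covers j z) (hij : i ≠ j) :
    (G.type i).2 ≤ (G.type j).1 ∨ (G.type j).2 ≤ (G.type i).1 := by
  have hd := G.isPackingOn.disjoint (mem_coe.2 (mem_univ i)) (mem_coe.2 (mem_univ j)) hij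
  unfold RectDisjoint Covers at *
  simp only [type]
  omega

theorem Covers.eq_of_row {r : ℕ} (hi : G.Covers i z) (hj : G.Covers j z) (hi₁ : (G.type i).1 ≤ r)
    (hi₂ : r < (G.type i).2) (hj₁ : (G.type j).1 ≤ r) (hj₂ : r < (G.type j).2) : i = j := by
  by_contra hij
  have := hi.disjoint hj hij
  omega

theorem Covers.eq_of_type_eq (hi : G.Covers i z) (hj : G.Covers j z) (h : G.type i = G.type j) :
    i = j :=
  hi.eq_of_row hj le_rfl (bottom_lt_top i) h.ge.1 (h ▸ bottom_lt_top i)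

theorem Covers.eq_of_onTrack (hi : G.Covers i z) (hj : G.Covers j z)
    (hti : OnTrack G.rows t (G.type i)) (htj : OnTrack G.rows t (G.type j)) : i = j :=
  hi.eq_of_row hj hti.2.1 hti.2.2 htj.2.1 htj.2.2

theorem disjoint_of_mem_state (hτ : τ ∈ G.state z) (hτ' : τ' ∈ G.state z) (hne : τ ≠ τ') :
    τ.2 ≤ τ'.1 ∨ τ'.2 ≤ τ.1 := by
  obtain ⟨i, hi, rfl⟩ := mem_state.1 hτ
  obtain ⟨j, hj, rfl⟩ := mem_state.1 hτ'
  exact hi.disjoint hj (ne_of_apply_ne _ hne)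

theorem top_le_of_mem_state (hτ : τ ∈ G.state z) : τ.2 ≤ G.rows := by
  obtain ⟨i, -, rfl⟩ := mem_state.1 hτ
  exact top_le_rows i

theorem filter_onTrack_state (hi : G.Covers i z) (ht : OnTrack G.rows t (G.type i)) :
    {τ ∈ G.state z | OnTrack G.rows t τ} = {G.type i} := by
  ext τ
  simp only [mem_filter, mem_singleton]
  constructor
  · rintro ⟨hτ, hτt⟩
    obtain ⟨j, hj, rfl⟩ := mem_state.1 hτ
    rw [hi.eq_of_onTrack hj ht hτt]
  · rintro rfl
    exact ⟨type_mem_state hi, ht⟩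

theorem Covers.of_mem_obstacles (h : G.Covers i z) (hi : i ∈ G.obstacles)
    (hs : slab G.cuts z = slab G.cuts z') : G.Covers i z' := by
  have hl := le_slab (G.left_mem_cuts i hi) h.1
  have hr := (slab_lt_iff (G.right_mem_cuts i hi)).2 h.2
  rw [hs] at hl hr
  exact ⟨hl.trans slab_le, (slab_lt_iff (G.right_mem_cuts i hi)).1 hr⟩

theorem Covers.slab_eq (h : G.Covers i z) (hi : ¬ G.Crosses i) :
    slab G.cuts z = slab G.cuts (G.x i) :=
  slab_eq_slab G.zero_mem_cuts fun b hb =>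
    ⟨fun hbz => not_lt.1 fun hib => hi ⟨b, hb, hib, hbz.trans_lt h.2⟩, fun hbi => hbi.trans h.1⟩

theorem columnClass_le : G.columnClass t z ≤ 3 := by
  unfold columnClass
  split_ifs <;> omega

theorem columnClass_eq_zero_iff : G.columnClass t z = 0 ↔ ∃ i, G.Pinned i ∧
    OnTrack G.rows t (G.type i) ∧ G.Covers i z ∧ G.Covers i (slab G.cuts z) := by
  unfold columnClass
  split_ifs <;> simp_all

theorem exists_pinned_of_columnClass_eq_three (h : G.columnClass t z = 3) : ∃ i, G.Pinned i ∧
    OnTrack G.rows t (G.type i) ∧ G.Covers i z ∧ ¬ G.Covers i (slab G.cuts z) := by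
  unfold columnClass at h
  split_ifs at h with h₀ h₃ <;> try omega
  obtain ⟨i, hp, ht, hi⟩ := h₃
  exact ⟨i, hp, ht, hi, fun hs => h₀ ⟨i, hp, ht, hi, hs⟩⟩

theorem Pinned.columnClass_eq (hp : G.Pinned i) (ht : OnTrack G.rows t (G.type i))
    (hi : G.Covers i z) :
    G.columnClass t z = if G.Covers i (slab G.cuts z) then 0 else 3 := by
  split_ifs with hs
  · exact columnClass_eq_zero_iff.2 ⟨i, hp, ht, hi, hs⟩
  · have h₀ : ¬ ∃ k, G.Pinned k ∧ OnTrack G.rows t (G.type k) ∧ G.Covers k z ∧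
        G.Covers k (slab G.cuts z) := by
      rintro ⟨k, -, htk, hk, hks⟩
      exact hs (hi.eq_of_onTrack hk ht htk ▸ hks)
    rw [columnClass, if_neg h₀, if_pos ⟨i, hp, ht, hi⟩]

theorem columnClass_eq_of_not_pinned (hp : ¬ G.Pinned i) (ht : OnTrack G.rows t (G.type i))
    (hi : G.Covers i z) : G.columnClass t z = if Spanning G.rows (G.type i) then 1 else 2 := by
  have hnone : ¬ ∃ k, G.Pinned k ∧ OnTrack G.rows t (G.type k) ∧ G.Covers k z := by
    rintro ⟨k, hk, htk, hkz⟩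
    exact hp (hi.eq_of_onTrack hkz ht htk ▸ hk)
  rw [columnClass, if_neg fun ⟨k, hk, htk, hkz, _⟩ => hnone ⟨k, hk, htk, hkz⟩, if_neg hnone]
  refine if_congr ⟨?_, fun hs => ⟨_, type_mem_state hi, hs⟩⟩ rfl rfl
  rintro ⟨τ, hτ, hs⟩
  obtain ⟨k, hk, rfl⟩ := mem_state.1 hτ
  rwa [hi.eq_of_onTrack hk ht (hs.onTrack t)]

theorem columnClass_eq_one_iff :
    G.columnClass t z = 1 ↔ ∃ i, ¬ G.Pinned i ∧ Spanning G.rows (G.type i) ∧ G.Covers i z := by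
  constructor
  · intro h
    unfold columnClass at h
    split_ifs at h with h₀ h₃ h₁ <;> try omega
    obtain ⟨τ, hτ, hs⟩ := h₁
    obtain ⟨i, hi, rfl⟩ := mem_state.1 hτ
    exact ⟨i, fun hp => h₃ ⟨i, hp, hs.onTrack t, hi⟩, hs, hi⟩
  · rintro ⟨i, hp, hs, hi⟩
    rw [columnClass_eq_of_not_pinned hp (hs.onTrack t) hi, if_pos hs]

theorem columnClass_eq_one_congr (t t' : Bool) :
    G.columnClass t z = 1 ↔ G.columnClass t' z = 1 := by
  rw [columnClass_eq_one_iff, columnClass_eq_one_iff]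

theorem not_spanning_of_columnClass_eq_two (h : G.columnClass t z = 2) (hτ : τ ∈ G.state z) :
    ¬ Spanning G.rows τ := by
  unfold columnClass at h
  split_ifs at h with h₀ h₃ h₁ <;> try omega
  exact fun hs => h₁ ⟨τ, hτ, hs⟩

-- This is what the leading items of the slabs are for: such an item would meet the pinned item.
theorem columnClass_ne_zero_of_slab_eq (h : G.columnClass t z = 1)
    (hs : slab G.cuts z = slab G.cuts z') : G.columnClass t' z' ≠ 0 := by
  intro h'
  obtain ⟨k, hkp, hkt, hkz, hks⟩ := columnClass_eq_zero_iff.1 h'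
  obtain ⟨i, hip, hi, hiz⟩ := columnClass_eq_one_iff.1 h
  by_cases hO : i ∈ G.obstacles
  · exact hip ((hiz.of_mem_obstacles hO hs).eq_of_onTrack hkz (hi.onTrack t') hkt ▸ hkp)
  have hic : ¬ G.Crosses i := fun hc => hip ⟨hO, (hi.onTrack t).1, hc⟩
  obtain ⟨j, -, hj, hjc, hjx⟩ := G.exists_leading i hO hi hic
  rw [← hs, hiz.slab_eq hic, ← hjx] at hks
  have hjk := (covers_left j).eq_of_onTrack hks (Spanning.onTrack (τ := G.type j) hj t') hkt
  exact hjc (hjk ▸ hkp).2.2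

theorem columnClass_eq_zero_mono (hz : z ≤ z') (hs : slab G.cuts z = slab G.cuts z')
    (h : G.columnClass t z' = 0) : G.columnClass t z = 0 := by
  obtain ⟨i, hp, ht, hi, his⟩ := columnClass_eq_zero_iff.1 h
  rw [← hs] at his
  exact columnClass_eq_zero_iff.2 ⟨i, hp, ht, ⟨his.1.trans slab_le, hz.trans_lt hi.2⟩, his⟩

theorem Covers.mono_of_crosses (hi : G.Covers i z) (hc : G.Crosses i)
    (his : ¬ G.Covers i (slab G.cuts z)) (hz : z ≤ z') (hs : slab G.cuts z = slab G.cuts z') :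
    G.Covers i z' := by
  obtain ⟨b, hb, hib, hbi⟩ := hc
  refine ⟨hi.1.trans hz, lt_trans ?_ hbi⟩
  have hsi : slab G.cuts z < G.x i :=
    not_le.1 fun h => his ⟨h, (slab_le (B := G.cuts)).trans_lt hi.2⟩
  rw [← slab_lt_iff hb, ← hs]
  exact hsi.trans hib

theorem columnClass_eq_three_mono (hz : z ≤ z') (hs : slab G.cuts z = slab G.cuts z')
    (h : G.columnClass t z = 3) : G.columnClass t z' = 3 := by
  obtain ⟨i, hp, ht, hi, his⟩ := exists_pinned_of_columnClass_eq_three h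
  rw [hp.columnClass_eq ht (hi.mono_of_crosses hp.2.2 his hz hs), if_neg (hs ▸ his)]

theorem card_covers_le (z : ℕ) : #{i | G.Covers i z} ≤ G.rows := by
  rw [← card_range G.rows]
  refine card_le_card_of_injOn G.y
    (fun i _ => mem_coe.2 (mem_range.2 ((bottom_lt_top i).trans_le (top_le_rows i)))) ?_
  intro i hi j hj hij
  have hi' := (mem_filter.1 (mem_coe.1 hi)).2
  have hj' := (mem_filter.1 (mem_coe.1 hj)).2
  exact hi'.eq_of_row hj' le_rfl (bottom_lt_top i) hij.ge (hij.trans_lt (bottom_lt_top j))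

/-- All pairs that can be the row interval of an item. -/
def types (G : SlabbedGrid ι) : Finset (ℕ × ℕ) := range G.rows ×ˢ range (G.rows + 1)

theorem type_mem_types (i : ι) : G.type i ∈ G.types :=
  mem_product.2 ⟨mem_range.2 ((bottom_lt_top i).trans_le (top_le_rows i)),
    mem_range.2 (Nat.lt_succ_of_le (top_le_rows i))⟩

theorem card_types : #G.types = G.rows * (G.rows + 1) := by
  rw [types, card_product, card_range, card_range]

theorem state_subset_types (z : ℕ) : G.state z ⊆ G.types := fun τ hτ => by
  obtain ⟨i, -, rfl⟩ := mem_state.1 hτ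
  exact type_mem_types i

end SlabbedGrid

/-- The keys by which columns are sorted. The components stand for the slab, the column class, the
tall items on the track and the state. -/
abbrev Key : Type := ℕ ×ₗ ℕ ×ₗ ℕ ×ₗ ℕ

namespace Key

/-- The key with the given components. -/
def mk (l c k m : ℕ) : Key := toLex (l, toLex (c, toLex (k, m)))

/-- The least key greater than `a`. -/
def next (a : Key) : Key :=
  mk (ofLex a).1 (ofLex (ofLex a).2).1 (ofLex (ofLex (ofLex a).2).2).1
    ((ofLex (ofLex (ofLex a).2).2).2 + 1)

variable {l c k m l' c' k' m' : ℕ}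

theorem mk_lt_mk : mk l c k m < mk l' c' k' m' ↔
    l < l' ∨ l = l' ∧ (c < c' ∨ c = c' ∧ (k < k' ∨ k = k' ∧ m < m')) := by
  simp [mk, Prod.Lex.toLex_lt_toLex]

theorem mk_inj : mk l c k m = mk l' c' k' m' ↔ l = l' ∧ c = c' ∧ k = k' ∧ m = m' := by
  simp [mk]

theorem mk_le_mk : mk l c k m ≤ mk l' c' k' m' ↔
    l < l' ∨ l = l' ∧ (c < c' ∨ c = c' ∧ (k < k' ∨ k = k' ∧ m ≤ m')) := by
  rw [le_iff_lt_or_eq, mk_lt_mk, mk_inj]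
  omega

theorem lt_next_iff {a b : Key} : a < b.next ↔ a ≤ b := by
  change mk (ofLex a).1 (ofLex (ofLex a).2).1 (ofLex (ofLex (ofLex a).2).2).1
    (ofLex (ofLex (ofLex a).2).2).2 < b.next ↔ mk (ofLex a).1 (ofLex (ofLex a).2).1
    (ofLex (ofLex (ofLex a).2).2).1 (ofLex (ofLex (ofLex a).2).2).2 ≤ mk (ofLex b).1
    (ofLex (ofLex b).2).1 (ofLex (ofLex (ofLex b).2).2).1 (ofLex (ofLex (ofLex b).2).2).2
  rw [next, mk_lt_mk, mk_le_mk, Nat.lt_succ_iff]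

theorem le_next (a : Key) : a ≤ a.next := (lt_next_iff.2 le_rfl).le

end Key

/-- An injective numbering of the sets of row intervals in which `S₀` comes first. -/
def stateRank (S₀ S : Finset (ℕ × ℕ)) : ℕ := if S = S₀ then 0 else Encodable.encode S + 1

theorem stateRank_eq_zero_iff {S₀ S : Finset (ℕ × ℕ)} : stateRank S₀ S = 0 ↔ S = S₀ := by
  simp [stateRank]

theorem stateRank_injective (S₀ : Finset (ℕ × ℕ)) : Function.Injective (stateRank S₀) := by
  intro S T h
  unfold stateRank at h
  split_ifs at h with hS hT
  · exact hS.trans hT.symm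
  · exact Encodable.encode_injective (Nat.succ_injective h)

namespace SlabbedGrid

variable {ι : Type u} [Fintype ι] (G : SlabbedGrid ι) {i : ι} {z j l k : ℕ} {t t' : Bool}
  {τ : ℕ × ℕ}

/-- The columns of the slab starting at `l` that meet no pinned item. -/
noncomputable def cleanColumns (l : ℕ) : Finset ℕ :=
  {z ∈ range G.columns | slab G.cuts z = l ∧ ∀ t, G.columnClass t z = 1 ∨ G.columnClass t z = 2}

/-- A bound for the number of states. -/
def stateBound : ℕ := 2 ^ (G.rows * (G.rows + 1))

variable {G}

theorem card_image_state_le (s : Finset ℕ) : #(s.image G.state) ≤ G.stateBound := by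
  have hsub : s.image G.state ⊆ G.types.powerset := fun S hS => by
    obtain ⟨z, -, rfl⟩ := mem_image.1 hS
    exact mem_powerset.2 (state_subset_types z)
  exact (card_le_card hsub).trans_eq (by rw [card_powerset, card_types, stateBound])

theorem exists_popularState (G : SlabbedGrid ι) (l : ℕ) : ∃ S, (S = ∅ ∨ ∃ z, G.state z = S) ∧
    #(G.cleanColumns l) ≤ G.stateBound * #{z ∈ G.cleanColumns l | G.state z = S} := by
  rcases (G.cleanColumns l).eq_empty_or_nonempty with hempty | hne
  · exact ⟨∅, Or.inl rfl, by simp [hempty]⟩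
  obtain ⟨S, hS, hmax⟩ := exists_max_image _
    (fun S => #{z ∈ G.cleanColumns l | G.state z = S}) (hne.image G.state)
  obtain ⟨z, -, hz⟩ := mem_image.1 hS
  refine ⟨S, Or.inr ⟨z, hz⟩, ?_⟩
  calc #(G.cleanColumns l)
      = ∑ T ∈ (G.cleanColumns l).image G.state, #{z ∈ G.cleanColumns l | G.state z = T} :=
        card_eq_sum_card_image _ _
    _ ≤ #((G.cleanColumns l).image G.state) * #{z ∈ G.cleanColumns l | G.state z = S} :=
        sum_le_card_nsmul _ _ _ hmax
    _ ≤ _ := Nat.mul_le_mul_right _ (card_image_state_le _)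

variable (G) in
/-- A state shared by the most clean columns of the slab starting at `l`. The gap of the slab will
be opened in the columns with this state. -/
noncomputable def popularState (l : ℕ) : Finset (ℕ × ℕ) := (G.exists_popularState l).choose

theorem card_cleanColumns_le (l : ℕ) : #(G.cleanColumns l) ≤
    G.stateBound * #{z ∈ G.cleanColumns l | G.state z = G.popularState l} :=
  (G.exists_popularState l).choose_spec.2

variable (G) in
/-- The numbering of the sets of tall row intervals on the track `t` for the slab starting at
`l`. -/
noncomputable def trackRank (t : Bool) (l : ℕ) (S : Finset (ℕ × ℕ)) : ℕ :=
  stateRank {τ ∈ G.popularState l | OnTrack G.rows t τ} S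

theorem filter_onTrack_popularState (ht : OnTrack G.rows t τ) :
    {τ} = {σ ∈ G.popularState l | OnTrack G.rows t σ} ↔ τ ∈ G.popularState l := by
  refine ⟨fun h => (mem_filter.1 (h ▸ mem_singleton_self τ)).1, fun h => ?_⟩
  rcases (G.exists_popularState l).choose_spec.1 with hS | ⟨z, hz⟩
  · exact absurd (hS ▸ h : τ ∈ ∅) (notMem_empty τ)
  · change G.state z = G.popularState l at hz
    rw [← hz] at h ⊢
    obtain ⟨i, hi, rfl⟩ := mem_state.1 h
    exact (filter_onTrack_state hi ht).symm

theorem trackRank_singleton_congr (ht : OnTrack G.rows t τ) (ht' : OnTrack G.rows t' τ) :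
    G.trackRank t l {τ} = G.trackRank t' l {τ} := by
  simp only [trackRank, stateRank, filter_onTrack_popularState ht, filter_onTrack_popularState ht']

variable (G) in
/-- The key of a column with the given slab, class and state. -/
noncomputable def stateKey (t : Bool) (l c : ℕ) (S : Finset (ℕ × ℕ)) : Key :=
  Key.mk l c (G.trackRank t l {τ ∈ S | OnTrack G.rows t τ}) (stateRank (G.popularState l) S)

theorem stateKey_inj {l l' c c' : ℕ} {S S' : Finset (ℕ × ℕ)} :
    G.stateKey t l c S = G.stateKey t l' c' S' ↔ l = l' ∧ c = c' ∧ S = S' := by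
  refine ⟨fun h => ?_, by rintro ⟨rfl, rfl, rfl⟩; rfl⟩
  obtain ⟨rfl, rfl, -, hS⟩ := Key.mk_inj.1 h
  exact ⟨rfl, rfl, stateRank_injective _ hS⟩

variable (G) in
/-- The key of a column for the rearrangement along the track `t`. -/
noncomputable def key (t : Bool) (z : ℕ) : Key :=
  G.stateKey t (slab G.cuts z) (G.columnClass t z) (G.state z)

variable (G) in
/-- The column that the rearrangement along the track `t` moves to the position `j`. -/
noncomputable def source (t : Bool) (j : ℕ) : ℕ := sortColumns G.columns (G.key t) j

theorem slab_source (hj : j < G.columns) : slab G.cuts (G.source t j) = slab G.cuts j := by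
  have hkey : ∀ b ∈ G.cuts, ∀ z, G.key t z < Key.mk b 0 0 0 ↔ z < b := fun b hb z => by
    rw [← slab_lt_iff hb, key, stateKey, Key.mk_lt_mk]
    omega
  refine slab_eq_slab G.zero_mem_cuts fun b hb => not_iff_not.1 ?_
  rw [not_le, not_le, ← hkey b hb, ← hkey b hb]
  exact sortColumns_key_lt_iff
    (fun y z hyz hz => (hkey b hb y).2 (hyz.trans_lt ((hkey b hb z).1 hz))) hj

theorem columnClass_source_eq_zero_iff (hj : j < G.columns) :
    G.columnClass t (G.source t j) = 0 ↔ G.columnClass t j = 0 := by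
  have h := sortColumns_key_lt_iff (f := G.key t) (b := Key.mk (slab G.cuts j) 1 0 0)
    (fun y z hyz hz => by
      simp only [key, stateKey, Key.mk_lt_mk] at hz ⊢
      have hs := slab_mono G.zero_mem_cuts hyz
      have hc := columnClass_eq_zero_mono (G := G) (t := t) hyz
      omega) hj
  simp only [key, stateKey, Key.mk_lt_mk, true_and] at h
  have hs := slab_source (t := t) hj
  rw [source] at hs ⊢
  omega

theorem columnClass_source_eq_three_iff (hj : j < G.columns) :
    G.columnClass t (G.source t j) = 3 ↔ G.columnClass t j = 3 := by
  have hle : ∀ z, G.columnClass t z ≤ 3 := fun z => columnClass_le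
  have h := sortColumns_key_lt_iff (f := G.key t) (b := Key.mk (slab G.cuts j) 3 0 0)
    (fun y z hyz hz => by
      simp only [key, stateKey, Key.mk_lt_mk] at hz ⊢
      have hs := slab_mono G.zero_mem_cuts hyz
      have hc := columnClass_eq_three_mono (G := G) (t := t) hyz
      have := hle y
      have := hle z
      omega) hj
  simp only [key, stateKey, Key.mk_lt_mk, true_and] at h
  have hs := slab_source (t := t) hj
  have := hle j
  have := hle (G.source t j)
  rw [source] at *
  omega

theorem Covers.source_of_mem_obstacles (h : G.Covers i j) (hi : i ∈ G.obstacles) :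
    G.Covers i (G.source t j) :=
  h.of_mem_obstacles hi (slab_source h.lt_columns).symm

theorem Pinned.covers_source (hp : G.Pinned i) (ht : OnTrack G.rows t (G.type i))
    (hi : G.Covers i j) : G.Covers i (G.source t j) := by
  have hj := hi.lt_columns
  have hs := slab_source (t := t) hj
  have hclass := hp.columnClass_eq ht hi
  by_cases his : G.Covers i (slab G.cuts j)
  · rw [if_pos his, ← columnClass_source_eq_zero_iff hj] at hclass
    obtain ⟨k, -, htk, hk, hks⟩ := columnClass_eq_zero_iff.1 hclass
    rwa [his.eq_of_onTrack (hs ▸ hks) ht htk]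
  · rw [if_neg his, ← columnClass_source_eq_three_iff hj] at hclass
    obtain ⟨k, hkp, htk, hk, hks⟩ := exists_pinned_of_columnClass_eq_three hclass
    rcases le_total j (G.source t j) with hle | hle
    · exact hi.mono_of_crosses hp.2.2 his hle hs.symm
    · rwa [hi.eq_of_onTrack (hk.mono_of_crosses hkp.2.2 hks hle hs) ht htk]

-- Without columns of class `0` in the slab, both tracks list the spanning items in the same order.
theorem keyRank_congr_of_spanning (hi : G.Covers i z) (hp : ¬ G.Pinned i)
    (hs : Spanning G.rows (G.type i)) (t t' : Bool) (k : ℕ) :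
    keyRank G.columns (G.key t) (Key.mk (slab G.cuts z) 1 k 0) =
      keyRank G.columns (G.key t') (Key.mk (slab G.cuts z) 1 k 0) := by
  refine keyRank_congr fun z' _ => ?_
  simp only [key, stateKey, Key.mk_lt_mk]
  by_cases hz' : slab G.cuts z = slab G.cuts z'
  · have hone : ∀ t, G.columnClass t z = 1 := fun t => columnClass_eq_one_iff.2 ⟨i, hp, hs, hi⟩
    have hzero : ∀ t, G.columnClass t z' ≠ 0 := fun t =>
      columnClass_ne_zero_of_slab_eq (hone t) hz'
    have hcongr := columnClass_eq_one_congr (G := G) (z := z') t t'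
    have hrank : G.columnClass t z' = 1 →
        G.trackRank t (slab G.cuts z') {τ ∈ G.state z' | OnTrack G.rows t τ} =
          G.trackRank t' (slab G.cuts z') {τ ∈ G.state z' | OnTrack G.rows t' τ} := fun hc => by
      obtain ⟨m, -, hms, hm⟩ := columnClass_eq_one_iff.1 hc
      rw [filter_onTrack_state hm (hms.onTrack t), filter_onTrack_state hm (hms.onTrack t')]
      exact trackRank_singleton_congr (hms.onTrack t) (hms.onTrack t')
    have := hzero t
    have := hzero t'
    omega
  · omega

end SlabbedGrid

/-- The containers into which the items of a slabbed grid are packed: one for a single item, one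
for the tall items of the type `τ` in the slab starting at `l`, one for the short items of the type
`τ` that are moved to the columns with the key `a`, and the gap in the slab starting at `l`. -/
inductive Label (ι : Type u) : Type u
  | item (i : ι)
  | tall (l : ℕ) (τ : ℕ × ℕ)
  | cell (a : Key) (τ : ℕ × ℕ)
  | gap (l : ℕ)

/-- The new lowest row of a row interval: the intervals of the high track are moved up by
`n / 3`. -/
def liftedBottom (n : ℕ) (τ : ℕ × ℕ) : ℕ := if track n τ then τ.1 + n / 3 else τ.1

/-- The container reaches over the column `j`. -/
def Container.MeetsColumn (B : Container) (j : ℕ) : Prop := B.left ≤ j ∧ j < B.left + B.width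

namespace SlabbedGrid

variable {ι : Type u} [Fintype ι] (G : SlabbedGrid ι) {i i' : ι} {z z' j l l' k : ℕ} {t t' : Bool}
  {τ : ℕ × ℕ} {a b : Key}

/-- The number of columns whose key is less than `a`. -/
noncomputable def rank (t : Bool) (a : Key) : ℕ := keyRank G.columns (G.key t) a

/-- The keys of the columns without pinned items whose item on the track of `τ` has the type `τ`
are those from `tallKey l τ` on up to the least key with a greater third component. -/
noncomputable def tallKey (t : Bool) (l : ℕ) (τ : ℕ × ℕ) (k : ℕ) : Key :=
  Key.mk l (if Spanning G.rows τ then 1 else 2) (G.trackRank t l {τ} + k) 0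

/-- The key of the columns in the slab starting at `l` in which the gap is opened. -/
noncomputable def gapKey (l : ℕ) : Key :=
  Key.mk l (if ∃ τ ∈ G.popularState l, Spanning G.rows τ then 1 else 2) 0 0

/-- The lowest row of the gap. -/
noncomputable def gapBottom (l : ℕ) : ℕ :=
  ({τ ∈ G.popularState l | track G.rows τ = false} : Finset (ℕ × ℕ)).sup Prod.snd

/-- The container for items of the type `τ` in the columns that the rearrangement along the track of
`τ` gives to the keys from `a` on and before `b`. -/
noncomputable def keyBox (τ : ℕ × ℕ) (a b : Key) : Container where
  left := G.rank (track G.rows τ) a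
  bottom := liftedBottom G.rows τ
  width := G.rank (track G.rows τ) b - G.rank (track G.rows τ) a
  height := τ.2 - τ.1
  vertical := true

/-- The container with the given label. -/
noncomputable def box : Label ι → Container
  | .item i => ⟨G.x i, liftedBottom G.rows (G.type i), G.w i, G.h i, true⟩
  | .tall l τ => G.keyBox τ (G.tallKey (track G.rows τ) l τ 0) (G.tallKey (track G.rows τ) l τ 1)
  | .cell a τ => G.keyBox τ a a.next
  | .gap l =>
    { left := max (G.rank false (G.gapKey l)) (G.rank true (G.gapKey l))
      bottom := G.gapBottom l
      width := min (G.rank false (G.gapKey l).next) (G.rank true (G.gapKey l).next) -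
        max (G.rank false (G.gapKey l)) (G.rank true (G.gapKey l))
      height := G.rows / 3
      vertical := true }

/-- The label of the container that receives the part of the item `i` in the column `z`. -/
noncomputable def labelOf (i : ι) (z : ℕ) : Label ι :=
  if i ∈ G.obstacles ∨ G.Pinned i then .item i
  else if IsTall G.rows (G.type i) then .tall (slab G.cuts z) (G.type i)
  else .cell (G.key (track G.rows (G.type i)) z) (G.type i)

variable {G}

theorem box_labelOf_bottom : (G.box (G.labelOf i z)).bottom = liftedBottom G.rows (G.type i) := by
  unfold labelOf
  split_ifs <;> rfl

theorem box_labelOf_height : (G.box (G.labelOf i z)).height = G.h i := by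
  unfold labelOf
  split_ifs <;> simp [box, keyBox, type]

theorem box_vertical (k : Label ι) : (G.box k).vertical := by
  cases k <;> rfl

theorem key_source_mem (hl : G.rank t a ≤ j) (hr : j < G.rank t a + (G.rank t b - G.rank t a)) :
    a ≤ G.key t (G.source t j) ∧ G.key t (G.source t j) < b := by
  have hjb : j < G.rank t b := by omega
  have hj : j < G.columns := hjb.trans_le keyRank_le
  exact ⟨not_lt.1 fun h => hl.not_gt ((lt_keyRank_iff hj).2 h), (lt_keyRank_iff hj).1 hjb⟩

theorem of_tallKey_le (ha : G.tallKey t l τ 0 ≤ G.key t z) (hb : G.key t z < G.tallKey t l τ 1) :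
    slab G.cuts z = l ∧ G.columnClass t z = (if Spanning G.rows τ then 1 else 2) ∧
      τ ∈ G.state z := by
  simp only [tallKey, key, stateKey, Key.mk_le_mk, Key.mk_lt_mk] at ha hb
  obtain ⟨hl, hc, hk⟩ : slab G.cuts z = l ∧
      G.columnClass t z = (if Spanning G.rows τ then 1 else 2) ∧
      G.trackRank t (slab G.cuts z) {σ ∈ G.state z | OnTrack G.rows t σ} = G.trackRank t l {τ} := by
    omega
  rw [hl] at hk
  have hτ : τ ∈ ({σ ∈ G.state z | OnTrack G.rows t σ} : Finset (ℕ × ℕ)) := by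
    rw [stateRank_injective _ hk]
    exact mem_singleton_self τ
  exact ⟨hl, hc, (mem_filter.1 hτ).1⟩

theorem notMem_obstacles_of_type_eq (hi : G.Covers i z) (hO : i ∉ G.obstacles)
    (hi' : G.Covers i' z') (hs : slab G.cuts z' = slab G.cuts z) (h : G.type i' = G.type i) :
    i' ∉ G.obstacles := fun hO' =>
  hO ((hi'.of_mem_obstacles hO' hs).eq_of_type_eq hi h ▸ hO')

theorem labelOf_item (h : i ∈ G.obstacles ∨ G.Pinned i) : G.labelOf i z = .item i := if_pos h

theorem labelOf_tall (h : ¬ (i ∈ G.obstacles ∨ G.Pinned i)) (ht : IsTall G.rows (G.type i)) :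
    G.labelOf i z = .tall (slab G.cuts z) (G.type i) := by
  rw [labelOf, if_neg h, if_pos ht]

theorem labelOf_cell (h : i ∉ G.obstacles) (ht : ¬ IsTall G.rows (G.type i)) :
    G.labelOf i z = .cell (G.key (track G.rows (G.type i)) z) (G.type i) := by
  rw [labelOf, if_neg (not_or.2 ⟨h, fun hp => ht hp.2.1⟩), if_neg ht]

theorem rank_tallKey_congr (hi : G.Covers i z) (hp : ¬ G.Pinned i)
    (ht : t = track G.rows (G.type i) ∨ Spanning G.rows (G.type i)) (k : ℕ) :
    G.rank (track G.rows (G.type i))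
        (G.tallKey (track G.rows (G.type i)) (slab G.cuts z) (G.type i) k) =
      G.rank t (G.tallKey t (slab G.cuts z) (G.type i) k) := by
  rcases ht with rfl | hs
  · rfl
  · simp only [tallKey, if_pos hs, rank]
    rw [trackRank_singleton_congr (hs.onTrack _) (hs.onTrack t)]
    exact keyRank_congr_of_spanning hi hp hs _ _ _

theorem exists_covers_source_of_tall (hi : G.Covers i z) (hl : ¬ (i ∈ G.obstacles ∨ G.Pinned i))
    (htall : IsTall G.rows (G.type i)) (hj : (G.box (G.labelOf i z)).MeetsColumn j)
    (ht : t = track G.rows (G.type i) ∨ Spanning G.rows (G.type i)) :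
    ∃ m, G.Covers m (G.source t j) ∧ G.type m = G.type i ∧
      G.labelOf m (G.source t j) = G.labelOf i z := by
  obtain ⟨hO, hp⟩ := not_or.1 hl
  rw [labelOf_tall hl htall] at hj ⊢
  simp only [box, keyBox, Container.MeetsColumn] at hj
  rw [rank_tallKey_congr hi hp ht, rank_tallKey_congr hi hp ht] at hj
  obtain ⟨ha, hb⟩ := key_source_mem hj.1 hj.2
  obtain ⟨hs, hc, hτ⟩ := of_tallKey_le ha hb
  obtain ⟨m, hm, hmi⟩ := mem_state.1 hτ
  have hton : OnTrack G.rows t (G.type i) := by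
    rcases ht with rfl | hs
    exacts [htall.onTrack (top_le_rows i), hs.onTrack t]
  have hmp : ¬ G.Pinned m := fun hmp => by
    have := hmp.columnClass_eq (hmi ▸ hton) hm
    split_ifs at * <;> omega
  have hmO := notMem_obstacles_of_type_eq hi hO hm hs hmi
  exact ⟨m, hm, hmi, by rw [labelOf_tall (not_or.2 ⟨hmO, hmp⟩) (hmi ▸ htall), hs, hmi]⟩

theorem exists_covers_source_of_short (hi : G.Covers i z) (hO : i ∉ G.obstacles)
    (hshort : ¬ IsTall G.rows (G.type i)) (hj : (G.box (G.labelOf i z)).MeetsColumn j)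
    (ht : t = track G.rows (G.type i)) :
    ∃ m, G.Covers m (G.source t j) ∧ G.type m = G.type i ∧
      G.labelOf m (G.source t j) = G.labelOf i z := by
  rw [labelOf_cell hO hshort] at hj ⊢
  simp only [box, keyBox, Container.MeetsColumn, ← ht] at hj
  obtain ⟨ha, hb⟩ := key_source_mem hj.1 hj.2
  have hkey : G.key t (G.source t j) = G.key t z :=
    le_antisymm (Key.lt_next_iff.1 hb) ha
  obtain ⟨hs, -, hstate⟩ := stateKey_inj.1 hkey
  obtain ⟨m, hm, hmi⟩ := mem_state.1 (hstate ▸ type_mem_state hi)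
  have hmO := notMem_obstacles_of_type_eq hi hO hm hs hmi
  exact ⟨m, hm, hmi, by rw [labelOf_cell hmO (hmi ▸ hshort), hmi, ← ht, hkey]⟩

theorem exists_covers_source (hi : G.Covers i z) (hj : (G.box (G.labelOf i z)).MeetsColumn j)
    (ht : t = track G.rows (G.type i) ∨ Spanning G.rows (G.type i)) :
    ∃ m, G.Covers m (G.source t j) ∧ G.type m = G.type i ∧
      G.labelOf m (G.source t j) = G.labelOf i z := by
  by_cases hl : i ∈ G.obstacles ∨ G.Pinned i
  · rw [labelOf_item hl] at hj ⊢
    have hij : G.Covers i j := hj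
    refine ⟨i, ?_, rfl, labelOf_item hl⟩
    rcases hl with hO | hp
    · exact hij.source_of_mem_obstacles hO
    · refine hp.covers_source ?_ hij
      rcases ht with rfl | hs
      exacts [hp.2.1.onTrack (top_le_rows i), hs.onTrack t]
  by_cases htall : IsTall G.rows (G.type i)
  · exact exists_covers_source_of_tall hi hl htall hj ht
  · exact exists_covers_source_of_short hi (not_or.1 hl).1 htall hj
      (ht.resolve_right fun hs => htall (hs.onTrack t).1)

theorem disjoint_of_labelOf_ne (hi : G.Covers i z) (hi' : G.Covers i' z')
    (hj : (G.box (G.labelOf i z)).MeetsColumn j) (hj' : (G.box (G.labelOf i' z')).MeetsColumn j)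
    (hne : G.labelOf i z ≠ G.labelOf i' z')
    (ht : t = track G.rows (G.type i) ∨ Spanning G.rows (G.type i))
    (ht' : t = track G.rows (G.type i') ∨ Spanning G.rows (G.type i')) :
    (G.type i).2 ≤ (G.type i').1 ∨ (G.type i').2 ≤ (G.type i).1 := by
  obtain ⟨m, hm, hmi, hml⟩ := exists_covers_source hi hj ht
  obtain ⟨m', hm', hmi', hml'⟩ := exists_covers_source hi' hj' ht'
  rw [← hmi, ← hmi']
  exact hm.disjoint hm' fun h => hne (by rw [← hml, ← hml', h])

theorem lifted_disjoint_of_labelOf_ne (hi : G.Covers i z) (hi' : G.Covers i' z')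
    (hj : (G.box (G.labelOf i z)).MeetsColumn j) (hj' : (G.box (G.labelOf i' z')).MeetsColumn j)
    (hne : G.labelOf i z ≠ G.labelOf i' z') :
    liftedBottom G.rows (G.type i) + G.h i ≤ liftedBottom G.rows (G.type i') ∨
      liftedBottom G.rows (G.type i') + G.h i' ≤ liftedBottom G.rows (G.type i) := by
  wlog hle : track G.rows (G.type i) ≤ track G.rows (G.type i') generalizing i i' z z'
  · exact (this hi' hi hj' hj hne.symm (le_of_not_ge hle)).symm
  have hd := fun t => disjoint_of_labelOf_ne (t := t) hi hi' hj hj' hne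
  have hpos := bottom_lt_top (G := G) i'
  rcases ht : track G.rows (G.type i) with _ | _ <;>
    rcases ht' : track G.rows (G.type i') with _ | _ <;> rw [ht, ht'] at hle hd
  · have := hd false (Or.inl rfl) (Or.inl rfl)
    simp only [liftedBottom, ht, ht', Bool.false_eq_true, if_false]
    exact this
  · left
    have h₁ := track_eq_false.1 ht
    have h₂ := track_eq_true.1 ht'
    simp only [liftedBottom, ht, ht', if_true, Bool.false_eq_true, if_false]
    change (G.type i).2 ≤ _
    by_cases hs : Spanning G.rows (G.type i)
    · have := hd true (Or.inr hs) (Or.inl rfl)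
      omega
    · simp only [Spanning] at hs
      omega
  · exact absurd hle (by decide)
  · have := hd true (Or.inl rfl) (Or.inl rfl)
    simp only [liftedBottom, ht, ht', if_true]
    simp only [type] at *
    omega

theorem gap_source_mem (hj : (G.box (.gap l)).MeetsColumn j) (t : Bool) :
    slab G.cuts j = l ∧ G.state (G.source t j) = G.popularState l := by
  simp only [box, Container.MeetsColumn] at hj
  obtain ⟨ha, hb⟩ : G.gapKey l ≤ G.key t (G.source t j) ∧
      G.key t (G.source t j) < (G.gapKey l).next := by
    cases t <;> refine key_source_mem ?_ ?_ <;> omega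
  have hjc : j < G.columns :=
    lt_of_lt_of_le (by omega : j < G.rank true (G.gapKey l).next) keyRank_le
  have hkey : G.key t (G.source t j) = G.gapKey l := le_antisymm (Key.lt_next_iff.1 hb) ha
  obtain ⟨hl, -, -, hs⟩ := Key.mk_inj.1 hkey
  rw [hl] at hs
  exact ⟨slab_source hjc ▸ hl, stateRank_eq_zero_iff.1 hs⟩

theorem gap_disjoint_labelOf (hi : G.Covers i z) (hj : (G.box (G.labelOf i z)).MeetsColumn j)
    (hg : (G.box (.gap l)).MeetsColumn j) :
    liftedBottom G.rows (G.type i) + G.h i ≤ G.gapBottom l ∨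
      G.gapBottom l + G.rows / 3 ≤ liftedBottom G.rows (G.type i) := by
  obtain ⟨m, hm, hmi, -⟩ := exists_covers_source hi hj (Or.inl rfl)
  have hstate : G.type i ∈ G.popularState l := by
    rw [← (gap_source_mem hg _).2, ← hmi]
    exact type_mem_state hm
  rcases ht : track G.rows (G.type i) with _ | _
  · left
    rw [liftedBottom, ht, if_neg Bool.false_ne_true]
    exact le_sup (f := Prod.snd) (mem_filter.2 ⟨hstate, ht⟩)
  · right
    rw [liftedBottom, ht, if_pos rfl]
    refine Nat.add_le_add_right (Finset.sup_le fun σ hσ => ?_) _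
    obtain ⟨hσ, hσt⟩ := mem_filter.1 hσ
    rw [← (gap_source_mem hg true).2] at hσ hstate
    have hd := disjoint_of_mem_state hσ hstate (fun h => by simp [h, ht] at hσt)
    have := bottom_lt_top (G := G) i
    have := track_eq_false.1 hσt
    have := track_eq_true.1 ht
    omega

variable (G) in
/-- The labels of the containers that are used: the gaps and the labels of the parts of items. -/
def Used (k : Label ι) : Prop :=
  (∃ l, k = .gap l) ∨ ∃ i z, G.Covers i z ∧ k = G.labelOf i z

theorem Used.disjoint {p q : Label ι} (hp : G.Used p) (hq : G.Used q) (hne : p ≠ q)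
    (hwp : 0 < (G.box p).width) (hwq : 0 < (G.box q).width) : (G.box p).Disjoint (G.box q) := by
  by_contra hd
  obtain ⟨j, hjp, hjq⟩ : ∃ j, (G.box p).MeetsColumn j ∧ (G.box q).MeetsColumn j := by
    refine ⟨max (G.box p).left (G.box q).left, ?_⟩
    simp only [Container.Disjoint, RectDisjoint, Container.MeetsColumn] at *
    omega
  suffices (G.box p).bottom + (G.box p).height ≤ (G.box q).bottom ∨
      (G.box q).bottom + (G.box q).height ≤ (G.box p).bottom by
    exact hd (Or.inr (Or.inr this))
  rcases hp with ⟨l, rfl⟩ | ⟨i, z, hi, rfl⟩ <;> rcases hq with ⟨l', rfl⟩ | ⟨i', z', hi', rfl⟩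
  · exact absurd (by rw [← (gap_source_mem hjp true).1, ← (gap_source_mem hjq true).1]) hne
  · rw [box_labelOf_bottom, box_labelOf_height]
    exact (gap_disjoint_labelOf hi' hjq hjp).symm
  · rw [box_labelOf_bottom, box_labelOf_height]
    exact gap_disjoint_labelOf hi hjp hjq
  · simp only [box_labelOf_bottom, box_labelOf_height]
    exact lifted_disjoint_of_labelOf_ne hi hi' hjp hjq hne

theorem box_right_le (k : Label ι) (hk : 0 < (G.box k).width) :
    (G.box k).left + (G.box k).width ≤ G.columns := by
  have hrank : ∀ t a, G.rank t a ≤ G.columns := fun t a => keyRank_le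
  cases k with
  | item i => exact G.isPackingOn.right_le i (mem_univ i)
  | tall l τ =>
    have := hrank (track G.rows τ) (G.tallKey (track G.rows τ) l τ 1)
    simp only [box, keyBox] at *
    omega
  | cell a τ =>
    have := hrank (track G.rows τ) a.next
    simp only [box, keyBox] at *
    omega
  | gap l =>
    have := hrank false (G.gapKey l).next
    simp only [box] at *
    omega

theorem gapBottom_le (l : ℕ) : G.gapBottom l ≤ G.rows := by
  refine Finset.sup_le fun σ hσ => ?_
  rcases (G.exists_popularState l).choose_spec.1 with hS | ⟨z, hz⟩
  · exact absurd (hS ▸ (mem_filter.1 hσ).1 : σ ∈ ∅) (notMem_empty σ)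
  · exact top_le_of_mem_state (z := z) (hz.symm ▸ (mem_filter.1 hσ).1)

theorem Used.top_le {k : Label ι} (hk : G.Used k) :
    (G.box k).bottom + (G.box k).height ≤ G.rows + G.rows / 3 := by
  rcases hk with ⟨l, rfl⟩ | ⟨i, z, -, rfl⟩
  · exact Nat.add_le_add_right (gapBottom_le l) _
  · rw [box_labelOf_bottom, box_labelOf_height, liftedBottom]
    have : (G.type i).1 + G.h i ≤ G.rows := top_le_rows i
    split_ifs <;> omega

end SlabbedGrid

/-! ### Room for the short items -/

namespace SlabbedGrid

variable {ι : Type u} [Fintype ι] {G : SlabbedGrid ι} {i j : ι} {z l v ν : ℕ} {t t' : Bool}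
  {τ : ℕ × ℕ} {a b : Key} {s : Finset ι}

theorem card_columnClass_eq_le (hv : ∀ i, i ∉ G.obstacles → G.w i ≤ v) (t : Bool) (l : ℕ) {c : ℕ}
    (hc : c = 0 ∨ c = 3) :
    #{z ∈ range G.columns | slab G.cuts z = l ∧ G.columnClass t z = c} ≤ v := by
  rcases eq_empty_or_nonempty {z ∈ range G.columns | slab G.cuts z = l ∧ G.columnClass t z = c}
    with hempty | ⟨z, hz⟩
  · simp [hempty]
  obtain ⟨-, hzl, hzc⟩ := mem_filter.1 hz
  suffices ∃ i, G.Pinned i ∧ ∀ y, slab G.cuts y = l → G.columnClass t y = c → G.Covers i y by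
    obtain ⟨i, hi, hcov⟩ := this
    have hcard : #(Ico (G.x i) (G.x i + G.w i)) ≤ v := by
      rw [Nat.card_Ico, Nat.add_sub_cancel_left]
      exact hv i hi.1
    refine (card_le_card fun y hy => ?_).trans hcard
    obtain ⟨-, hyl, hyc⟩ := mem_filter.1 hy
    exact mem_Ico.2 (hcov y hyl hyc)
  rcases hc with rfl | rfl
  · obtain ⟨i, hp, ht, -, his⟩ := columnClass_eq_zero_iff.1 hzc
    refine ⟨i, hp, fun y hyl hyc => ?_⟩
    obtain ⟨k, -, htk, hk, hks⟩ := columnClass_eq_zero_iff.1 hyc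
    rw [hzl] at his
    rw [hyl] at hks
    rwa [his.eq_of_onTrack hks ht htk]
  · obtain ⟨i, hp, ht, hi, his⟩ := exists_pinned_of_columnClass_eq_three hzc
    refine ⟨i, hp, fun y hyl hyc => ?_⟩
    obtain ⟨k, hkp, htk, hk, hks⟩ := exists_pinned_of_columnClass_eq_three hyc
    have hs := hzl.trans hyl.symm
    rcases le_total z y with hle | hle
    · exact hi.mono_of_crosses hp.2.2 his hle hs
    · rwa [hi.eq_of_onTrack (hk.mono_of_crosses hkp.2.2 hks hle hs.symm) ht htk]

theorem card_slab_le (hv : ∀ i, i ∉ G.obstacles → G.w i ≤ v) (l : ℕ) :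
    #{z ∈ range G.columns | slab G.cuts z = l} ≤ #(G.cleanColumns l) + 4 * v := by
  let pinnedColumns (p : Bool × ℕ) : Finset ℕ :=
    {z ∈ range G.columns | slab G.cuts z = l ∧ G.columnClass p.1 z = p.2}
  let pairs : Finset (Bool × ℕ) := univ ×ˢ {0, 3}
  have hsub : ({z ∈ range G.columns | slab G.cuts z = l} : Finset ℕ) ⊆
      G.cleanColumns l ∪ pairs.biUnion pinnedColumns := fun z hz => by
    obtain ⟨hz, hl⟩ := mem_filter.1 hz
    by_cases hclean : ∀ t, G.columnClass t z = 1 ∨ G.columnClass t z = 2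
    · exact mem_union_left _ (mem_filter.2 ⟨hz, hl, hclean⟩)
    · obtain ⟨t, ht⟩ := not_forall.1 hclean
      have hle := columnClass_le (G := G) (t := t) (z := z)
      have h03 : G.columnClass t z = 0 ∨ G.columnClass t z = 3 := by omega
      exact mem_union_right _ (mem_biUnion.2 ⟨(t, G.columnClass t z), by simpa [pairs] using h03,
        mem_filter.2 ⟨hz, hl, rfl⟩⟩)
  refine (card_le_card hsub).trans ((card_union_le _ _).trans (Nat.add_le_add_left ?_ _))
  refine card_biUnion_le_card_mul pairs pinnedColumns v fun p hp => ?_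
  exact card_columnClass_eq_le hv p.1 l (by simpa [pairs] using hp)

variable (G) in
/-- The number of clean columns with the popular state in the slab starting at `l`. -/
noncomputable def gapSize (l : ℕ) : ℕ := #{z ∈ G.cleanColumns l | G.state z = G.popularState l}

theorem rank_add_card (h : a ≤ b) :
    G.rank t a + #{z ∈ range G.columns | a ≤ G.key t z ∧ G.key t z < b} = G.rank t b :=
  keyRank_add_card h

theorem keyBox_width (h : a ≤ b) : (G.keyBox τ a b).width =
    #{z ∈ range G.columns | a ≤ G.key (track G.rows τ) z ∧ G.key (track G.rows τ) z < b} := by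
  rw [keyBox, ← rank_add_card h, Nat.add_sub_cancel_left]

theorem key_eq_gapKey (hz : z ∈ G.cleanColumns l) (hs : G.state z = G.popularState l) (t : Bool) :
    G.key t z = G.gapKey l := by
  obtain ⟨-, rfl, hclean⟩ := mem_filter.1 hz
  have hclass : G.columnClass t z =
      if ∃ τ ∈ G.popularState (slab G.cuts z), Spanning G.rows τ then 1 else 2 := by
    rw [← hs]
    rcases hclean t with h | h
    · obtain ⟨i, -, hspan, hi⟩ := columnClass_eq_one_iff.1 h
      rw [h, if_pos ⟨_, type_mem_state hi, hspan⟩]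
    · rw [h, if_neg fun ⟨τ, hτ, hspan⟩ => not_spanning_of_columnClass_eq_two h hτ hspan]
  rw [key, stateKey, gapKey, Key.mk_inj, hclass, hs]
  simp [trackRank, stateRank]

theorem rank_gapKey_add_gapSize_le (t : Bool) (l : ℕ) :
    G.rank t (G.gapKey l) + G.gapSize l ≤ G.rank t (G.gapKey l).next := by
  rw [← rank_add_card (Key.le_next _)]
  refine Nat.add_le_add_left (card_le_card fun z hz => ?_) _
  obtain ⟨hz, hs⟩ := mem_filter.1 hz
  rw [mem_filter, key_eq_gapKey hz hs t]
  exact ⟨(mem_filter.1 hz).1, le_rfl, Key.lt_next_iff.2 le_rfl⟩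

theorem rank_gapKey_le (hv : ∀ i, i ∉ G.obstacles → G.w i ≤ v) (t t' : Bool) (l : ℕ) :
    G.rank t (G.gapKey l) ≤ G.rank t' (G.gapKey l) + v := by
  have hsub : ({z ∈ range G.columns | G.key t z < G.gapKey l} : Finset ℕ) ⊆
      ({z ∈ range G.columns | G.key t' z < G.gapKey l} : Finset ℕ) ∪
        ({z ∈ range G.columns | slab G.cuts z = l ∧ G.columnClass t z = 0} : Finset ℕ) := ?_
  · exact (card_le_card hsub).trans ((card_union_le _ _).trans
      (Nat.add_le_add_left (card_columnClass_eq_le hv t l (Or.inl rfl)) _))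
  intro z hz
  have hone := columnClass_eq_one_congr (G := G) (z := z) t t'
  simp only [mem_union, mem_filter, key, stateKey, gapKey, Key.mk_lt_mk] at hz ⊢
  refine or_iff_not_imp_right.2 fun hne => ⟨hz.1, ?_⟩
  have hz' := hz.2
  have : ¬ (slab G.cuts z = l ∧ G.columnClass t z = 0) := fun h => hne ⟨hz.1, h⟩
  split_ifs at hz' ⊢ <;> omega

theorem gapSize_le_width (hv : ∀ i, i ∉ G.obstacles → G.w i ≤ v) (l : ℕ) :
    G.gapSize l ≤ (G.box (.gap l)).width + v := by
  have h₁ := rank_gapKey_add_gapSize_le (G := G) false l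
  have h₂ := rank_gapKey_add_gapSize_le (G := G) true l
  have h₃ := rank_gapKey_le hv false true l
  have h₄ := rank_gapKey_le hv true false l
  simp only [box]
  omega

theorem columns_le_sum_gap_width (hv : ∀ i, i ∉ G.obstacles → G.w i ≤ v) :
    G.columns ≤ G.stateBound * (∑ l ∈ G.cuts, (G.box (.gap l)).width + #G.cuts * v) +
      4 * #G.cuts * v :=
  calc G.columns
      = ∑ l ∈ G.cuts, #{z ∈ range G.columns | slab G.cuts z = l} := by
        rw [← card_eq_sum_card_fiberwise fun z _ => slab_mem G.zero_mem_cuts, card_range]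
    _ ≤ ∑ l ∈ G.cuts, (G.stateBound * ((G.box (.gap l)).width + v) + 4 * v) :=
        sum_le_sum fun l _ => (card_slab_le hv l).trans (Nat.add_le_add_right
          ((card_cleanColumns_le l).trans (Nat.mul_le_mul_left _ (gapSize_le_width hv l))) _)
    _ = _ := by
        rw [sum_add_distrib, ← mul_sum, sum_add_distrib, sum_const, sum_const, smul_eq_mul,
          smul_eq_mul]
        ring

theorem card_crosses_le : #{i | G.Crosses i} ≤ #G.cuts * G.rows := by
  refine (card_le_card fun i hi => ?_).trans
    (card_biUnion_le_card_mul G.cuts (fun b => {i | G.Covers i b}) _ fun b _ => card_covers_le b)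
  obtain ⟨b, hb, hib, hbi⟩ := (mem_filter.1 hi).2
  exact mem_biUnion.2 ⟨b, hb, mem_filter.2 ⟨mem_univ _, hib.le, hbi⟩⟩

theorem right_le_left_or_of_type_eq (hij : i ≠ j) (h : G.type i = G.type j) :
    G.x i + G.w i ≤ G.x j ∨ G.x j + G.w j ≤ G.x i := by
  by_contra hd
  have hi : G.Covers i (max (G.x i) (G.x j)) := by
    have := (covers_left (G := G) i).2
    unfold Covers
    omega
  have hj : G.Covers j (max (G.x i) (G.x j)) := by
    have := (covers_left (G := G) j).2
    unfold Covers
    omega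
  exact hij (hi.eq_of_type_eq hj h)

theorem sum_width_le_card (hs : ∀ i ∈ s, G.type i = τ) {T : Finset ℕ}
    (hT : ∀ i ∈ s, ∀ z, G.Covers i z → z ∈ T) : ∑ i ∈ s, G.w i ≤ #T :=
  sum_length_le_card (p := G.x) (fun i hi z hz => hT i hi z (mem_Ico.1 hz)) fun i hi j hj hij =>
    right_le_left_or_of_type_eq hij ((hs i (mem_coe.1 hi)).trans (hs j (mem_coe.1 hj)).symm)

theorem tallKey_le_key (hc : ¬ G.Crosses i) (ht : IsTall G.rows (G.type i))
    (hi : G.Covers i z) :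
    G.tallKey (track G.rows (G.type i)) (slab G.cuts (G.x i)) (G.type i) 0 ≤
        G.key (track G.rows (G.type i)) z ∧
      G.key (track G.rows (G.type i)) z <
        G.tallKey (track G.rows (G.type i)) (slab G.cuts (G.x i)) (G.type i) 1 := by
  have hton := ht.onTrack (top_le_rows i)
  simp [tallKey, key, stateKey, Key.mk_le_mk, Key.mk_lt_mk, hi.slab_eq hc,
    filter_onTrack_state hi hton, columnClass_eq_of_not_pinned (fun hp => hc hp.2.2) hton hi]

theorem sum_width_tall_le (l : ℕ) (τ : ℕ × ℕ) :
    ∑ i with i ∉ G.obstacles ∧ ¬ G.Crosses i ∧ IsTall G.rows (G.type i) ∧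
      slab G.cuts (G.x i) = l ∧ G.type i = τ, G.w i ≤ (G.box (.tall l τ)).width := by
  have hle : G.tallKey (track G.rows τ) l τ 0 ≤ G.tallKey (track G.rows τ) l τ 1 := by
    rw [tallKey, tallKey, Key.mk_le_mk]
    omega
  rw [box, keyBox_width hle]
  refine sum_width_le_card (τ := τ) (fun i hi => (mem_filter.1 hi).2.2.2.2.2) fun i hi z hz => ?_
  obtain ⟨-, -, hc, ht, rfl, rfl⟩ := mem_filter.1 hi
  exact mem_filter.2 ⟨mem_range.2 hz.lt_columns, tallKey_le_key hc ht hz⟩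

variable (G) in
/-- The keys of the columns in the slab starting at `l` that meet an item of the type `τ` other than
an obstacle. -/
noncomputable def cells (l : ℕ) (τ : ℕ × ℕ) : Finset Key :=
  ({z ∈ range G.columns | slab G.cuts z = l ∧ ∃ i, i ∉ G.obstacles ∧ G.Covers i z ∧
    G.type i = τ} : Finset ℕ).image (G.key (track G.rows τ))

theorem mem_cells : a ∈ G.cells l τ ↔ ∃ z, slab G.cuts z = l ∧
    (∃ i, i ∉ G.obstacles ∧ G.Covers i z ∧ G.type i = τ) ∧ G.key (track G.rows τ) z = a := by
  simp only [cells, mem_image, mem_filter, mem_range]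
  exact ⟨fun ⟨z, ⟨_, hl, hi⟩, ha⟩ => ⟨z, hl, hi, ha⟩, fun ⟨z, hl, hi, ha⟩ =>
    ⟨z, ⟨hi.choose_spec.2.1.lt_columns, hl, hi⟩, ha⟩⟩

theorem slab_eq_of_mem_cells {l' : ℕ} (h : a ∈ G.cells l τ) (h' : a ∈ G.cells l' τ) : l = l' := by
  obtain ⟨z, rfl, -, ha⟩ := mem_cells.1 h
  obtain ⟨z', rfl, -, ha'⟩ := mem_cells.1 h'
  exact (stateKey_inj.1 (ha.trans ha'.symm)).1

theorem card_cells_le (l : ℕ) (τ : ℕ × ℕ) : #(G.cells l τ) ≤ 4 * G.stateBound := by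
  have hsub : G.cells l τ ⊆ (range 4 ×ˢ (range G.columns).image G.state).image
      fun p => G.stateKey (track G.rows τ) l p.1 p.2 := fun a ha => by
    obtain ⟨z, rfl, ⟨i, -, hi, -⟩, rfl⟩ := mem_cells.1 ha
    exact mem_image.2 ⟨(G.columnClass (track G.rows τ) z, G.state z),
      mem_product.2 ⟨mem_range.2 (Nat.lt_succ_of_le columnClass_le),
        mem_image_of_mem _ (mem_range.2 hi.lt_columns)⟩, rfl⟩
  refine (card_le_card hsub).trans (card_image_le.trans ?_)
  rw [card_product, card_range]
  exact Nat.mul_le_mul_left _ (card_image_state_le _)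

theorem sum_width_le_sum_cell_width (hs : ∀ i ∈ s, i ∉ G.obstacles ∧ ¬ G.Crosses i ∧
    slab G.cuts (G.x i) = l ∧ G.type i = τ) :
    ∑ i ∈ s, G.w i ≤ ∑ a ∈ G.cells l τ, (G.box (.cell a τ)).width := by
  set columns : Finset ℕ := {z ∈ range G.columns | slab G.cuts z = l ∧ ∃ i, i ∉ G.obstacles ∧
    G.Covers i z ∧ G.type i = τ}
  calc ∑ i ∈ s, G.w i
      ≤ #columns := sum_width_le_card (fun i hi => (hs i hi).2.2.2) fun i hi z hz => by
        obtain ⟨hO, hc, hl, hτ⟩ := hs i hi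
        exact mem_filter.2 ⟨mem_range.2 hz.lt_columns, (hz.slab_eq hc).trans hl, i, hO, hz, hτ⟩
    _ = ∑ a ∈ G.cells l τ, #{z ∈ columns | G.key (track G.rows τ) z = a} :=
        card_eq_sum_card_image _ _
    _ ≤ _ := sum_le_sum fun a _ => by
        rw [box, keyBox_width (Key.le_next a)]
        refine card_le_card fun z hz => ?_
        obtain ⟨hcol, rfl⟩ := mem_filter.1 hz
        exact mem_filter.2 ⟨(mem_filter.1 hcol).1, le_rfl, Key.lt_next_iff.2 le_rfl⟩

theorem exists_groupFilling (hs : ∀ i ∈ s, i ∉ G.obstacles ∧ ¬ G.Crosses i ∧ G.w i ≤ ν) (l : ℕ)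
    (τ : ℕ × ℕ) :
    ∃ lost, ∃ a : ι → Key,
      (∀ i ∈ s \ lost, slab G.cuts (G.x i) = l → G.type i = τ → a i ∈ G.cells l τ) ∧
      (∀ k ∈ G.cells l τ, ∑ i ∈ s \ lost with slab G.cuts (G.x i) = l ∧ G.type i = τ ∧ a i = k,
        G.w i ≤ (G.box (.cell k τ)).width) ∧
      ∑ i ∈ lost, G.w i ≤ 4 * G.stateBound * ν := by
  set group : Finset ι := {i ∈ s | slab G.cuts (G.x i) = l ∧ G.type i = τ}
  have hgroup : group ⊆ s := filter_subset _ _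
  have : Nonempty Key := ⟨Key.mk 0 0 0 0⟩
  obtain ⟨lost, -, a, ha, hload, hsum⟩ := exists_filling (G.cells l τ)
    (fun k => (G.box (.cell k τ)).width) group fun i hi => (hs i (hgroup hi)).2.2
  refine ⟨lost, a, fun i hi hl hτ => ha i ?_, fun k hk => ?_, ?_⟩
  · obtain ⟨hi, hi'⟩ := mem_sdiff.1 hi
    exact mem_sdiff.2 ⟨mem_filter.2 ⟨hi, hl, hτ⟩, hi'⟩
  · refine (sum_le_sum_of_subset fun i hi => ?_).trans (hload k hk)
    simp only [group, mem_filter, mem_sdiff] at hi ⊢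
    exact ⟨⟨⟨hi.1.1, hi.2.1, hi.2.2.1⟩, hi.1.2⟩, hi.2.2.2⟩
  · rcases hsum with rfl | hsum
    · simp
    · have hle : ∑ i ∈ group, G.w i ≤ ∑ a ∈ G.cells l τ, (G.box (.cell a τ)).width :=
        sum_width_le_sum_cell_width fun i hi =>
          ⟨(hs i (hgroup hi)).1, (hs i (hgroup hi)).2.1, (mem_filter.1 hi).2⟩
      have hcells := Nat.mul_le_mul_right ν (card_cells_le (G := G) l τ)
      omega

theorem exists_cellFilling (hs : ∀ i ∈ s, i ∉ G.obstacles ∧ ¬ G.Crosses i ∧ G.w i ≤ ν) :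
    ∃ lost, ∃ a : ι → Key,
      (∀ i ∈ s \ lost, a i ∈ G.cells (slab G.cuts (G.x i)) (G.type i)) ∧
      (∀ k τ, ∑ i ∈ s \ lost with G.type i = τ ∧ a i = k, G.w i ≤ (G.box (.cell k τ)).width) ∧
      ∑ i ∈ lost, G.w i ≤ #G.cuts * #G.types * (4 * G.stateBound * ν) := by
  choose lost a ha hload hsum using exists_groupFilling hs
  set U := (G.cuts ×ˢ G.types).biUnion fun p => lost p.1 p.2
  have hnot : ∀ i ∈ s \ U, i ∉ lost (slab G.cuts (G.x i)) (G.type i) := fun i hi hl =>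
    (mem_sdiff.1 hi).2 (mem_biUnion.2 ⟨(slab G.cuts (G.x i), G.type i),
      mem_product.2 ⟨slab_mem G.zero_mem_cuts, type_mem_types i⟩, hl⟩)
  have hmem : ∀ i ∈ s \ U, a (slab G.cuts (G.x i)) (G.type i) i ∈
      G.cells (slab G.cuts (G.x i)) (G.type i) := fun i hi =>
    ha _ _ i (mem_sdiff.2 ⟨(mem_sdiff.1 hi).1, hnot i hi⟩) rfl rfl
  refine ⟨U, fun i => a (slab G.cuts (G.x i)) (G.type i) i, hmem, fun k τ => ?_, ?_⟩
  · rcases eq_empty_or_nonempty (filter (fun i => G.type i = τ ∧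
      a (slab G.cuts (G.x i)) (G.type i) i = k) (s \ U)) with hempty | ⟨m, hm⟩
    · rw [hempty, sum_empty]
      exact Nat.zero_le _
    have hcell : ∀ {i}, i ∈ s \ U → G.type i = τ → a (slab G.cuts (G.x i)) (G.type i) i = k →
        k ∈ G.cells (slab G.cuts (G.x i)) τ := fun {i} hi hτ hk => by
      rw [← hk, ← hτ]
      exact hmem i hi
    obtain ⟨hm, hmτ, hmk⟩ := mem_filter.1 hm
    have hkm := hcell hm hmτ hmk
    refine (sum_le_sum_of_subset fun i hi => ?_).trans (hload _ _ k hkm)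
    obtain ⟨hi, hiτ, hik⟩ := mem_filter.1 hi
    have hl := slab_eq_of_mem_cells (hcell hi hiτ hik) hkm
    refine mem_filter.2 ⟨mem_sdiff.2 ⟨(mem_sdiff.1 hi).1, fun h => ?_⟩, hl, hiτ, ?_⟩
    · exact hnot i hi (by rwa [hl, hiτ])
    · beta_reduce at hik
      rwa [hl, hiτ] at hik
  · refine (sum_biUnion_le _ _ _).trans ((sum_le_card_nsmul _ _ _ fun p _ => hsum p.1 p.2).trans ?_)
    rw [card_product, smul_eq_mul]

end SlabbedGrid

theorem Container.Disjoint.ne {B C : Container} (h : B.Disjoint C) (hw : 0 < B.width)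
    (hh : 0 < B.height) : B ≠ C := by
  rintro rfl
  simp only [Container.Disjoint, RectDisjoint] at h
  omega

namespace SlabbedGrid

variable {ι : Type u} [Fintype ι] {G : SlabbedGrid ι} {i : ι} {v ν : ℕ} {s Z : Finset ι}
  {k : Label ι}

variable (G) in
/-- The item `i` may be packed into the container with the label `k`. -/
def Admits (i : ι) : Label ι → Prop
  | .item j => j = i ∧ (i ∈ G.obstacles ∨ G.Pinned i)
  | .tall l τ => i ∉ G.obstacles ∧ ¬ G.Crosses i ∧ IsTall G.rows (G.type i) ∧
      slab G.cuts (G.x i) = l ∧ G.type i = τ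
  | .cell a τ => i ∉ G.obstacles ∧ ¬ IsTall G.rows (G.type i) ∧ G.type i = τ ∧
      a ∈ G.cells (slab G.cuts (G.x i)) τ
  | .gap l => i ∉ G.obstacles ∧ ¬ IsTall G.rows (G.type i) ∧ l ∈ G.cuts

theorem Admits.used (h : G.Admits i k) : G.Used k := by
  cases k with
  | item j =>
    obtain ⟨rfl, hj⟩ := h
    exact Or.inr ⟨j, G.x j, covers_left j, (labelOf_item hj).symm⟩
  | tall l τ =>
    obtain ⟨hO, hc, ht, rfl, rfl⟩ := h
    exact Or.inr ⟨i, G.x i, covers_left i,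
      (labelOf_tall (not_or.2 ⟨hO, fun hp => hc hp.2.2⟩) ht).symm⟩
  | cell a τ =>
    obtain ⟨-, hshort, rfl, ha⟩ := h
    obtain ⟨z, -, ⟨m, hO, hm, hτ⟩, rfl⟩ := mem_cells.1 ha
    exact Or.inr ⟨m, z, hm, by rw [labelOf_cell hO (hτ ▸ hshort), hτ]⟩
  | gap l => exact Or.inl ⟨l, rfl⟩

theorem Admits.eq_item (h : G.Admits i k) (hi : i ∈ G.obstacles) : k = .item i := by
  cases k with
  | item j => rw [h.1]
  | tall l τ => exact absurd hi h.1
  | cell a τ => exact absurd hi h.1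
  | gap l => exact absurd hi h.1

theorem Admits.height_le (h : G.Admits i k) : G.h i ≤ (G.box k).height := by
  cases k with
  | item j => rw [h.1, box]
  | tall l τ =>
    obtain ⟨-, -, -, -, rfl⟩ := h
    simp [box, keyBox, type]
  | cell a τ =>
    obtain ⟨-, -, rfl, -⟩ := h
    simp [box, keyBox, type]
  | gap l =>
    have := h.2.1
    simp only [IsTall, type, box] at *
    omega

variable (G) in
/-- The items that are neither obstacles nor tall. -/
noncomputable def shortItems : Finset ι := {i | i ∉ G.obstacles ∧ ¬ IsTall G.rows (G.type i)}

theorem mem_shortItems : i ∈ G.shortItems ↔ i ∉ G.obstacles ∧ ¬ IsTall G.rows (G.type i) := by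
  simp [shortItems]

theorem exists_gapFilling (hv : ∀ i, i ∉ G.obstacles → G.w i ≤ v)
    (hs : ∀ i ∈ s, i ∉ G.obstacles)
    (hsum : G.stateBound * (∑ i ∈ s, G.w i + 2 * #G.cuts * v) + 4 * #G.cuts * v < G.columns) :
    ∃ g : ι → ℕ, (∀ i ∈ s, g i ∈ G.cuts) ∧
      ∀ l ∈ G.cuts, ∑ i ∈ s with g i = l, G.w i ≤ (G.box (.gap l)).width := by
  obtain ⟨lost, -, g, hg, hload, rfl | hlost⟩ :=
    exists_filling G.cuts (fun l => (G.box (.gap l)).width) s fun i hi => hv i (hs i hi)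
  · rw [sdiff_empty] at hg hload
    exact ⟨g, hg, fun l hl => by convert hload l hl⟩
  · have hle : ∑ l ∈ G.cuts, (G.box (.gap l)).width + #G.cuts * v ≤
        ∑ i ∈ s, G.w i + 2 * #G.cuts * v := by
      have := (Nat.le_add_left _ _).trans hlost
      linarith
    have := columns_le_sum_gap_width hv
    have := Nat.mul_le_mul_left G.stateBound hle
    omega

theorem sum_width_crosses_le (hν : ∀ i ∈ s, G.w i ≤ ν) :
    ∑ i ∈ s with G.Crosses i, G.w i ≤ #G.cuts * G.rows * ν := by
  refine (sum_le_card_nsmul _ _ ν fun i hi => hν i (mem_filter.1 hi).1).trans ?_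
  rw [smul_eq_mul]
  exact Nat.mul_le_mul_right _ ((card_le_card fun i hi =>
    mem_filter.2 ⟨mem_univ i, (mem_filter.1 hi).2⟩).trans card_crosses_le)

theorem sum_width_gap_or_cell_le {residue t : Finset ι} {a : ι → Key} {g : ι → ℕ}
    (hg : ∀ i ∈ residue, g i ∈ G.cuts)
    (hgap : ∀ l ∈ G.cuts, ∑ i ∈ residue with g i = l, G.w i ≤ (G.box (.gap l)).width)
    (ht : ∀ i ∈ s, i ∉ residue → i ∈ t)
    (hcell : ∀ b τ, ∑ i ∈ t with G.type i = τ ∧ a i = b, G.w i ≤ (G.box (.cell b τ)).width)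
    (k : Label ι) :
    ∑ i ∈ s with (if i ∈ residue then .gap (g i) else .cell (a i) (G.type i)) = k, G.w i ≤
      (G.box k).width := by
  rcases eq_empty_or_nonempty
    {i ∈ s | (if i ∈ residue then .gap (g i) else .cell (a i) (G.type i)) = k} with hempty | ⟨m, hm⟩
  · rw [hempty, sum_empty]
    exact Nat.zero_le _
  have hk := (mem_filter.1 hm).2
  split_ifs at hk with hmr <;> subst hk
  · refine (sum_le_sum_of_subset fun i hi => ?_).trans (hgap _ (hg m hmr))
    obtain ⟨-, hi⟩ := mem_filter.1 hi
    split_ifs at hi with hir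
    exact mem_filter.2 ⟨hir, Label.gap.inj hi⟩
  · refine (sum_le_sum_of_subset fun i hi => ?_).trans (hcell _ _)
    obtain ⟨his, hi⟩ := mem_filter.1 hi
    split_ifs at hi with hir
    obtain ⟨hia, hiτ⟩ := Label.cell.inj hi
    exact mem_filter.2 ⟨ht i his hir, hiτ, hia⟩

theorem exists_shortAssignment (hv : ∀ i, i ∉ G.obstacles → G.w i ≤ v)
    (hν : ∀ i ∈ G.shortItems, i ∉ Z → G.w i ≤ ν)
    (hlt : G.stateBound * (∑ i ∈ Z, G.w i + #G.cuts * G.rows * ν +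
      #G.cuts * #G.types * (4 * G.stateBound * ν) + 2 * #G.cuts * v) + 4 * #G.cuts * v <
        G.columns) :
    ∃ c : ι → Label ι, (∀ i ∈ G.shortItems, G.Admits i (c i)) ∧
      ∀ k, ∑ i ∈ G.shortItems with c i = k, G.w i ≤ (G.box k).width := by
  have hν' : ∀ i ∈ G.shortItems \ Z, G.w i ≤ ν := fun i hi =>
    hν i (mem_sdiff.1 hi).1 (mem_sdiff.1 hi).2
  set crossing := {i ∈ G.shortItems \ Z | G.Crosses i}
  set s := {i ∈ G.shortItems \ Z | ¬ G.Crosses i}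
  obtain ⟨lost, a, ha, hcell, hlost⟩ := exists_cellFilling (s := s) (ν := ν) fun i hi => by
    obtain ⟨hi, hc⟩ := mem_filter.1 hi
    exact ⟨(mem_shortItems.1 (mem_sdiff.1 hi).1).1, hc, hν' i hi⟩
  set residue := G.shortItems ∩ (Z ∪ crossing ∪ lost)
  have hresidue : ∑ i ∈ residue, G.w i ≤ ∑ i ∈ Z, G.w i + #G.cuts * G.rows * ν +
      #G.cuts * #G.types * (4 * G.stateBound * ν) :=
    (sum_le_sum_of_subset inter_subset_right).trans <| (sum_union_le _ _ _).trans <|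
      add_le_add ((sum_union_le _ _ _).trans (Nat.add_le_add_left (sum_width_crosses_le hν') _))
        hlost
  obtain ⟨g, hg, hgap⟩ := exists_gapFilling hv
    (fun i hi => (mem_shortItems.1 (mem_inter.1 hi).1).1)
    (lt_of_le_of_lt (Nat.add_le_add_right (Nat.mul_le_mul_left _
      (Nat.add_le_add_right hresidue _)) _) hlt)
  have hrest : ∀ i ∈ G.shortItems, i ∉ residue → i ∈ s \ lost := fun i hi hr => by
    simp only [residue, crossing, s, mem_inter, mem_union, mem_filter, mem_sdiff] at hr ⊢
    tauto
  refine ⟨fun i => if i ∈ residue then .gap (g i) else .cell (a i) (G.type i), fun i hi => ?_,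
    sum_width_gap_or_cell_le hg hgap hrest hcell⟩
  obtain ⟨hO, hshort⟩ := mem_shortItems.1 hi
  beta_reduce
  split_ifs with hr
  exacts [⟨hO, hshort, hg i hr⟩, ⟨hO, hshort, rfl, ha i (hrest i hi hr)⟩]

theorem exists_assignment (hv : ∀ i, i ∉ G.obstacles → G.w i ≤ v)
    (hν : ∀ i ∈ G.shortItems, i ∉ Z → G.w i ≤ ν)
    (hlt : G.stateBound * (∑ i ∈ Z, G.w i + #G.cuts * G.rows * ν +
      #G.cuts * #G.types * (4 * G.stateBound * ν) + 2 * #G.cuts * v) + 4 * #G.cuts * v <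
        G.columns) :
    ∃ c : ι → Label ι, (∀ i, G.Admits i (c i)) ∧ ∀ k, ∑ i with c i = k, G.w i ≤
      (G.box k).width := by
  obtain ⟨c, hc, hload⟩ := exists_shortAssignment hv hν hlt
  let c' (i : ι) : Label ι := if i ∈ G.shortItems then c i else
    if i ∈ G.obstacles ∨ G.Pinned i then .item i else .tall (slab G.cuts (G.x i)) (G.type i)
  have hc' : ∀ i, G.Admits i (c' i) := fun i => by
    simp only [c']
    split_ifs with hi hfixed
    · exact hc i hi
    · exact ⟨rfl, hfixed⟩
    · obtain ⟨hO, hp⟩ := not_or.1 hfixed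
      have ht : IsTall G.rows (G.type i) := by_contra fun ht => hi (mem_shortItems.2 ⟨hO, ht⟩)
      exact ⟨hO, fun hcross => hp ⟨hO, ht, hcross⟩, ht, rfl, rfl⟩
  refine ⟨c', hc', fun k => ?_⟩
  have hadm : ∀ i ∈ ({i | c' i = k} : Finset ι), G.Admits i k := fun i hi =>
    (mem_filter.1 hi).2 ▸ hc' i
  have hshort (hk : ∀ i, G.Admits i k → i ∈ G.shortItems) :
      ∑ i with c' i = k, G.w i ≤ (G.box k).width := by
    refine (sum_le_sum_of_subset fun i hi => ?_).trans (hload k)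
    have his := hk i (hadm i hi)
    have hik := (mem_filter.1 hi).2
    simp only [c', if_pos his] at hik
    exact mem_filter.2 ⟨his, hik⟩
  cases k with
  | item j =>
    refine (sum_le_sum_of_subset fun i hi => ?_).trans (sum_singleton G.w j).le
    exact mem_singleton.2 (hadm i hi).1.symm
  | tall l τ =>
    refine (sum_le_sum_of_subset fun i hi => ?_).trans (sum_width_tall_le l τ)
    rw [mem_filter]
    exact ⟨mem_univ i, hadm i hi⟩
  | cell a τ => exact hshort fun i hi => mem_shortItems.2 ⟨hi.1, hi.2.1⟩
  | gap l => exact hshort fun i hi => mem_shortItems.2 ⟨hi.1, hi.2.1⟩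

variable (G) in
/-- The labels of all containers that some item may be packed into. -/
noncomputable def labels : Finset (Label ι) :=
  (G.obstacles ∪ ({i | G.Crosses i} : Finset ι)).image .item ∪
    (G.cuts ×ˢ G.types).image (fun p => .tall p.1 p.2) ∪
    (G.cuts ×ˢ G.types).biUnion (fun p => (G.cells p.1 p.2).image fun a => .cell a p.2) ∪
    G.cuts.image .gap

theorem Admits.mem_labels (h : G.Admits i k) : k ∈ G.labels := by
  have hmem : (slab G.cuts (G.x i), G.type i) ∈ G.cuts ×ˢ G.types :=
    mem_product.2 ⟨slab_mem G.zero_mem_cuts, type_mem_types i⟩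
  simp only [labels, mem_union]
  cases k with
  | item j =>
    obtain ⟨rfl, h⟩ := h
    refine Or.inl (Or.inl (Or.inl (mem_image_of_mem _ (mem_union.2 ?_))))
    exact h.imp_right fun hp => mem_filter.2 ⟨mem_univ j, hp.2.2⟩
  | tall l τ =>
    obtain ⟨-, -, -, rfl, rfl⟩ := h
    exact Or.inl (Or.inl (Or.inr (mem_image.2 ⟨_, hmem, rfl⟩)))
  | cell a τ =>
    obtain ⟨-, -, rfl, ha⟩ := h
    exact Or.inl (Or.inr (mem_biUnion.2 ⟨_, hmem, mem_image_of_mem _ ha⟩))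
  | gap l => exact Or.inr (mem_image_of_mem _ h.2.2)

theorem card_labels_le : #G.labels ≤ #G.obstacles + #G.cuts * G.rows + #G.cuts * #G.types +
    #G.cuts * #G.types * (4 * G.stateBound) + #G.cuts := by
  refine (card_union_le _ _).trans (add_le_add ((card_union_le _ _).trans
    (add_le_add ((card_union_le _ _).trans (add_le_add ?_ ?_)) ?_)) card_image_le)
  · exact card_image_le.trans ((card_union_le _ _).trans
      (Nat.add_le_add_left card_crosses_le _))
  · exact card_image_le.trans (card_product _ _).le
  · rw [← card_product]
    exact card_biUnion_le_card_mul _ _ _ fun p _ => card_image_le.trans (card_cells_le _ _)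

theorem exists_containerPacking (hv : ∀ i, i ∉ G.obstacles → G.w i ≤ v)
    (hν : ∀ i ∈ G.shortItems, i ∉ Z → G.w i ≤ ν)
    (hlt : G.stateBound * (∑ i ∈ Z, G.w i + #G.cuts * G.rows * ν +
      #G.cuts * #G.types * (4 * G.stateBound * ν) + 2 * #G.cuts * v) + 4 * #G.cuts * v <
        G.columns) :
    ∃ P : ContainerPacking univ G.w G.h G.columns (G.rows + G.rows / 3),
      #P.containers ≤ #G.labels ∧
        ∀ i ∈ G.obstacles, ∀ j, P.container j = P.container i → j = i := by
  obtain ⟨c, hc, hload⟩ := exists_assignment hv hν hlt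
  have hwpos : ∀ i, 0 < G.w i := fun i => G.isPackingOn.width_pos i (mem_univ i)
  have hhpos : ∀ i, 0 < G.h i := fun i => G.isPackingOn.height_pos i (mem_univ i)
  have hwidth : ∀ i, 0 < (G.box (c i)).width := fun i => (hwpos i).trans_le <|
    (single_le_sum (fun _ _ => Nat.zero_le _)
      (mem_filter.2 ⟨mem_univ i, (rfl : c i = c i)⟩)).trans (hload (c i))
  have hdisj : ∀ i j, c i ≠ c j → (G.box (c i)).Disjoint (G.box (c j)) := fun i j hne =>
    (hc i).used.disjoint (hc j).used hne (hwidth i) (hwidth j)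
  obtain ⟨P, hP, hPc⟩ := ContainerPacking.exists_of_vertical_boxes (box := G.box)
    (S := univ.image c) (c := c) (fun i _ => mem_image_of_mem c (mem_univ i))
    (fun i _ => hwpos i) (fun i _ => hhpos i) (fun k _ => box_vertical k)
    (forall_mem_image.2 fun i _ => box_right_le _ (hwidth i))
    (forall_mem_image.2 fun i _ => (hc i).used.top_le)
    (fun p hp q hq hne => by
      obtain ⟨i, -, rfl⟩ := mem_image.1 (mem_coe.1 hp)
      obtain ⟨j, -, rfl⟩ := mem_image.1 (mem_coe.1 hq)
      exact hdisj i j hne)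
    (fun i _ => (hc i).height_le) (fun k _ => by convert hload k)
  refine ⟨P, ?_, fun i hi j hij => ?_⟩
  · rw [hP]
    refine card_image_le.trans (card_le_card ?_)
    exact image_subset_iff.2 fun i _ => (hc i).mem_labels
  · rw [hPc] at hij
    have hcij : c j = c i := by_contra fun hne =>
      (hdisj j i hne).ne (hwidth j) ((hhpos j).trans_le (hc j).height_le) hij
    have hci := (hc i).eq_item hi
    exact (hcij.trans hci ▸ hc j).1.symm

end SlabbedGrid

/-! ### Choosing the obstacles -/

section Obstacles

section Scales

variable {ι : Type*} {s : Finset ι} {w : ι → ℕ} {W n E D A : ℕ}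

theorem exists_scale (hE : 0 < E) (hD : 0 < D) (hsum : ∑ i ∈ s, w i ≤ n * W) : ∃ k < E,
    E * ∑ i ∈ s with w i * D ^ (2 * k) ≤ W ∧ W < w i * D ^ (2 * k + 2), w i ≤ n * W := by
  obtain ⟨k, hk, hle⟩ := exists_mul_sum_le_of_pairwiseDisjoint (s := s) (K := range E)
    (r := fun k => {i ∈ s | w i * D ^ (2 * k) ≤ W ∧ W < w i * D ^ (2 * k + 2)})
    ⟨0, mem_range.2 hE⟩ (fun k _ => filter_subset _ _)
    (fun k _ l _ hkl => Finset.disjoint_left.2 fun i hi hi' => by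
      have hpow : ∀ k l, k < l → w i * D ^ (2 * k + 2) ≤ w i * D ^ (2 * l) := fun k l hkl =>
        Nat.mul_le_mul_left _ (Nat.pow_le_pow_right hD (by omega))
      obtain ⟨-, hk₁, hk₂⟩ := mem_filter.1 hi
      obtain ⟨-, hl₁, hl₂⟩ := mem_filter.1 hi'
      rcases lt_or_gt_of_ne hkl with h | h
      · exact absurd (hk₂.trans_le ((hpow k l h).trans hl₁)) (lt_irrefl W)
      · exact absurd (hl₂.trans_le ((hpow l k h).trans hk₁)) (lt_irrefl W)) w
  rw [card_range] at hle
  exact ⟨k, mem_range.1 hk, hle.trans hsum⟩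

theorem card_mul_le_of_lt_mul (hs : ∀ i ∈ s, W < w i * A) : #s * W ≤ (∑ i ∈ s, w i) * A := by
  rw [sum_mul, ← smul_eq_mul]
  exact card_nsmul_le_sum s _ W fun i hi => (hs i hi).le

theorem card_wide_mul_le (hW : 0 < W) (hED : E ≤ D) (hsum : ∑ i ∈ s, w i ≤ n * W)
    (hmedium : E * ∑ i ∈ s with w i * A ≤ W ∧ W < w i * (A * D * D), w i ≤ n * W) :
    #{i ∈ s | W < w i * (A * D)} * E ≤ 2 * n * (A * D) := by
  set veryWide : Finset ι := {i ∈ s | W < w i * A}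
  set medium : Finset ι := {i ∈ s | w i * A ≤ W ∧ W < w i * (A * D)}
  have hcard : #{i ∈ s | W < w i * (A * D)} ≤ #veryWide + #medium := by
    refine (card_le_card fun i hi => ?_).trans (card_union_le _ _)
    simp only [veryWide, medium, mem_union, mem_filter] at hi ⊢
    have := lt_or_ge W (w i * A)
    tauto
  have hveryWide : #veryWide ≤ n * A := Nat.le_of_mul_le_mul_right (c := W)
    (calc #veryWide * W ≤ (∑ i ∈ veryWide, w i) * A :=
          card_mul_le_of_lt_mul fun i hi => (mem_filter.1 hi).2
      _ ≤ n * W * A :=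
          Nat.mul_le_mul_right _ ((sum_le_sum_of_subset (filter_subset _ _)).trans hsum)
      _ = n * A * W := by ring) hW
  have hmediumCard : #medium * E ≤ n * (A * D) := Nat.le_of_mul_le_mul_right (c := W)
    (calc #medium * E * W = E * (#medium * W) := by ring
      _ ≤ E * ((∑ i ∈ medium, w i) * (A * D)) :=
          Nat.mul_le_mul_left _ (card_mul_le_of_lt_mul fun i hi => (mem_filter.1 hi).2.2)
      _ = E * (∑ i ∈ medium, w i) * (A * D) := by ring
      _ ≤ n * W * (A * D) := by
          refine Nat.mul_le_mul_right _ (le_trans (Nat.mul_le_mul_left _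
            (sum_le_sum_of_subset fun i hi => ?_)) hmedium)
          obtain ⟨his, hA, hAD⟩ := mem_filter.1 hi
          refine mem_filter.2 ⟨his, hA, hAD.trans_le (Nat.mul_le_mul_left _ ?_)⟩
          rcases D.eq_zero_or_pos with rfl | hD
          · simp
          · exact Nat.le_mul_of_pos_right _ hD
      _ = n * (A * D) * W := by ring) hW
  calc _ ≤ #veryWide * E + #medium * E := by
        rw [← add_mul]
        exact Nat.mul_le_mul_right _ hcard
    _ ≤ n * A * D + n * (A * D) := add_le_add (Nat.mul_le_mul hveryWide hED) hmediumCard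
    _ = 2 * n * (A * D) := by ring

theorem IsPackingOn.sum_width_le {h x y : ι → ℕ} (hP : IsPackingOn s w h x y W n) :
    ∑ i ∈ s, w i ≤ n * W :=
  calc ∑ i ∈ s, w i ≤ ∑ i ∈ s, w i * h i :=
        sum_le_sum fun i hi => Nat.le_mul_of_pos_right _ (hP.height_pos i hi)
    _ ≤ W * n := hP.sum_area_le
    _ = n * W := mul_comm ..

end Scales

section Parameters

variable (n M : ℕ)

/-- The number of scales of widths among which one is chosen for the gap between the widths of
obstacles and the widths of very narrow rectangles. -/
def scaleCount : ℕ := 2 ^ (n * (n + 1)) * (n + 3 * (8 * n + 6)) + 4 * (8 * n + 6) + 1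

/-- The square root of the ratio of consecutive scales of widths. -/
def scaleRatio : ℕ :=
  scaleCount n + M * scaleCount n + (n + n * (n + 1) * (4 * 2 ^ (n * (n + 1)))) + 2

/-- A bound for the number of obstacles when at most `M` of them are prescribed. -/
def obstacleBound : ℕ := scaleRatio n M ^ (2 * scaleCount n) * (1 + 2 * n)

/-- A bound for the number of cuts. -/
def cutBound : ℕ := 2 * (2 * obstacleBound n M + 1)

/-- A bound for the number of containers of a grid with `n` rows of which at most `M` are prescribed
to hold a single rectangle. -/
def containerBound : ℕ :=
  obstacleBound n M + cutBound n M * n + cutBound n M * (n * (n + 1)) +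
    cutBound n M * (n * (n + 1)) * (4 * 2 ^ (n * (n + 1))) + cutBound n M

end Parameters

variable {ι : Type u} [Fintype ι] {w h x y : ι → ℕ} {W n M : ℕ}

/-- `A` is the square root of the chosen scale: the rectangles that are no obstacles have widths of
at most `W / A`, and those outside `Z` of at most `W / (A * scaleRatio n M)`. -/
theorem exists_obstacles (hP : IsPackingOn univ w h x y W n) (hW : 0 < W) {F : Finset ι}
    (hF : #F ≤ M) : ∃ (obstacles Z : Finset ι) (A : ℕ), F ⊆ obstacles ∧ scaleRatio n M ≤ A ∧
      #obstacles ≤ obstacleBound n M ∧ #obstacles * scaleCount n ≤ A * (1 + 2 * n) ∧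
      (∀ i, i ∉ obstacles → w i * A ≤ W) ∧
      (∀ i, i ∉ obstacles → i ∉ Z → w i * (A * scaleRatio n M) ≤ W) ∧
      scaleCount n * ∑ i ∈ Z, w i ≤ n * W := by
  set E := scaleCount n with hE
  set D := scaleRatio n M with hD
  have hE₀ : 0 < E := Nat.succ_pos _
  have hED : E ≤ D ∧ E + M * E ≤ D ∧ 0 < D := by
    rw [hD, scaleRatio, ← hE]
    omega
  obtain ⟨k, hk, hmedium⟩ := exists_scale hE₀ hED.2.2 hP.sum_width_le
  have hA : D ≤ D ^ (2 * k) * D := Nat.le_mul_of_pos_left _ (Nat.pow_pos hED.2.2)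
  rw [pow_succ, pow_succ] at hmedium
  set A := D ^ (2 * k) with hAdef
  set wide : Finset ι := {i | W < w i * (A * D)}
  have hcard : #(F ∪ wide) * E ≤ A * D * (1 + 2 * n) :=
    calc #(F ∪ wide) * E ≤ (M + #wide) * E :=
          Nat.mul_le_mul_right _ ((card_union_le _ _).trans (Nat.add_le_add_right hF _))
      _ = M * E + #wide * E := add_mul ..
      _ ≤ A * D + 2 * n * (A * D) :=
          add_le_add (by omega) (card_wide_mul_le hW hED.1 hP.sum_width_le hmedium)
      _ = A * D * (1 + 2 * n) := by ring
  have hnarrow : ∀ i, i ∉ F ∪ wide → w i * (A * D) ≤ W := fun i hi =>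
    not_lt.1 fun h => hi (mem_union_right _ (mem_filter.2 ⟨mem_univ i, h⟩))
  refine ⟨F ∪ wide, ({i | i ∉ F ∪ wide ∧ W < w i * (A * D * D)} : Finset ι), A * D,
    subset_union_left, hA, ?_, hcard, hnarrow,
    fun i hi hZ => not_lt.1 fun h => hZ (mem_filter.2 ⟨mem_univ i, hi, h⟩), ?_⟩
  · refine (Nat.le_mul_of_pos_right _ hE₀).trans (hcard.trans (Nat.mul_le_mul_right _ ?_))
    rw [hAdef, ← pow_succ]
    exact Nat.pow_le_pow_right hED.2.2 (by omega)
  · refine (Nat.mul_le_mul_left _ (sum_le_sum_of_subset fun i hi => ?_)).trans hmedium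
    obtain ⟨-, hi, hlt⟩ := mem_filter.1 hi
    exact mem_filter.2 ⟨mem_univ i, le_trans (Nat.mul_le_mul_left _
      (Nat.le_mul_of_pos_right _ hED.2.2)) (hnarrow i hi), hlt⟩

theorem IsPackingOn.exists_slabbedGrid (hP : IsPackingOn univ w h x y W n) (obstacles : Finset ι) :
    ∃ G : SlabbedGrid ι, G.rows = n ∧ G.columns = W ∧ G.w = w ∧ G.h = h ∧
      G.obstacles = obstacles ∧ #G.cuts ≤ 2 * (2 * #obstacles + 1) := by
  set sides : Finset ℕ := insert 0 (obstacles.image x ∪ obstacles.image fun i => x i + w i)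
  have hsides : #sides ≤ 2 * #obstacles + 1 := by
    refine (card_insert_le _ _).trans (Nat.add_le_add_right ((card_union_le _ _).trans ?_) 1)
    rw [two_mul]
    exact add_le_add card_image_le card_image_le
  obtain ⟨cuts, hsub, hcard, hlead⟩ := exists_refined_cuts (x := x) (w := w)
    (s := {i | i ∉ obstacles ∧ Spanning n (y i, y i + h i)}) (mem_insert_self 0 _)
    (fun i _ => hP.width_pos i (mem_univ i)) (fun i hi j hj hij => by
      have hd := hP.disjoint (mem_coe.2 (mem_univ i)) (mem_coe.2 (mem_univ j)) hij
      have hi := (mem_filter.1 hi).2.2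
      have hj := (mem_filter.1 hj).2.2
      simp only [Spanning, RectDisjoint] at hi hj hd
      omega)
  refine ⟨⟨n, W, w, h, x, y, hP, obstacles, cuts, hsub (mem_insert_self 0 _),
    fun o ho => hsub (mem_insert_of_mem (mem_union_left _ (mem_image_of_mem _ ho))),
    fun o ho => hsub (mem_insert_of_mem (mem_union_right _ (mem_image.2 ⟨o, ho, rfl⟩))),
    fun i hO hi hc => ?_⟩, rfl, rfl, rfl, rfl, rfl, hcard.trans (Nat.mul_le_mul_left 2 hsides)⟩
  obtain ⟨k, hk, hkc, hkx⟩ := hlead i (mem_filter.2 ⟨mem_univ i, hO, hi⟩) hc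
  obtain ⟨-, hkO, hk⟩ := mem_filter.1 hk
  exact ⟨k, hkO, hk, hkc, hkx⟩

theorem cut_loss_lt {A b z v ν : ℕ} (hW : 0 < W) (hb : b * scaleCount n ≤ (8 * n + 6) * A)
    (hz : scaleCount n * z ≤ n * W) (hv : A * v ≤ W) (hν : A * scaleRatio n M * ν ≤ W) :
    2 ^ (n * (n + 1)) * (z + b * n * ν + b * (n * (n + 1)) * (4 * 2 ^ (n * (n + 1)) * ν) +
      2 * b * v) + 4 * b * v < W := by
  set E := scaleCount n
  set P := 2 ^ (n * (n + 1)) with hP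
  set c := n + n * (n + 1) * (4 * P) with hc
  have hcD : c ≤ scaleRatio n M := by
    rw [scaleRatio, ← hP, ← hc]
    omega
  have hbv : E * (b * v) ≤ (8 * n + 6) * W :=
    calc E * (b * v) = b * E * v := by ring
      _ ≤ (8 * n + 6) * A * v := Nat.mul_le_mul_right _ hb
      _ = (8 * n + 6) * (A * v) := by ring
      _ ≤ (8 * n + 6) * W := Nat.mul_le_mul_left _ hv
  have hbν : E * (b * c * ν) ≤ (8 * n + 6) * W :=
    calc E * (b * c * ν) = b * E * (c * ν) := by ring
      _ ≤ (8 * n + 6) * A * (scaleRatio n M * ν) :=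
          Nat.mul_le_mul hb (Nat.mul_le_mul_right _ hcD)
      _ = (8 * n + 6) * (A * scaleRatio n M * ν) := by ring
      _ ≤ (8 * n + 6) * W := Nat.mul_le_mul_left _ hν
  refine Nat.lt_of_mul_lt_mul_left (a := E) ?_
  calc E * (P * (z + b * n * ν + b * (n * (n + 1)) * (4 * P * ν) + 2 * b * v) + 4 * b * v)
      = P * (E * z + E * (b * c * ν) + 2 * (E * (b * v))) + 4 * (E * (b * v)) := by
        rw [hc]
        ring
    _ ≤ P * (n * W + (8 * n + 6) * W + 2 * ((8 * n + 6) * W)) + 4 * ((8 * n + 6) * W) := by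
        gcongr
    _ = (P * (n + 3 * (8 * n + 6)) + 4 * (8 * n + 6)) * W := by ring
    _ < E * W := Nat.mul_lt_mul_of_pos_right (Nat.lt_succ_self _) hW

theorem IsPackingOn.exists_containerPacking_univ (hP : IsPackingOn univ w h x y W n) (hW : 0 < W)
    {F : Finset ι} (hF : #F ≤ M) :
    ∃ P : ContainerPacking univ w h W (n + n / 3), #P.containers ≤ containerBound n M ∧
      ∀ i ∈ F, ∀ j, P.container j = P.container i → j = i := by
  obtain ⟨obstacles, Z, A, hFO, hDA, hO, hOE, hnarrow, hveryNarrow, hZ⟩ := exists_obstacles hP hW hF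
  obtain ⟨G, rfl, rfl, rfl, rfl, rfl, hcuts⟩ := hP.exists_slabbedGrid obstacles
  have hE : 0 < scaleCount G.rows ∧ scaleCount G.rows ≤ scaleRatio G.rows M := by
    rw [scaleRatio]
    exact ⟨Nat.succ_pos _, by omega⟩
  have hA : 0 < A := by omega
  have hb : #G.cuts * scaleCount G.rows ≤ (8 * G.rows + 6) * A :=
    calc #G.cuts * scaleCount G.rows
        ≤ 2 * (2 * #G.obstacles + 1) * scaleCount G.rows := Nat.mul_le_mul_right _ hcuts
      _ = 4 * (#G.obstacles * scaleCount G.rows) + 2 * scaleCount G.rows := by ring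
      _ ≤ 4 * (A * (1 + 2 * G.rows)) + 2 * A := by omega
      _ = (8 * G.rows + 6) * A := by ring
  obtain ⟨P, hPc, hPO⟩ := G.exists_containerPacking (Z := Z)
    (fun i hi => (Nat.le_div_iff_mul_le hA).2 (hnarrow i hi))
    (fun i hi hiZ => (Nat.le_div_iff_mul_le (Nat.mul_pos hA (hE.1.trans_le hE.2))).2
      (hveryNarrow i (SlabbedGrid.mem_shortItems.1 hi).1 hiZ))
    (by
      rw [SlabbedGrid.card_types]
      exact cut_loss_lt hW hb hZ (Nat.mul_div_le _ _) (Nat.mul_div_le _ _))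
  refine ⟨P, hPc.trans (SlabbedGrid.card_labels_le.trans ?_), fun i hi => hPO i (hFO hi)⟩
  have hN : #G.cuts ≤ cutBound G.rows M := by
    rw [cutBound]
    omega
  rw [SlabbedGrid.card_types, SlabbedGrid.stateBound, containerBound]
  gcongr

theorem exists_containerPacking_of_grid (n M : ℕ) : ∃ K : ℕ,
    ∀ {ι : Type u} {s F : Finset ι} {w h x y : ι → ℕ} {W : ℕ}, IsPackingOn s w h x y W n →
      F ⊆ s → #F ≤ M → ∃ P : ContainerPacking s w h W (n + n / 3), #P.containers ≤ K ∧
        ∀ i ∈ F, ∀ j ∈ s, P.container j = P.container i → j = i := by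
  refine ⟨containerBound n M, fun {ι s F w h x y W} hP hFs hF => ?_⟩
  rcases s.eq_empty_or_nonempty with rfl | ⟨m, hm⟩
  · exact ⟨ContainerPacking.empty rfl, Nat.zero_le _, by simp⟩
  have hW : 0 < W := by
    have := hP.width_pos m hm
    have := hP.right_le m hm
    omega
  have : Nonempty s := ⟨⟨m, hm⟩⟩
  obtain ⟨P, hPc, hPF⟩ := IsPackingOn.exists_containerPacking_univ
    (hP.comap (t := univ) (f := ((↑) : s → ι)) (fun i _ => i.2) Subtype.val_injective.injOn) hW
    (F := F.subtype (· ∈ s)) ((card_subtype _ _).trans_le ((card_filter_le _ _).trans hF))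
  set f : ι → s := Function.invFun (↑)
  have hf : ∀ i ∈ s, (f i : ι) = i := fun i hi => Function.invFun_eq ⟨⟨i, hi⟩, rfl⟩
  have hinj : Set.InjOn f s := fun i hi j hj hij => by rw [← hf i hi, hij, hf j hj]
  refine ⟨P.comap f (fun i _ => mem_univ _) hinj (fun i hi => ?_) (fun i hi => ?_), ?_, ?_⟩
  · simp [hf i hi]
  · simp [hf i hi]
  · exact (card_le_card (image_subset_iff.2 fun i _ => P.container_mem _ (mem_univ _))).trans hPc
  · exact fun i hi j hj hij => hinj hj (hFs hi) (hPF _ (by simpa [hf i (hFs hi)] using hi) _ hij)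

end Obstacles

/-! ### Thin wide rectangles -/

section Rows

variable {ι : Type*} {s : Finset ι} {w h x y : ι → ℕ} {B g : ℕ}

/-- The rectangles meeting the row `[z, z + 1]`. -/
noncomputable def rowItems (s : Finset ι) (h y : ι → ℕ) (z : ℕ) : Finset ι :=
  {i ∈ s | y i ≤ z ∧ z < y i + h i}

theorem IsPackingOn.pairwise_rowItems (hP : IsPackingOn s w h x y B g) (z : ℕ) :
    (rowItems s h y z : Set ι).Pairwise fun i j => x i + w i ≤ x j ∨ x j + w j ≤ x i := by
  intro i hi j hj hij
  simp only [rowItems, mem_coe, mem_filter] at hi hj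
  have := hP.disjoint hi.1 hj.1 hij
  unfold RectDisjoint at this
  omega

theorem IsPackingOn.card_rowItems_le (hP : IsPackingOn s w h x y B g) {e : ℕ}
    (hwide : ∀ i ∈ s, B < e * w i) (z : ℕ) : #(rowItems s h y z) ≤ e :=
  card_le_of_lt_mul_length (fun i hi => hP.right_le i (mem_filter.1 hi).1) (hP.pairwise_rowItems z)
    fun i hi => hwide i (mem_filter.1 hi).1

theorem sum_height_eq_sum_card_rowItems (htop : ∀ i ∈ s, y i + h i ≤ g) :
    ∑ i ∈ s, h i = ∑ z ∈ range g, #(rowItems s h y z) := by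
  have hrows : ∀ i ∈ s, h i = #{z ∈ range g | y i ≤ z ∧ z < y i + h i} := fun i hi => by
    have : {z ∈ range g | y i ≤ z ∧ z < y i + h i} = Ico (y i) (y i + h i) := by
      ext z
      have := htop i hi
      simp only [mem_filter, mem_range, mem_Ico]
      omega
    simp [this]
  rw [sum_congr rfl hrows]
  exact sum_card_bipartiteAbove_eq_sum_card_bipartiteBelow _

theorem rowItems_filter (p : ι → Prop) [DecidablePred p] (z : ℕ) :
    rowItems {i ∈ s | p i} h y z = {i ∈ rowItems s h y z | p i} :=
  filter_comm _ _ _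

end Rows

section Groups

variable {ι : Type*} {s : Finset ι} {h : ι → ℕ} {Q hm : ℕ}

theorem exists_groups (w : ι → ℕ) (hQ : 0 < Q) (hpos : ∀ i ∈ s, 0 < h i) (hhm : ∀ i ∈ s, h i ≤ hm) :
    ∃ gr : ι → ℕ, (∀ i ∈ s, ∀ j ∈ s, gr i < gr j → w j ≤ w i) ∧
      (∀ k, ∑ i ∈ s with gr i = k, h i ≤ Q + hm) ∧
      (∀ j ∈ s, ∀ k < gr j, Q ≤ ∑ i ∈ s with gr i = k, h i + hm) ∧
      ∀ i ∈ s, gr i * Q ≤ ∑ i ∈ s, h i := by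
  obtain ⟨p, hd, hmono, hp⟩ := exists_antitone_stacking s w hpos
  have hgr : ∀ i, p i / Q * Q ≤ p i ∧ p i < p i / Q * Q + Q := fun i =>
    ⟨Nat.div_mul_le_self _ _, Nat.lt_div_mul_add hQ⟩
  have hsub : ∀ T ⊆ s, (T : Set ι).Pairwise fun i j => p i + h i ≤ p j ∨ p j + h j ≤ p i :=
    fun T hT => hd.mono (coe_subset.2 hT)
  have hbelow : ∀ k, ∑ i ∈ s with p i / Q < k, h i ≤ k * Q + hm := fun k => by
    refine sum_length_le (fun i hi => ?_) (hsub _ (filter_subset _ _))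
    rw [mem_filter, Nat.div_lt_iff_lt_mul hQ] at hi
    have := hhm i hi.1
    omega
  refine ⟨fun i => p i / Q, fun i hi j hj hij => hmono i hi j hj ?_, fun k => ?_,
    fun j hj k hk => ?_,
    fun i hi => (hgr i).1.trans ((hp i hi).le.trans (sum_le_sum_of_subset (filter_subset _ _)))⟩
  · by_contra! hle
    exact (Nat.div_le_div_right hle).not_gt hij
  · have hIco : ∀ i ∈ ({i ∈ s | p i / Q = k} : Finset ι),
        Ico (p i) (p i + h i) ⊆ Ico (k * Q) (k * Q + (Q + hm)) := fun i hi => by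
      obtain ⟨his, rfl⟩ := mem_filter.1 hi
      have := hgr i
      have := hhm i his
      exact Ico_subset_Ico (by omega) (by omega)
    simpa using sum_length_le_card hIco (hsub _ (filter_subset _ _))
  · obtain ⟨i, hi, hmin⟩ := exists_min_image {i ∈ s | k < p i / Q} p ⟨j, mem_filter.2 ⟨hj, hk⟩⟩
    rw [mem_filter] at hi
    have hstart : (k + 1) * Q ≤ p i := (Nat.le_div_iff_mul_le hQ).1 hi.2
    have hfull : p i ≤ ∑ j ∈ s with p j / Q < k, h j + ∑ j ∈ s with p j / Q = k, h j := by
      rw [hp i hi.1]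
      refine (sum_le_sum_of_subset fun j' hj' => ?_).trans (sum_union_le _ _ _)
      obtain ⟨hj', hlt⟩ := mem_filter.1 hj'
      have : ¬k < p j' / Q := fun hcon => (hmin j' (mem_filter.2 ⟨hj', hcon⟩)).not_gt hlt
      simp only [mem_union, mem_filter, hj', true_and]
      omega
    have := hbelow k
    rw [add_mul, one_mul] at hstart
    dsimp only
    omega

theorem exists_filling_of_preceding_group {σ : Type*} [Nonempty σ] {S : Finset σ}
    {cap grS : σ → ℕ} {gr : ι → ℕ} (hhm : ∀ i ∈ s, h i ≤ hm) (k : ℕ)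
    (hle : ∑ i ∈ s with gr i = k + 1, h i ≤ Q + hm)
    (hge : ∀ j ∈ s, gr j = k + 1 → Q ≤ ∑ i ∈ s with gr i = k, h i + hm ∧
      ∑ i ∈ s with gr i = k, h i ≤ ∑ p ∈ S with grS p = k, cap p) :
    ∃ lost ⊆ {i ∈ s | gr i = k + 1}, ∃ c : ι → σ,
      (∀ i ∈ {i ∈ s | gr i = k + 1} \ lost, c i ∈ {p ∈ S | grS p = k}) ∧
      (∀ p ∈ {p ∈ S | grS p = k},
        ∑ i ∈ {i ∈ s | gr i = k + 1} \ lost with c i = p, h i ≤ cap p) ∧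
      ∑ i ∈ lost, h i ≤ (2 + #S) * hm := by
  obtain ⟨lost, hlost, c, hc, hload, hfull⟩ := exists_filling {p ∈ S | grS p = k} cap
    {i ∈ s | gr i = k + 1} fun i hi => hhm i (mem_filter.1 hi).1
  refine ⟨lost, hlost, c, hc, hload, ?_⟩
  rcases lost.eq_empty_or_nonempty with hempty | ⟨j, hj⟩
  · simp [hempty]
  · obtain ⟨hjs, hjk⟩ := mem_filter.1 (hlost hj)
    have hfull := hfull.resolve_left (ne_empty_of_mem hj)
    have hslots : #{p ∈ S | grS p = k} * hm ≤ #S * hm :=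
      Nat.mul_le_mul_right _ (card_filter_le _ _)
    have := hge j hjs hjk
    rw [add_mul]
    omega

/-- Every group but the first is moved into the slots vacated by its predecessor, which has almost
the same total height. -/
theorem exists_shifted_filling {σ : Type*} [Nonempty σ] {S : Finset σ} {cap grS : σ → ℕ}
    {gr : ι → ℕ} {G : ℕ} (hG : ∀ i ∈ s, gr i ≤ G) (hhm : ∀ i ∈ s, h i ≤ hm)
    (hle : ∀ k, ∑ i ∈ s with gr i = k, h i ≤ Q + hm)
    (hge : ∀ j ∈ s, ∀ k < gr j, Q ≤ ∑ i ∈ s with gr i = k, h i + hm)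
    (hcap : ∀ k ≤ G, ∑ i ∈ s with gr i = k, h i ≤ ∑ p ∈ S with grS p = k, cap p) :
    ∃ A ⊆ s, ∃ c : ι → σ, (∀ i ∈ A, c i ∈ S ∧ gr i = grS (c i) + 1) ∧
      (∀ p ∈ S, ∑ i ∈ A with c i = p, h i ≤ cap p) ∧
      ∑ i ∈ s \ A, h i ≤ Q + hm + (G + 1) * ((2 + #S) * hm) := by
  choose lost _ c hc hload hlost_sum using fun k =>
    exists_filling_of_preceding_group hhm k (hle (k + 1)) fun j hj hjk =>
      have := hG j hj
      ⟨hge j hj k (by omega), hcap k (by omega)⟩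
  refine ⟨{i ∈ s | 0 < gr i ∧ i ∉ lost (gr i - 1)}, filter_subset _ _, fun i => c (gr i - 1) i,
    fun i hi => ?_, fun p hp => ?_, ?_⟩
  · obtain ⟨his, hgr, hil⟩ := mem_filter.1 hi
    obtain ⟨hcS, _⟩ :=
      mem_filter.1 (hc (gr i - 1) i (mem_sdiff.2 ⟨mem_filter.2 ⟨his, by omega⟩, hil⟩))
    exact ⟨hcS, by dsimp only; omega⟩
  · refine (sum_le_sum_of_subset fun i hi => ?_).trans (hload (grS p) p (mem_filter.2 ⟨hp, rfl⟩))
    simp only [mem_filter] at hi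
    obtain ⟨⟨his, hgr, hil⟩, hip⟩ := hi
    have hi' : i ∈ {j ∈ s | gr j = gr i - 1 + 1} \ lost (gr i - 1) :=
      mem_sdiff.2 ⟨mem_filter.2 ⟨his, by omega⟩, hil⟩
    have hpk : grS p = gr i - 1 := hip ▸ (mem_filter.1 (hc _ i hi')).2
    rw [hpk]
    exact mem_filter.2 ⟨hi', hip⟩
  · have hsub : s \ {i ∈ s | 0 < gr i ∧ i ∉ lost (gr i - 1)} ⊆
        {i ∈ s | gr i = 0} ∪ (range (G + 1)).biUnion lost := fun i hi => by
      simp only [mem_sdiff, mem_filter, mem_union, mem_biUnion, mem_range, not_and, not_not] at hi ⊢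
      rcases (gr i).eq_zero_or_pos with h0 | hpos
      · exact Or.inl ⟨hi.1, h0⟩
      · exact Or.inr ⟨gr i - 1, by have := hG i hi.1; omega, hi.2 hi.1 hpos⟩
    calc ∑ i ∈ s \ {i ∈ s | 0 < gr i ∧ i ∉ lost (gr i - 1)}, h i
        ≤ ∑ i ∈ s with gr i = 0, h i + ∑ k ∈ range (G + 1), ∑ i ∈ lost k, h i :=
          (sum_le_sum_of_subset hsub).trans <|
            (sum_union_le _ _ _).trans (Nat.add_le_add_left (sum_biUnion_le _ _ _) _)
      _ ≤ Q + hm + (G + 1) * ((2 + #S) * hm) := by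
        refine add_le_add (hle 0) ((sum_le_card_nsmul _ _ _ fun k _ => hlost_sum k).trans ?_)
        simp

end Groups

section HorizontalPacking

variable {ι : Type*} {s : Finset ι} {w h x y : ι → ℕ} {B g e : ℕ}

/-- The number of rectangles of each group `k ≤ G` met by the row `[z, z + 1]`. -/
noncomputable def rowProfile (s : Finset ι) (h y gr : ι → ℕ) (G z : ℕ) (k : Fin (G + 1)) : ℕ :=
  #{i ∈ rowItems s h y z | gr i = k}

theorem card_image_rowProfile_le {Z : Finset ℕ} (he : ∀ z ∈ Z, #(rowItems s h y z) ≤ e)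
    (gr : ι → ℕ) (G : ℕ) : #(Z.image (rowProfile s h y gr G)) ≤ (e + 1) ^ (G + 1) := by
  have hsub : Z.image (rowProfile s h y gr G) ⊆ Fintype.piFinset fun _ => range (e + 1) := by
    refine image_subset_iff.2 fun z hz => Fintype.mem_piFinset.2 fun k => ?_
    exact mem_range_succ_iff.2 ((card_filter_le _ _).trans (he z hz))
  exact (card_le_card hsub).trans_eq (by simp)

theorem sum_height_eq_sum_rowProfile (htop : ∀ i ∈ s, y i + h i ≤ g) (gr : ι → ℕ) {G : ℕ}
    (k : Fin (G + 1)) : ∑ i ∈ s with gr i = k, h i =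
      ∑ u ∈ (range g).image (rowProfile s h y gr G),
        #{z ∈ range g | rowProfile s h y gr G z = u} * u k := by
  rw [sum_height_eq_sum_card_rowItems fun i hi => htop i (mem_filter.1 hi).1]
  simp only [rowItems_filter]
  exact sum_comp (fun u : Fin (G + 1) → ℕ => u k) (rowProfile s h y gr G)

/-- The rows of a packing, sorted by their profiles, form few blocks; a box extends over one block
and over the width of one rectangle met by a row of that block. -/
theorem exists_profile_boxes (hP : IsPackingOn s w h x y B g) (hwide : ∀ i ∈ s, B < e * w i)
    (gr : ι → ℕ) (G : ℕ) : ∃ (S : Finset (Σ _ : Fin (G + 1) → ℕ, ι)) (box : _ → Container),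
    #S ≤ (e + 1) ^ (G + 1) * e ∧
    (∀ p ∈ S, p.2 ∈ s ∧ (box p).width = w p.2 ∧ (box p).vertical = false ∧
      (box p).left + (box p).width ≤ B ∧ (box p).bottom + (box p).height ≤ g) ∧
    (S : Set _).Pairwise (fun p q => (box p).Disjoint (box q)) ∧
    ∀ k ≤ G, ∑ i ∈ s with gr i = k, h i ≤ ∑ p ∈ S with gr p.2 = k, (box p).height := by
  set profile := rowProfile s h y gr G
  set U := (range g).image profile
  choose! ρ hρ using show ∀ u ∈ U, ∃ z, profile z = u from
    fun u hu => (mem_image.1 hu).imp fun _ hz => hz.2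
  set ℓ : (Fin (G + 1) → ℕ) → ℕ := fun u => #{z ∈ range g | profile z = u}
  have hℓ : ∑ u ∈ U, ℓ u = g := by
    rw [← card_eq_sum_card_image, card_range]
  obtain ⟨st, hst, htop⟩ := exists_stacking U ℓ fun _ => ()
  simp only [filter_true, hℓ] at htop
  refine ⟨U.sigma fun u => rowItems s h y (ρ u), fun p => ⟨x p.2, st p.1, w p.2, ℓ p.1, false⟩,
    ?_, ?_, ?_, fun k hk => ?_⟩
  · rw [card_sigma]
    calc ∑ u ∈ U, #(rowItems s h y (ρ u)) ≤ #U * e :=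
          sum_le_card_nsmul _ _ _ fun u _ => hP.card_rowItems_le hwide _
      _ ≤ _ := Nat.mul_le_mul_right e <|
          card_image_rowProfile_le (fun z _ => hP.card_rowItems_le hwide z) gr G
  · rintro ⟨u, i⟩ hp
    obtain ⟨hu, hi⟩ := mem_sigma.1 hp
    have his := (mem_filter.1 hi).1
    exact ⟨his, rfl, rfl, hP.right_le i his, htop u hu⟩
  · rintro ⟨u, i⟩ hp ⟨v, j⟩ hq hpq
    obtain ⟨hu, hi⟩ := mem_sigma.1 hp
    obtain ⟨hv, hj⟩ := mem_sigma.1 hq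
    by_cases huv : u = v
    · subst huv
      have := hP.pairwise_rowItems _ hi hj fun hij : i = j => hpq (by rw [hij])
      exact this.imp_right Or.inl
    · exact Or.inr (Or.inr (hst hu hv huv rfl))
  · refine (sum_height_eq_sum_rowProfile hP.top_le gr ⟨k, Nat.lt_succ_of_le hk⟩).trans_le ?_
    rw [sum_filter, sum_sigma]
    refine sum_le_sum fun u hu => ?_
    dsimp only
    rw [← sum_filter, sum_const, smul_eq_mul, mul_comm]
    refine Nat.mul_le_mul_right _ (congrFun (hρ u hu) ⟨k, _⟩).ge

theorem exists_containerPacking_of_wide (hP : IsPackingOn s w h x y B g)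
    (hwide : ∀ i ∈ s, B < e * w i) {Q hm G : ℕ} (hQ : 0 < Q) (hhm : ∀ i ∈ s, h i ≤ hm)
    (hG : ∑ i ∈ s, h i ≤ G * Q) :
    ∃ A ⊆ s, ∑ i ∈ s \ A, h i ≤ Q + hm + (G + 1) * ((2 + (e + 1) ^ (G + 1) * e) * hm) ∧
      ∃ P : ContainerPacking A w h B g, #P.containers ≤ (e + 1) ^ (G + 1) * e := by
  rcases s.eq_empty_or_nonempty with rfl | ⟨i₀, -⟩
  · exact ⟨∅, subset_rfl, by simp, .empty rfl, Nat.zero_le _⟩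
  have : Nonempty (Σ _ : Fin (G + 1) → ℕ, ι) := ⟨⟨0, i₀⟩⟩
  obtain ⟨gr, hgr, hle, hge, hgrQ⟩ := exists_groups w hQ hP.height_pos hhm
  have hgrG : ∀ i ∈ s, gr i ≤ G := fun i hi =>
    Nat.le_of_mul_le_mul_right ((hgrQ i hi).trans hG) hQ
  obtain ⟨S, box, hScard, hS, hd, hcap⟩ := exists_profile_boxes hP hwide gr G
  obtain ⟨A, hA, c, hc, hload, hloss⟩ := exists_shifted_filling hgrG hhm hle hge hcap
  have hwidth : ∀ i ∈ A, w i ≤ (box (c i)).width := fun i hi => by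
    obtain ⟨hcS, hci⟩ := hc i hi
    rw [(hS _ hcS).2.1]
    exact hgr _ (hS _ hcS).1 i (hA hi) (by omega)
  obtain ⟨P, hPbox⟩ := ContainerPacking.exists_of_horizontal_boxes (W := B) (H := g)
    (fun i hi => (hc i hi).1) (fun i hi => hP.width_pos i (hA hi))
    (fun i hi => hP.height_pos i (hA hi)) (fun p hp => (hS p hp).2.2.1)
    (fun p hp => (hS p hp).2.2.2.1) (fun p hp => (hS p hp).2.2.2.2) hd hwidth hload
  exact ⟨A, hA, hloss.trans (by gcongr), P, hPbox ▸ card_image_le.trans hScard⟩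

theorem exists_containerPacking_of_wide_of_thin (e : ℕ) {t : ℕ} (ht : 0 < t) :
    ∃ Θ K : ℕ, ∀ {ι : Type*} {s : Finset ι} {w h x y : ι → ℕ} {B g : ℕ},
      IsPackingOn s w h x y B g → (∀ i ∈ s, B < e * w i) → (∀ i ∈ s, Θ * h i ≤ g) →
      ∃ A ⊆ s, t * ∑ i ∈ s \ A, h i ≤ g ∧
        ∃ P : ContainerPacking A w h B g, #P.containers ≤ K := by
  obtain ⟨G, hG⟩ : ∃ G, G = 4 * t * e := ⟨_, rfl⟩
  obtain ⟨C, hC⟩ : ∃ C, C = (e + 1) ^ (G + 1) * e := ⟨_, rfl⟩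
  obtain ⟨Θ, hΘ⟩ : ∃ Θ, Θ = 2 * t * (1 + (G + 1) * (2 + C)) := ⟨_, rfl⟩
  refine ⟨Θ, C, fun {ι s w h x y B g} hP hwide hthin => ?_⟩
  rcases s.eq_empty_or_nonempty with rfl | ⟨i₀, hi₀⟩
  · exact ⟨∅, subset_rfl, by simp, .empty rfl, Nat.zero_le _⟩
  have htΘ : 2 * t ≤ Θ := hΘ ▸ Nat.le_mul_of_pos_right _ (by omega)
  have hΘg : Θ ≤ g := (Nat.le_mul_of_pos_right _ (hP.height_pos i₀ hi₀)).trans (hthin i₀ hi₀)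
  obtain ⟨Q, hQ⟩ : ∃ Q, Q = g / (2 * t) := ⟨_, rfl⟩
  have hQ0 : 0 < Q := hQ ▸ Nat.div_pos (htΘ.trans hΘg) (by omega)
  have hQg : 2 * t * Q ≤ g := hQ ▸ Nat.mul_div_le _ _
  have hgQ : g ≤ 4 * t * Q := by
    have : g < Q * (2 * t) + 2 * t := hQ ▸ Nat.lt_div_mul_add (by omega)
    nlinarith
  have hhm : ∀ i ∈ s, h i ≤ g / Θ := fun i hi => by
    rw [Nat.le_div_iff_mul_le (by omega), mul_comm]
    exact hthin i hi
  have htot : ∑ i ∈ s, h i ≤ G * Q := by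
    have hB : 0 < B := by
      have := hP.width_pos i₀ hi₀
      have := hP.right_le i₀ hi₀
      omega
    calc ∑ i ∈ s, h i ≤ e * g := hP.sum_height_le_of_lt_mul_width hB le_rfl hwide
      _ ≤ e * (4 * t * Q) := Nat.mul_le_mul_left e hgQ
      _ = G * Q := by rw [hG]; ring
  obtain ⟨A, hA, hloss, hPA⟩ := exists_containerPacking_of_wide hP hwide hQ0 hhm htot
  rw [← hC] at hloss hPA
  refine ⟨A, hA, ?_, hPA⟩
  have : 2 * (t * ∑ i ∈ s \ A, h i) ≤ 2 * g :=
    calc 2 * (t * ∑ i ∈ s \ A, h i)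
        ≤ 2 * (t * (Q + g / Θ + (G + 1) * ((2 + C) * (g / Θ)))) := by gcongr
      _ = 2 * t * Q + Θ * (g / Θ) := by rw [hΘ]; ring
      _ ≤ 2 * g := by have := Nat.mul_div_le g Θ; omega
  omega

end HorizontalPacking

section Slots

variable {ι : Type*} {s : Finset ι} {w h x y : ι → ℕ} {W B g e : ℕ}

theorem IsPackingOn.card_le_of_wide (hP : IsPackingOn s w h x y B g)
    (hwide : ∀ i ∈ s, B < e * w i) : #s ≤ e * g := by
  rcases s.eq_empty_or_nonempty with rfl | ⟨i, hi⟩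
  · simp
  have hB : 0 < B := by
    have := hP.width_pos i hi
    have := hP.right_le i hi
    omega
  calc #s ≤ ∑ i ∈ s, h i := by simpa using card_nsmul_le_sum s h 1 hP.height_pos
    _ ≤ e * g := hP.sum_height_le_of_lt_mul_width hB le_rfl hwide

theorem ContainerPacking.exists_shift_subregion (P : ContainerPacking s w h B g) {C : Container}
    {a b m : ℕ} (hC : C.Holds B 1 a b) (hright : C.left + C.width ≤ W)
    (htop : C.bottom + C.height ≤ m) : ∃ P' : ContainerPacking s w h W (m * g),
      #P'.containers ≤ #P.containers ∧ ∀ D ∈ P'.containers, D.Subregion (C.scale g) := by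
  obtain ⟨hleft, hwidth, hbot, hheight⟩ := hC
  have hbot' := Nat.mul_le_mul_right g hbot
  have hheight' := Nat.mul_le_mul_right g hheight
  have htop' := Nat.mul_le_mul_right g htop
  rw [add_mul, add_mul, one_mul] at hheight'
  refine ⟨(P.shift a (b * g)).mono (by omega) (by rw [add_mul] at htop'; omega), card_image_le,
    forall_mem_image.2 fun D hD => ?_⟩
  have := P.right_le D hD
  have := P.top_le D hD
  simp only [Container.Subregion, Container.shift, Container.scale]
  omega

/-- The part `[left, right]` of row `row` of a grid. -/
structure Slot where
  row : ℕ
  left : ℕ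
  right : ℕ

/-- The width of a slot. -/
def Slot.width (p : Slot) : ℕ :=
  p.right - p.left

theorem filter_union_eq_none {σ : Type*} {G A : Finset ι} {c : ι → σ} :
    {i ∈ G ∪ A | (if i ∈ G then none else some (c i)) = none} = G := by
  ext i
  simp only [mem_filter, mem_union, ite_eq_left_iff, reduceCtorEq, imp_false, not_not]
  tauto

theorem filter_union_eq_some {σ : Type*} {G A : Finset ι} {c : ι → σ} (hGA : Disjoint G A) (p : σ) :
    {i ∈ G ∪ A | (if i ∈ G then none else some (c i)) = some p} = {i ∈ A | c i = p} := by
  ext i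
  have : i ∈ G → i ∉ A := fun hi => Finset.disjoint_left.1 hGA hi
  by_cases hi : i ∈ G <;> simp_all

/-- The rectangles `p ∈ S` of height one are placeholders for packings with `g` rows. -/
theorem ContainerPacking.exists_refine {σ : Type*} {G A : Finset ι} {S : Finset σ} {v : σ → ℕ}
    {k : ι → ℕ} {m Kh : ℕ} (P : ContainerPacking (G.disjSum S) (Sum.elim w v) (Sum.elim k 1) W m)
    (hiso : ∀ p ∈ S, ∀ q ∈ G.disjSum S, P.container q = P.container (.inr p) → q = .inr p)
    (hg : 0 < g) (hw : ∀ i ∈ G ∪ A, 0 < w i) (hh : ∀ i ∈ G ∪ A, 0 < h i)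
    (hk : ∀ i ∈ G, h i ≤ k i * g) (hGA : Disjoint G A) (c : ι → σ) (hc : ∀ i ∈ A, c i ∈ S)
    (hS : ∀ p ∈ S, ∃ P : ContainerPacking {i ∈ A | c i = p} w h (v p) g, #P.containers ≤ Kh) :
    ∃ P' : ContainerPacking (G ∪ A) w h W (m * g), #P'.containers ≤ #P.containers + #S * Kh := by
  set d : ι → Option σ := fun i => if i ∈ G then none else some (c i) with hd
  have hP : ∀ q ∈ G.disjSum S, P.container q ∈ P.containers := P.container_mem
  simp only [Sum.forall, inl_mem_disjSum, inr_mem_disjSum] at hP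
  set Q : Option σ → Container → Prop := fun o D => match o with
    | none => ∃ i ∈ G, (P.container (.inl i)).scale g = D
    | some p => D.Subregion ((P.container (.inr p)).scale g)
  have hQ : ∀ p ∈ S, ∀ C D, Q none C → Q (some p) D → C.Disjoint D := by
    rintro p hp _ D ⟨i, hi, rfl⟩ hD
    exact (P.disjoint (hP.1 i hi) (hP.2 p hp) fun h =>
      Sum.inl_ne_inr (hiso p hp _ (inl_mem_disjSum.2 hi) h)).scale.mono (.refl _) hD
  have hsum : ∑ o ∈ insertNone S, (o.elim #P.containers fun _ => Kh) = #P.containers + #S * Kh := by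
    simp [insertNone]
  rw [← hsum]
  refine exists_glue (c := d) (Q := Q) (fun i hi => ?_) hw hh ?_ ?_
  · by_cases hiG : i ∈ G
    · simp [hd, hiG]
    · simpa [hd, hiG] using hc i ((mem_union.1 hi).resolve_left hiG)
  · rintro (_ | p) hp (_ | q) hq hpq C D hC hD
    · exact absurd rfl hpq
    · exact hQ q (some_mem_insertNone.1 hq) C D hC hD
    · exact (hQ p (some_mem_insertNone.1 hp) D C hD hC).symm
    · rw [some_mem_insertNone] at hp hq
      exact (P.disjoint (hP.2 p hp) (hP.2 q hq) fun h =>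
        hpq (congrArg some (Sum.inr_injective (hiso q hq _ (inr_mem_disjSum.2 hp) h)))).scale.mono
          hC hD
  · rintro (_ | p) hp
    · rw [filter_union_eq_none]
      refine ⟨(P.comap (t := G) (w' := w) (h' := k) Sum.inl (fun i hi => inl_mem_disjSum.2 hi)
        Sum.inl_injective.injOn (fun _ _ => le_rfl) fun _ _ => le_rfl).scale hg hk, ?_, ?_⟩
      · exact card_image_le.trans (card_le_card (image_subset_iff.2 hP.1))
      · exact forall_mem_image.2 (forall_mem_image.2 fun i hi => ⟨i, hi, rfl⟩)
    · rw [some_mem_insertNone] at hp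
      obtain ⟨P₁, hP₁⟩ := hS p hp
      obtain ⟨P₂, hcard, hsub⟩ := P₁.exists_shift_subregion
        (P.holds _ (inr_mem_disjSum.2 hp)) (P.right_le _ (hP.2 p hp)) (P.top_le _ (hP.2 p hp))
      rw [filter_union_eq_some hGA]
      exact ⟨P₂, hcard.trans hP₁, hsub⟩

theorem exists_subset_of_forall_fiber {σ : Type*} {T : Finset ι} {S : Finset σ} {c : ι → σ} {t : ℕ}
    (hc : ∀ i ∈ T, c i ∈ S) {Q : σ → Finset ι → Prop} (hQ : ∀ p ∈ S, ∃ A ⊆ {i ∈ T | c i = p},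
      t * ∑ i ∈ {i ∈ T | c i = p} \ A, h i ≤ g ∧ Q p A) :
    ∃ A ⊆ T, t * ∑ i ∈ T \ A, h i ≤ #S * g ∧ ∀ p ∈ S, Q p {i ∈ A | c i = p} := by
  choose! A hAT hloss hA using hQ
  refine ⟨{i ∈ T | i ∈ A (c i)}, filter_subset _ _, ?_, fun p hp => ?_⟩
  · have hsub : T \ {i ∈ T | i ∈ A (c i)} ⊆
        S.biUnion fun p => {i ∈ T | c i = p} \ A p := fun i hi => by
      simp only [mem_sdiff, mem_filter, not_and] at hi
      exact mem_biUnion.2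
        ⟨c i, hc i hi.1, mem_sdiff.2 ⟨mem_filter.2 ⟨hi.1, rfl⟩, hi.2 hi.1⟩⟩
    calc t * ∑ i ∈ T \ {i ∈ T | i ∈ A (c i)}, h i
        ≤ t * ∑ p ∈ S, ∑ i ∈ {i ∈ T | c i = p} \ A p, h i :=
          Nat.mul_le_mul_left _ ((sum_le_sum_of_subset hsub).trans (sum_biUnion_le _ _ _))
      _ = ∑ p ∈ S, t * ∑ i ∈ {i ∈ T | c i = p} \ A p, h i := mul_sum ..
      _ ≤ #S * g := sum_le_card_nsmul _ _ _ hloss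
  · have : ({i ∈ {i ∈ T | i ∈ A (c i)} | c i = p} : Finset ι) = A p := by
      ext i
      have := @hAT p hp i
      simp only [mem_filter] at this ⊢
      exact ⟨fun hi => hi.2 ▸ hi.1.2, fun hi => ⟨⟨(this hi).1, (this hi).2.symm ▸ hi⟩, (this hi).2⟩⟩
    exact this ▸ hA p hp

theorem exists_containerPacking_of_slots (e N : ℕ) {t : ℕ} (ht : 0 < t) : ∃ Θ K : ℕ,
    ∀ {ι : Type u} {G T : Finset ι} {w h x y k a b : ι → ℕ} {slot : ι → Slot}
        {W g n : ℕ},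
      n ≤ N → 0 < g → Disjoint G T →
      IsPackingOn (G.disjSum (T.image slot)) (Sum.elim w Slot.width) (Sum.elim k 1)
        (Sum.elim a Slot.left) (Sum.elim b Slot.row) W n →
      (∀ i ∈ G, 0 < h i ∧ h i ≤ k i * g) →
      (∀ p ∈ T.image slot, IsPackingOn {i ∈ T | slot i = p} w h x y p.width g) →
      (∀ i ∈ T, W < e * w i) → (∀ i ∈ T, Θ * h i ≤ g) →
      ∃ A ⊆ T, t * ∑ i ∈ T \ A, h i ≤ n * e * g ∧
        ∃ P : ContainerPacking (G ∪ A) w h W ((n + n / 3) * g), #P.containers ≤ K := by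
  obtain ⟨Θ, Kh, hthin⟩ := exists_containerPacking_of_wide_of_thin e ht
  choose Kg hgrid using fun n => exists_containerPacking_of_grid.{u} n (e * N)
  refine ⟨Θ, ∑ n ∈ range (N + 1), Kg n + e * N * Kh, ?_⟩
  intro ι G T w h x y k a b slot W g n hn hg hGT hP hG hT hwide hΘ
  have hslot : ∀ i ∈ T, slot i ∈ T.image slot := fun i hi => mem_image_of_mem _ hi
  have hPS : IsPackingOn (T.image slot) Slot.width 1 Slot.left Slot.row W n :=
    hP.comap (fun _ hp => inr_mem_disjSum.2 hp) Sum.inr_injective.injOn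
  have hitem : ∀ i ∈ T, w i ≤ (slot i).width := fun i hi =>
    (Nat.le_add_left _ _).trans ((hT _ (hslot i hi)).right_le i (mem_filter.2 ⟨hi, rfl⟩))
  have hcard : #(T.image slot) ≤ e * n := hPS.card_le_of_wide <| forall_mem_image.2 fun i hi =>
    (hwide i hi).trans_le (Nat.mul_le_mul_left _ (hitem i hi))
  have hcardN : #(T.image slot) ≤ e * N := hcard.trans (Nat.mul_le_mul_left _ hn)
  obtain ⟨P, hPcard, hiso⟩ := hgrid n hP (F := (T.image slot).map .inr)
    (map_subset_iff_subset_preimage.2 fun p hp => by simpa using hp)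
    ((card_map _).trans_le hcardN)
  obtain ⟨A, hAT, hloss, hA⟩ := exists_subset_of_forall_fiber hslot fun p hp =>
    hthin (hT p hp) (fun i hi => ((Nat.le_add_left _ _).trans (hPS.right_le p hp)).trans_lt
      (hwide i (mem_filter.1 hi).1)) fun i hi => hΘ i (mem_filter.1 hi).1
  refine ⟨A, hAT, hloss.trans ?_, ?_⟩
  · rw [mul_comm n]
    exact Nat.mul_le_mul_right _ hcard
  have hpos : ∀ i ∈ T, 0 < w i ∧ 0 < h i := fun i hi =>
    have hi' : i ∈ {j ∈ T | slot j = slot i} := mem_filter.2 ⟨hi, rfl⟩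
    ⟨(hT _ (hslot i hi)).width_pos i hi', (hT _ (hslot i hi)).height_pos i hi'⟩
  have hGpos : ∀ i ∈ G, 0 < w i := fun i hi => hP.width_pos _ (inl_mem_disjSum.2 hi)
  obtain ⟨P', hP'⟩ := P.exists_refine (fun p hp => hiso _ (mem_map_of_mem _ hp)) hg
    (fun i hi => (mem_union.1 hi).elim (hGpos i) fun hi => (hpos i (hAT hi)).1)
    (fun i hi => (mem_union.1 hi).elim (fun hi => (hG i hi).1) fun hi => (hpos i (hAT hi)).2)
    (fun i hi => (hG i hi).2) (hGT.mono_right hAT) slot (fun i hi => hslot i (hAT hi)) hA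
  refine ⟨P', hP'.trans (add_le_add (hPcard.trans ?_) (Nat.mul_le_mul_right _ hcardN))⟩
  exact single_le_sum (fun _ _ => Nat.zero_le _) (mem_range.2 (by omega))

end Slots

section SlotGeometry

variable {ι : Type*} {s : Finset ι} {w h x y : ι → ℕ} {W B g e : ℕ}

/-- The last right end of a rectangle of `J` that lies to the left of `z`. -/
def leftWall (J : Finset ι) (x w : ι → ℕ) (z : ℕ) : ℕ :=
  {j ∈ J | x j + w j ≤ z}.sup fun j => x j + w j

/-- The first left end of a rectangle of `J` that lies to the right of `z`, or `W` if there is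
none. Measuring positions from the right end of the strip turns this infimum into a supremum. -/
def rightWall (J : Finset ι) (x : ι → ℕ) (W z : ℕ) : ℕ :=
  W - {j ∈ J | z ≤ x j}.sup fun j => W - x j

section Walls

variable {J : Finset ι} {j : ι} {z : ℕ}

theorem leftWall_le : leftWall J x w z ≤ z :=
  Finset.sup_le fun _ hj => (mem_filter.1 hj).2

theorem le_leftWall (hj : j ∈ J) (hz : x j + w j ≤ z) : x j + w j ≤ leftWall J x w z :=
  le_sup (f := fun j => x j + w j) (mem_filter.2 ⟨hj, hz⟩)

theorem le_rightWall (hz : z ≤ W) : z ≤ rightWall J x W z := by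
  have : ({j ∈ J | z ≤ x j}.sup fun j => W - x j) ≤ W - z :=
    Finset.sup_le fun j hj => Nat.sub_le_sub_left (mem_filter.1 hj).2 _
  rw [rightWall]
  omega

theorem rightWall_le (hj : j ∈ J) (hjW : x j ≤ W) (hz : z ≤ x j) : rightWall J x W z ≤ x j := by
  have : W - x j ≤ {j ∈ J | z ≤ x j}.sup fun j => W - x j :=
    le_sup (f := fun j => W - x j) (mem_filter.2 ⟨hj, hz⟩)
  rw [rightWall]
  omega

theorem walls_eq_or_rightWall_le_leftWall {i : ι} (hJ : ∀ m ∈ J, 0 < w m ∧ x m + w m ≤ W)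
    (hi : ∀ m ∈ J, x m + w m ≤ x i ∨ x i + w i ≤ x m)
    (hj : ∀ m ∈ J, x m + w m ≤ x j ∨ x j + w j ≤ x m) (hij : x i ≤ x j) :
    leftWall J x w (x i) = leftWall J x w (x j) ∧
        rightWall J x W (x i + w i) = rightWall J x W (x j + w j) ∨
      rightWall J x W (x i + w i) ≤ leftWall J x w (x j) := by
  by_cases hsep : ∃ m ∈ J, x i + w i ≤ x m ∧ x m + w m ≤ x j
  · obtain ⟨m, hm, him, hmj⟩ := hsep
    have := hJ m hm
    have := rightWall_le (W := W) hm (by omega) him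
    have := le_leftWall hm hmj
    omega
  simp only [not_exists, not_and] at hsep
  have hside : ∀ m ∈ J, (x m + w m ≤ x i ↔ x m + w m ≤ x j) ∧
      (x i + w i ≤ x m ↔ x j + w j ≤ x m) := fun m hm => by
    have := hsep m hm
    have := hi m hm
    have := hj m hm
    have := hJ m hm
    omega
  left
  rw [leftWall, leftWall, rightWall, rightWall, filter_congr fun m hm => (hside m hm).1,
    filter_congr fun m hm => (hside m hm).2]
  exact ⟨rfl, rfl⟩

end Walls

theorem exists_walls {T : Finset ι} {J : ℕ → Finset ι} {r : ι → ℕ}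
    (hJ : ∀ r, ∀ j ∈ J r, 0 < w j ∧ x j + w j ≤ W) (hT : ∀ i ∈ T, x i + w i ≤ W)
    (hd : ∀ i ∈ T, ∀ j ∈ J (r i), x j + w j ≤ x i ∨ x i + w i ≤ x j) :
    ∃ l v : ι → ℕ, (∀ i ∈ T, l i ≤ x i ∧ x i + w i ≤ v i ∧ v i ≤ W) ∧
      (∀ i ∈ T, ∀ j ∈ T, r i = r j → l i = l j ∧ v i = v j ∨ v i ≤ l j ∨ v j ≤ l i) ∧
      ∀ i ∈ T, ∀ j ∈ J (r i), x j + w j ≤ l i ∨ v i ≤ x j := by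
  refine ⟨fun i => leftWall (J (r i)) x w (x i), fun i => rightWall (J (r i)) x W (x i + w i),
    fun i hi => ⟨leftWall_le, le_rightWall (hT i hi), Nat.sub_le _ _⟩,
    fun i hi j hj hr => ?_, fun i hi j hj => ?_⟩
  · have hdi := hd i hi
    beta_reduce
    rw [hr] at hdi ⊢
    rcases le_total (x i) (x j) with hx | hx
    · exact (walls_eq_or_rightWall_le_leftWall (hJ _) hdi (hd j hj) hx).imp_right Or.inl
    · exact (walls_eq_or_rightWall_le_leftWall (hJ _) (hd j hj) hdi hx).imp
        (And.imp Eq.symm Eq.symm) Or.inr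
  · have := hJ _ j hj
    exact (hd i hi j hj).imp (le_leftWall hj) (rightWall_le hj (by omega))

theorem IsPackingOn.disjSum {κ : Type*} {t : Finset κ} {w' h' x' y' : κ → ℕ}
    (hs : IsPackingOn s w h x y W g) (ht : IsPackingOn t w' h' x' y' W g)
    (hst : ∀ i ∈ s, ∀ j ∈ t,
      RectDisjoint (x i) (y i) (w i) (h i) (x' j) (y' j) (w' j) (h' j)) :
    IsPackingOn (s.disjSum t) (Sum.elim w w') (Sum.elim h h') (Sum.elim x x') (Sum.elim y y')
      W g := by
  refine ⟨?_, ?_, ?_, ?_, ?_⟩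
  · simpa using ⟨hs.width_pos, ht.width_pos⟩
  · simpa using ⟨hs.height_pos, ht.height_pos⟩
  · simpa using ⟨hs.right_le, ht.right_le⟩
  · simpa using ⟨hs.top_le, ht.top_le⟩
  rintro (i | i) hi (j | j) hj hij <;>
    simp only [mem_coe, inl_mem_disjSum, inr_mem_disjSum] at hi hj
  · exact hs.disjoint hi hj fun h => hij (congrArg _ h)
  · exact hst i hi j hj
  · have := hst j hj i hi
    simp only [RectDisjoint, Sum.elim_inl, Sum.elim_inr] at this ⊢
    omega
  · exact ht.disjoint hi hj fun h => hij (congrArg _ h)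

theorem isPackingOn_image_slot {T : Finset ι} {r l v : ι → ℕ} {n : ℕ}
    (hl : ∀ i ∈ T, l i < v i ∧ v i ≤ W) (hr : ∀ i ∈ T, r i < n)
    (hd : ∀ i ∈ T, ∀ j ∈ T, r i = r j → l i = l j ∧ v i = v j ∨ v i ≤ l j ∨ v j ≤ l i) :
    IsPackingOn (T.image fun i => (⟨r i, l i, v i⟩ : Slot)) Slot.width 1 Slot.left Slot.row
      W n := by
  refine ⟨?_, fun _ _ => one_pos, ?_, forall_mem_image.2 hr, ?_⟩
  iterate 2
    refine forall_mem_image.2 fun i hi => ?_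
    have := hl i hi
    simp only [Slot.width]
    omega
  simp only [Set.Pairwise, coe_image, Set.forall_mem_image]
  intro i hi j hj hij
  have := hd i hi j hj
  have : r i = r j → ¬ (l i = l j ∧ v i = v j) := fun hr h => hij (by rw [hr, h.1, h.2])
  have := hl i hi
  have := hl j hj
  simp only [RectDisjoint, Slot.width, Pi.one_apply]
  omega

theorem exists_slots {G T : Finset ι} {k a r : ι → ℕ} {n : ℕ} (hG : IsPackingOn G w k x a W n)
    (hT : ∀ z, IsPackingOn {i ∈ T | r i = z} w h x y W g) (hr : ∀ i ∈ T, r i < n)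
    (hd : ∀ i ∈ T, ∀ j ∈ rowItems G k a (r i), x j + w j ≤ x i ∨ x i + w i ≤ x j) :
    ∃ slot : ι → Slot, IsPackingOn (G.disjSum (T.image slot)) (Sum.elim w Slot.width)
        (Sum.elim k 1) (Sum.elim x Slot.left) (Sum.elim a Slot.row) W n ∧
      ∀ p ∈ T.image slot,
        IsPackingOn {i ∈ T | slot i = p} w h (fun i => x i - (slot i).left) y p.width g := by
  have hrow : ∀ i ∈ T, i ∈ {j ∈ T | r j = r i} := fun i hi => mem_filter.2 ⟨hi, rfl⟩
  have hwT : ∀ i ∈ T, 0 < w i := fun i hi => (hT _).width_pos i (hrow i hi)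
  obtain ⟨l, v, hlv, hsame, hwall⟩ := exists_walls (J := fun z => rowItems G k a z)
    (fun z j hj => ⟨hG.width_pos j (mem_filter.1 hj).1, hG.right_le j (mem_filter.1 hj).1⟩)
    (fun i hi => (hT _).right_le i (hrow i hi)) hd
  have hl : ∀ i ∈ T, l i < v i ∧ v i ≤ W := fun i hi => by
    have := hlv i hi
    have := hwT i hi
    omega
  refine ⟨_, hG.disjSum (isPackingOn_image_slot hl hr hsame) fun i hi => forall_mem_image.2
    fun j hj => ?_, forall_mem_image.2 fun p _ => ⟨?_, ?_, ?_, ?_, ?_⟩⟩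
  · have := hl j hj
    have : a i ≤ r j ∧ r j < a i + k i → _ := fun hij => hwall j hj i (mem_filter.2 ⟨hi, hij⟩)
    simp only [RectDisjoint, Slot.width, Pi.one_apply]
    omega
  · exact fun i hi => hwT i (mem_filter.1 hi).1
  · exact fun i hi => (hT _).height_pos i (hrow i (mem_filter.1 hi).1)
  · intro i hi
    obtain ⟨hi, hip⟩ := mem_filter.1 hi
    have := hlv i hi
    rw [← hip, Slot.width]
    dsimp only
    omega
  · exact fun i hi => (hT _).top_le i (hrow i (mem_filter.1 hi).1)
  · intro i hi j hj hij
    obtain ⟨hi, hip⟩ := mem_filter.1 hi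
    obtain ⟨hj, hjp⟩ := mem_filter.1 hj
    have hslot := hip.trans hjp.symm
    simp only [Slot.mk.injEq] at hslot
    have hdisj := (hT (r j)).disjoint (mem_filter.2 ⟨hi, hslot.1⟩) (hrow j hj) hij
    have := hlv i hi
    have := hlv j hj
    unfold RectDisjoint at hdisj ⊢
    dsimp only
    omega

end SlotGeometry

/-! ### Rounding to a grid -/

section Rounding

variable {ι : Type*} {s : Finset ι} {w h x y : ι → ℕ} {W H g e n β : ℕ}

theorem le_ceilDiv_mul {m : ℕ} (hm : 0 < m) (z : ℕ) : z ≤ z ⌈/⌉ m * m := by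
  simpa [mul_comm] using le_smul_ceilDiv (b := z) hm

theorem ceilDiv_mul_lt {m : ℕ} (hm : 0 < m) (z : ℕ) : z ⌈/⌉ m * m < z + m := by
  have := Nat.div_mul_le_self (z + m - 1) m
  rw [Nat.ceilDiv_eq_add_pred_div]
  omega

-- The stretch by `(β + 1) / β` leaves room for rounding up both the bottom and the height.
theorem ceilDiv_add_ceilDiv_mul_le {y h : ℕ} (hg : 0 < g) (hβ : 0 < β) (hh : 2 * (β * g) ≤ h) :
    (((β + 1) * y) ⌈/⌉ (β * g) + h ⌈/⌉ g) * (β * g) ≤ (β + 1) * (y + h) := by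
  have := ceilDiv_mul_lt (Nat.mul_pos hβ hg) ((β + 1) * y)
  have := Nat.mul_le_mul_left β (ceilDiv_mul_lt hg h).le
  linarith

theorem IsPackingOn.round (hP : IsPackingOn s w h x y W H) (hg : 0 < g) (hβ : 0 < β)
    (hn : (β + 1) * H ≤ n * (β * g)) (htall : ∀ i ∈ s, 2 * (β * g) ≤ h i) :
    IsPackingOn s w (fun i => h i ⌈/⌉ g) x (fun i => ((β + 1) * y i) ⌈/⌉ (β * g)) W n := by
  have hm : 0 < β * g := Nat.mul_pos hβ hg
  have htop : ∀ i ∈ s, (((β + 1) * y i) ⌈/⌉ (β * g) + h i ⌈/⌉ g) * (β * g) ≤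
      (β + 1) * (y i + h i) := fun i hi => ceilDiv_add_ceilDiv_mul_le hg hβ (htall i hi)
  refine ⟨hP.width_pos, fun i hi => ?_, hP.right_le, fun i hi => ?_, fun i hi j hj hij => ?_⟩
  · refine Nat.pos_of_ne_zero fun h0 => (hP.height_pos i hi).not_ge ?_
    simpa [h0] using le_ceilDiv_mul hg (h i)
  · exact Nat.le_of_mul_le_mul_right
      ((htop i hi).trans ((Nat.mul_le_mul_left _ (hP.top_le i hi)).trans hn)) hm
  · have hstep : ∀ i ∈ s, ∀ j, y i + h i ≤ y j → ((β + 1) * y i) ⌈/⌉ (β * g) + h i ⌈/⌉ g ≤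
        ((β + 1) * y j) ⌈/⌉ (β * g) := fun i hi j hij =>
      Nat.le_of_mul_le_mul_right ((htop i hi).trans
        ((Nat.mul_le_mul_left _ hij).trans (le_ceilDiv_mul hm _))) hm
    exact (hP.disjoint hi hj hij).imp_right (Or.imp_right (Or.imp (hstep i hi j) (hstep j hj i)))

theorem IsPackingOn.fiber_row (hP : IsPackingOn s w h x y W H) {r : ι → ℕ}
    (hr : ∀ i ∈ s, r i * (β * g) ≤ (β + 1) * y i)
    (hr' : ∀ i ∈ s, (β + 1) * (y i + h i) ≤ (r i + 1) * (β * g)) (z : ℕ) :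
    IsPackingOn {i ∈ s | r i = z} w h x (fun i => y i - (r i * (β * g)) ⌈/⌉ (β + 1)) W g := by
  have hP' := hP.mono (filter_subset (fun i => r i = z) s)
  have hbase : ∀ i ∈ s, (r i * (β * g)) ⌈/⌉ (β + 1) ≤ y i := fun i hi =>
    (ceilDiv_le_iff_le_mul β.succ_pos).2 (hr i hi)
  refine ⟨hP'.width_pos, hP'.height_pos, hP'.right_le, fun i hi => ?_, fun i hi j hj hij => ?_⟩
  · have hi := (mem_filter.1 hi).1
    have := hr' i hi
    have := le_ceilDiv_mul β.succ_pos (r i * (β * g))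
    have := hbase i hi
    have : (β + 1) * (y i + h i) ≤ (β + 1) * ((r i * (β * g)) ⌈/⌉ (β + 1) + g) := by linarith
    have := Nat.le_of_mul_le_mul_left this β.succ_pos
    omega
  · have hdisj := hP'.disjoint hi hj hij
    obtain ⟨hi, hiz⟩ := mem_filter.1 hi
    obtain ⟨hj, hjz⟩ := mem_filter.1 hj
    have := hbase i hi
    have := hbase j hj
    unfold RectDisjoint at hdisj ⊢
    simp only [hiz, hjz] at *
    omega

theorem IsPackingOn.card_crossing_le {m c : ℕ} (hP : IsPackingOn s w h x y W H) (hn : c * H ≤ n * m)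
    (hwide : ∀ i ∈ s, W < e * w i)
    (hcross : ∀ i ∈ s, (c * y i / m + 1) * m < c * (y i + h i)) : #s ≤ e * n := by
  have hlt : ∀ i ∈ s, (c * y i / m + 1) * m < n * m := fun i hi =>
    (hcross i hi).trans_le ((Nat.mul_le_mul_left c (hP.top_le i hi)).trans hn)
  have hm : ∀ i ∈ s, 0 < m := fun i hi => Nat.pos_of_mul_pos_left ((hlt i hi).pos)
  simpa using card_le_mul_card_image_of_maps_to (t := range n) (f := fun i => c * y i / m)
    (fun i hi => mem_range.2 (Nat.lt_of_succ_lt (Nat.lt_of_mul_lt_mul_right (hlt i hi)))) e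
    fun z _ =>
      card_le_of_lt_mul_length (fun i hi => hP.right_le i (mem_filter.1 hi).1)
        (fun i hi j hj hij => by
          obtain ⟨hi, hiz⟩ := mem_filter.1 hi
          obtain ⟨hj, hjz⟩ := mem_filter.1 hj
          have hi' := hcross i hi
          have hj' := hcross j hj
          have hi'' := Nat.lt_div_mul_add (a := c * y i) (hm i hi)
          have hj'' := Nat.lt_div_mul_add (a := c * y j) (hm i hi)
          rw [hiz, add_one_mul] at hi'
          rw [hjz, add_one_mul] at hj'
          rw [hiz] at hi''
          rw [hjz] at hj''
          refine (or_assoc.2 (hP.disjoint hi hj hij)).resolve_right ?_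
          rintro (h | h) <;> have := Nat.mul_le_mul_left c h <;> omega)
        fun i hi => hwide i (mem_filter.1 hi).1

theorem IsPackingOn.separated_of_mem_rowItems_round (hP : IsPackingOn s w h x y W H) (hg : 0 < g)
    (hβ : 0 < β) {G : Finset ι} (hGs : G ⊆ s) {i j : ι} {r : ℕ} (hi : i ∈ s) (hij : i ≠ j)
    (hj : 2 * (β * g) ≤ h j) (hr : r * (β * g) ≤ (β + 1) * y i)
    (hr' : (β + 1) * (y i + h i) ≤ (r + 1) * (β * g))
    (hrow : j ∈ rowItems G (fun i => h i ⌈/⌉ g) (fun i => ((β + 1) * y i) ⌈/⌉ (β * g)) r) :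
    x j + w j ≤ x i ∨ x i + w i ≤ x j := by
  obtain ⟨hjG, hbot, htop⟩ := mem_filter.1 hrow
  have hlow : y j ≤ y i := Nat.le_of_mul_le_mul_left ((le_ceilDiv_mul (Nat.mul_pos hβ hg) _).trans
    ((Nat.mul_le_mul_right _ hbot).trans hr)) β.succ_pos
  have hhigh : y i + h i ≤ y j + h j := Nat.le_of_mul_le_mul_left (hr'.trans
    ((Nat.mul_le_mul_right _ htop).trans (ceilDiv_add_ceilDiv_mul_le hg hβ hj))) β.succ_pos
  have := hP.disjoint hi (hGs hjG) hij
  have := hP.height_pos i hi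
  unfold RectDisjoint at *
  omega

theorem mul_sum_sdiff_le {A T T' : Finset ι} {t a c : ℕ} (hT' : t * ∑ i ∈ T' \ A, h i ≤ a)
    (hc : #(T \ T') ≤ c) (hg : ∀ i ∈ T \ T', t * h i ≤ g) :
    t * ∑ i ∈ T \ A, h i ≤ a + c * g :=
  calc t * ∑ i ∈ T \ A, h i ≤ t * (∑ i ∈ T' \ A, h i + ∑ i ∈ T \ T', h i) := by
        refine Nat.mul_le_mul_left _ ((sum_le_sum_of_subset fun i hi => ?_).trans
          (sum_union_le _ _ _))
        simp only [mem_union, mem_sdiff] at hi ⊢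
        tauto
    _ = t * ∑ i ∈ T' \ A, h i + ∑ i ∈ T \ T', t * h i := by rw [mul_add, mul_sum (T \ T')]
    _ ≤ a + c * g :=
        add_le_add hT' ((sum_le_card_nsmul _ _ g hg).trans (Nat.mul_le_mul_right _ hc))

theorem exists_containerPacking_of_rows (e N : ℕ) {t β : ℕ} (ht : 0 < t) (hβ : 0 < β) :
    ∃ Θ K : ℕ, ∀ {ι : Type u} {G T : Finset ι} {w h x y : ι → ℕ} {W H g n : ℕ}, n ≤ N → 0 < g →
      (β + 1) * H ≤ n * (β * g) → Disjoint G T → IsPackingOn (G ∪ T) w h x y W H →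
      (∀ i ∈ G, 2 * (β * g) ≤ h i) → (∀ i ∈ T, W < e * w i) → (∀ i ∈ T, Θ * h i ≤ g) →
      ∃ A ⊆ T, t * ∑ i ∈ T \ A, h i ≤ 2 * (n * e * g) ∧
        ∃ P : ContainerPacking (G ∪ A) w h W ((n + n / 3) * g), #P.containers ≤ K := by
  obtain ⟨Θ, K, hslots⟩ := exists_containerPacking_of_slots.{u} e N ht
  refine ⟨Θ + t, K, fun {ι G T w h x y W H g n} hnN hg hn hGT hP hG hwide hthin => ?_⟩
  set m := β * g
  have hm0 : 0 < m := Nat.mul_pos hβ hg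
  set r : ι → ℕ := fun i => (β + 1) * y i / m
  have hr : ∀ i, r i * m ≤ (β + 1) * y i := fun i => Nat.div_mul_le_self _ _
  set T' : Finset ι := {i ∈ T | (β + 1) * (y i + h i) ≤ (r i + 1) * m} with hT'
  have hT'T : T' ⊆ T := filter_subset _ _
  have hPG := (hP.mono subset_union_left).round hg hβ hn hG
  have hPT : IsPackingOn T' w h x y W H := hP.mono (hT'T.trans subset_union_right)
  have hrn : ∀ i ∈ T', r i < n := fun i hi => by
    have := (Nat.lt_of_lt_of_le (Nat.lt_add_of_pos_right (hPT.height_pos i hi)) (hPT.top_le i hi))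
    exact (Nat.div_lt_iff_lt_mul hm0).2 ((Nat.mul_lt_mul_of_pos_left this β.succ_pos).trans_le hn)
  have hsep : ∀ i ∈ T',
      ∀ j ∈ rowItems G (fun i => h i ⌈/⌉ g) (fun i => ((β + 1) * y i) ⌈/⌉ m) (r i),
      x j + w j ≤ x i ∨ x i + w i ≤ x j := fun i hi j hj =>
    have hjG := (mem_filter.1 hj).1
    hP.separated_of_mem_rowItems_round hg hβ subset_union_left (mem_union_right _ (hT'T hi))
      (fun hij => Finset.disjoint_left.1 hGT (hij ▸ hjG) (hT'T hi)) (hG j hjG) (hr i)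
      (mem_filter.1 hi).2 hj
  obtain ⟨slot, hgrid, hin⟩ := exists_slots hPG
    (hPT.fiber_row (fun i _ => hr i) fun i hi => (mem_filter.1 hi).2) hrn hsep
  obtain ⟨A, hAT, hloss, P, hK⟩ := hslots hnN hg (hGT.mono_right hT'T) hgrid
    (fun i hi => ⟨hP.height_pos i (mem_union_left _ hi), le_ceilDiv_mul hg _⟩) hin
    (fun i hi => hwide i (hT'T hi)) fun i hi =>
      (Nat.mul_le_mul_right _ (Nat.le_add_right Θ t)).trans (hthin i (hT'T hi))
  have hcross : #(T \ T') ≤ e * n :=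
    (hP.mono (sdiff_subset.trans subset_union_right)).card_crossing_le hn
      (fun i hi => hwide i (mem_sdiff.1 hi).1) fun i hi => by
        simpa [hT', (mem_sdiff.1 hi).1] using (mem_sdiff.1 hi).2
  refine ⟨A, hAT.trans hT'T, ?_, P, hK⟩
  calc t * ∑ i ∈ T \ A, h i ≤ n * e * g + e * n * g :=
        mul_sum_sdiff_le hloss hcross fun i hi =>
          (Nat.mul_le_mul_right _ (Nat.le_add_left t Θ)).trans (hthin i (mem_sdiff.1 hi).1)
    _ = 2 * (n * e * g) := by ring

end Rounding

section Assembly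

variable {ι : Type*} {s s' : Finset ι} {w h : ι → ℕ} {W H : ℕ}

theorem ContainerPacking.exists_stack_on_top (P : ContainerPacking s' w h W H) (hs : s' ⊆ s)
    (hw : ∀ i ∈ s, 0 < w i ∧ w i ≤ W) (hh : ∀ i ∈ s, 0 < h i) :
    ∃ P' : ContainerPacking s w h W (H + ∑ i ∈ s \ s', h i),
      #P'.containers ≤ #P.containers + 1 := by
  set c : ι → Bool := fun i => decide (i ∈ s')
  have hlow : {i ∈ s | c i = true} = s' := by
    ext i
    simpa [c] using @hs i
  have hhigh : {i ∈ s | c i = false} = s \ s' := by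
    ext i
    simp [c]
  have hsum : ∑ b : Bool, (if b then #P.containers else 1) = #P.containers + 1 := by simp
  rw [← hsum]
  refine exists_glue (c := c) (fun i _ => mem_univ _) (fun i hi => (hw i hi).1) hh
    (Q := fun b C => if b then C.bottom + C.height ≤ H else H ≤ C.bottom) ?_ ?_
  · intro k _ l _ hkl C D hC hD
    unfold Container.Disjoint RectDisjoint
    cases k <;> cases l <;> simp_all <;> omega
  · rintro (_ | _) -
    · rw [hhigh]
      obtain ⟨P', hP'⟩ := exists_of_horizontal_boxes (s := s \ s') (w := w) (h := h) (W := W)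
        (H := H + ∑ i ∈ s \ s', h i) (c := fun _ => ()) (S := {()})
        (box := fun _ => ⟨0, H, W, ∑ i ∈ s \ s', h i, false⟩) (by simp)
        (fun i hi => (hw i (mem_sdiff.1 hi).1).1) (fun i hi => hh i (mem_sdiff.1 hi).1)
        (by simp) (by simp) (by simp) (by simp) (fun i hi => (hw i (mem_sdiff.1 hi).1).2) (by simp)
      exact ⟨P', by simp [hP']⟩
    · rw [hlow]
      exact ⟨P.mono le_rfl (Nat.le_add_right _ _), le_rfl, P.top_le⟩

theorem three_mul_height_le {e n g S₁ S₂ : ℕ} (he : 0 < e) (hS₁ : 8 * e * S₁ ≤ H)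
    (hS₂ : 8 * e * S₂ ≤ n * g) (hg : 8 * e * g ≤ H)
    (hn : n * (4 * e * g) ≤ (4 * e + 1) * H + 4 * e * g) :
    3 * e * ((n + n / 3) * g + (S₁ + S₂)) ≤ (4 * e + 3) * H := by
  have hng : n * g ≤ 2 * H := by
    refine Nat.le_of_mul_le_mul_left ?_ he
    have : H ≤ e * H := Nat.le_mul_of_pos_left _ he
    linarith
  have hthird : 3 * (n + n / 3) * (e * g) ≤ 4 * n * (e * g) :=
    Nat.mul_le_mul_right _ (by omega)
  linarith

theorem exists_sparse_scale {f : ℕ → ℕ} (hf : ∀ b, b ≤ f b) (a : ℕ) {E : ℕ} (hE : 0 < E)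
    (s : Finset ι) (h : ι → ℕ) (H : ℕ) : ∃ k < E,
      E * ∑ i ∈ s with h i * f^[k] a ≤ H ∧ H < h i * f (f^[k] a), h i ≤ ∑ i ∈ s, h i := by
  have hdisj : Pairwise (Function.onFun Disjoint fun k =>
      {i ∈ s | h i * f^[k] a ≤ H ∧ H < h i * f (f^[k] a)}) := by
    refine (pairwise_disjoint_on _).2 fun k l hkl => Finset.disjoint_left.2 fun i hi hi' => ?_
    have hle : f (f^[k] a) ≤ f^[l] a := (Function.iterate_succ_apply' f k a).symm.trans_le
      (Function.monotone_iterate_of_id_le hf hkl a)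
    exact ((mem_filter.1 hi).2.2.trans_le (Nat.mul_le_mul_left _ hle)).not_ge (mem_filter.1 hi').2.1
  obtain ⟨k, hk, hle⟩ := exists_mul_sum_le_of_pairwiseDisjoint (nonempty_range_iff.2 hE.ne')
    (fun k _ => filter_subset _ _) (hdisj.set_pairwise (range E)) h
  rw [card_range] at hle
  exact ⟨k, mem_range.1 hk, hle⟩

theorem IsPackingOn.exists_sparse_scale {x y : ι → ℕ} (hP : IsPackingOn s w h x y W H) {e : ℕ}
    (he : 0 < e) (hs : ∀ i ∈ s, H < e * h i ∨ W < e * w i) {f : ℕ → ℕ} (hf : ∀ b, b ≤ f b) :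
    ∃ k < 8 * e * e, 8 * e * ∑ i ∈ s with h i * f^[k] e ≤ H ∧ H < h i * f (f^[k] e), h i ≤ H := by
  set wide := {i ∈ s | W < e * w i}
  have harea : ∑ i ∈ wide, h i ≤ e * H := by
    obtain hempty | ⟨i, hi⟩ := wide.eq_empty_or_nonempty
    · simp [hempty]
    · have hi := (mem_filter.1 hi).1
      exact (hP.mono (filter_subset _ _)).sum_height_le_of_lt_mul_width
        ((hP.width_pos i hi).trans_le ((Nat.le_add_left _ _).trans (hP.right_le i hi))) le_rfl
        fun j hj => (mem_filter.1 hj).2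
  obtain ⟨k, hk, hsum⟩ := StripPacking.exists_sparse_scale hf e (E := 8 * e * e) (by positivity)
    wide h H
  refine ⟨k, hk, Nat.le_of_mul_le_mul_left ?_ he⟩
  have hsub : {i ∈ s | h i * f^[k] e ≤ H ∧ H < h i * f (f^[k] e)} ⊆
      {i ∈ wide | h i * f^[k] e ≤ H ∧ H < h i * f (f^[k] e)} := fun i hi => by
    have hi := mem_filter.1 hi
    refine mem_filter.2 ⟨mem_filter.2 ⟨hi.1, (hs i hi.1).resolve_left (not_lt_of_ge ?_)⟩, hi.2⟩
    exact (mul_comm e _).trans_le ((Nat.mul_le_mul_left _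
      (Function.monotone_iterate_of_id_le hf k.zero_le e)).trans hi.2.1)
  exact (le_of_eq_of_le (by ring) (Nat.mul_le_mul_left (8 * e * e)
    (sum_le_sum_of_subset hsub))).trans (hsum.trans harea)

theorem exists_grid_scale {e B : ℕ} (he : 0 < e) (hB : 0 < B) (hBH : 8 * e * B ≤ H) :
    ∃ g n, 0 < g ∧ 8 * e * B * g ≤ H ∧ H ≤ 16 * e * B * g ∧ (4 * e + 1) * H ≤ n * (4 * e * g) ∧
      n * (4 * e * g) ≤ (4 * e + 1) * H + 4 * e * g ∧ n ≤ (4 * e + 1) * (4 * B) + 1 := by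
  have heB : 0 < 8 * e * B := by positivity
  have hg : 0 < H / (8 * e * B) := Nat.div_pos hBH heB
  have hH := Nat.lt_div_mul_add heB (a := H)
  have hH' := Nat.mul_div_le H (8 * e * B)
  generalize H / (8 * e * B) = g at hg hH hH'
  have hHg : H ≤ 16 * e * B * g := by
    have := Nat.le_mul_of_pos_right (8 * e * B) hg
    linarith
  have hβg : 0 < 4 * e * g := by positivity
  have hn := ceilDiv_mul_lt hβg ((4 * e + 1) * H)
  refine ⟨g, _, hg, hH', hHg, le_ceilDiv_mul hβg _, hn.le, Nat.le_of_mul_le_mul_right ?_ hβg⟩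
  refine hn.le.trans ?_
  have := Nat.mul_le_mul_left (4 * e + 1) hHg
  linarith

theorem exists_containerPacking_of_sparse (e B : ℕ) (he : 0 < e) : ∃ B' K : ℕ, B ≤ B' ∧
    ∀ {ι : Type u} {s : Finset ι} {w h x y : ι → ℕ} {W H : ℕ}, e ≤ B → 8 * e * B ≤ H →
      IsPackingOn s w h x y W H → (∀ i ∈ s, H < e * h i ∨ W < e * w i) →
      8 * e * ∑ i ∈ s with h i * B ≤ H ∧ H < h i * B', h i ≤ H →
      ∃ P : ContainerPacking s w h W ((4 * e + 3) * H / (3 * e)), #P.containers ≤ K := by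
  obtain ⟨Θ, K, hrows⟩ := exists_containerPacking_of_rows.{u} e ((4 * e + 1) * (4 * B) + 1)
    (t := 16 * (e * e)) (β := 4 * e) (by positivity) (by positivity)
  refine ⟨B + Θ * (16 * e * B), K + 1, Nat.le_add_right _ _, ?_⟩
  intro ι s w h x y W H heB hBH hP hs hmed
  have hB : 0 < B := he.trans_le heB
  obtain ⟨g, n, hg, hgH, hHg, hn, hn', hnN⟩ := exists_grid_scale he hB hBH
  set G : Finset ι := {i ∈ s | H < h i * B}
  set T : Finset ι := {i ∈ s | h i * (B + Θ * (16 * e * B)) ≤ H}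
  have hGT : Disjoint G T := Finset.disjoint_left.2 fun i hi hi' =>
    ((mem_filter.1 hi).2.trans_le (Nat.mul_le_mul_left _ (Nat.le_add_right _ _))).not_ge
      (mem_filter.1 hi').2
  have hwide : ∀ i ∈ s, h i * B ≤ H → W < e * w i := fun i hi hle => (hs i hi).resolve_left fun h =>
    (h.trans_le ((Nat.mul_le_mul_right _ heB).trans_eq (mul_comm _ _))).not_ge hle
  have hG : ∀ i ∈ G, 2 * (4 * e * g) ≤ h i := fun i hi => by
    refine Nat.le_of_mul_le_mul_right (le_of_eq_of_le ?_ (hgH.trans (mem_filter.1 hi).2.le))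
      hB
    ring
  have hΘ : ∀ i ∈ T, Θ * h i ≤ g := fun i hi => by
    have := (mem_filter.1 hi).2.trans hHg
    refine Nat.le_of_mul_le_mul_left (c := 16 * e * B) ?_ (by positivity)
    linarith [Nat.zero_le (h i * B)]
  have hGT' : G ∪ T ⊆ s := union_subset (filter_subset _ _) (filter_subset _ _)
  obtain ⟨A, hAT, hloss, P, hK⟩ := hrows hnN hg hn hGT (hP.mono hGT') hG
    (fun i hi => hwide i (mem_filter.1 hi).1
      ((Nat.mul_le_mul_left _ (Nat.le_add_right _ _)).trans (mem_filter.1 hi).2)) hΘ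
  obtain ⟨P', hP'⟩ := P.exists_stack_on_top ((union_subset_union_right hAT).trans hGT')
    (fun i hi => ⟨hP.width_pos i hi, (Nat.le_add_left _ _).trans (hP.right_le i hi)⟩) hP.height_pos
  refine ⟨P'.mono le_rfl ?_, hP'.trans (Nat.add_le_add_right hK 1)⟩
  have hrest : s \ (G ∪ A) ⊆
      {i ∈ s | h i * B ≤ H ∧ H < h i * (B + Θ * (16 * e * B))} ∪ T \ A := fun i hi => by
    simp only [G, T, mem_sdiff, mem_union, mem_filter, ← not_lt] at hi ⊢
    tauto
  have hloss' : 8 * e * ∑ i ∈ T \ A, h i ≤ n * g := by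
    refine Nat.le_of_mul_le_mul_left (c := 2 * e) ?_ (by positivity)
    linarith
  have := three_mul_height_le he hmed hloss' (by nlinarith) hn'
  rw [Nat.le_div_iff_mul_le (by positivity), mul_comm]
  exact (Nat.mul_le_mul_left _ (Nat.add_le_add_left ((sum_le_sum_of_subset hrest).trans
    (sum_union_le _ _ _)) _)).trans this

theorem exists_containerPacking (e : ℕ) (he : 0 < e) : ∃ K : ℕ,
    ∀ {ι : Type u} {s : Finset ι} {w h x y : ι → ℕ} {W H : ℕ}, IsPackingOn s w h x y W H →
      (∀ i ∈ s, H < e * h i ∨ W < e * w i) →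
      ∃ P : ContainerPacking s w h W ((4 * e + 3) * H / (3 * e)), #P.containers ≤ K := by
  choose next Kn hle hnext using fun B => exists_containerPacking_of_sparse.{u} e B he
  choose Kg hgrid using fun n => exists_containerPacking_of_grid.{u} n 0
  set E := 8 * e * e
  set N := 8 * e * next^[E] e
  have hbase : ∀ k, e ≤ next^[k] e := fun k =>
    Function.monotone_iterate_of_id_le hle k.zero_le e
  refine ⟨∑ n ∈ range N, Kg n + ∑ k ∈ range E, Kn (next^[k] e), ?_⟩
  intro ι s w h x y W H hP hs
  obtain hHN | hNH := lt_or_ge H N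
  · obtain ⟨P, hK, -⟩ := hgrid H hP (empty_subset s) (card_empty.le)
    have hHe : H + H / 3 ≤ (4 * e + 3) * H / (3 * e) := by
      rw [Nat.le_div_iff_mul_le (by positivity)]
      have := Nat.mul_le_mul_right e (Nat.div_mul_le_self H 3)
      linarith
    exact ⟨P.mono le_rfl hHe, (hK.trans (single_le_sum_of_canonicallyOrdered
      (mem_range.2 hHN))).trans (Nat.le_add_right _ _)⟩
  · obtain ⟨k, hk, hsparse⟩ := hP.exists_sparse_scale he hs hle
    have hlarge : 8 * e * next^[k] e ≤ H := (Nat.mul_le_mul_left _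
      (Function.monotone_iterate_of_id_le hle hk.le e)).trans hNH
    obtain ⟨P, hK⟩ := hnext _ (hbase k) hlarge hP hs hsparse
    exact ⟨P, (hK.trans (single_le_sum_of_canonicallyOrdered (f := fun k => Kn (next^[k] e))
      (mem_range.2 hk))).trans (Nat.le_add_left _ _)⟩

end Assembly

theorem exists_enumeration {α : Type*} [Nonempty α] (S : Finset α) :
    ∃ (f : ℕ → α) (g : α → ℕ), (∀ m < #S, f m ∈ S) ∧ (∀ m < #S, ∀ m' < #S, f m = f m' → m = m') ∧
      ∀ a ∈ S, g a < #S ∧ f (g a) = a := by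
  refine ⟨fun m => if hm : m < #S then S.equivFin.symm ⟨m, hm⟩ else Classical.arbitrary α,
    fun a => if ha : a ∈ S then S.equivFin ⟨a, ha⟩ else 0, ?_, ?_, ?_⟩
  · intro m hm
    simp [hm]
  · intro m hm m' hm' h
    simpa [hm, hm'] using h
  · intro a ha
    simp [ha]

section Casts

variable {C D : Container}

theorem Container.Disjoint.regionDisjoint (hCD : C.Disjoint D) :
    RegionDisjoint C.left C.bottom C.width C.height D.left D.bottom D.width D.height := by
  unfold RegionDisjoint
  exact_mod_cast hCD

theorem Container.Holds.inRegion {w h x y : ℕ} (hC : C.Holds w h x y) :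
    InRegion x y w h C.left C.bottom C.width C.height := by
  unfold InRegion
  exact_mod_cast hC

end Casts

section Conclusion

variable {ι : Type*} {s : Finset ι} {w h x y : ι → ℕ} {W H : ℕ}

theorem IsPackingOn.of_isPacking (hxy : IsPacking w h x y W H) (hw : ∀ i, 0 < w i)
    (hh : ∀ i, 0 < h i) (s : Finset ι) : IsPackingOn s w h x y W H where
  width_pos i _ := hw i
  height_pos i _ := hh i
  right_le i _ := (hxy.1 i).1
  top_le i _ := (hxy.1 i).2
  disjoint _ _ _ _ hij := hxy.2 hij

theorem ContainerPacking.isPackingOn (P : ContainerPacking s w h W H) (hw : ∀ i ∈ s, 0 < w i)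
    (hh : ∀ i ∈ s, 0 < h i) : IsPackingOn s w h P.x P.y W H where
  width_pos := hw
  height_pos := hh
  right_le i hi := (P.holds i hi).2.1.trans (P.right_le _ (P.container_mem i hi))
  top_le i hi := (P.holds i hi).2.2.2.trans (P.top_le _ (P.container_mem i hi))
  disjoint i hi j hj hij := by
    by_cases hC : P.container i = P.container j
    · have := P.separated hi hj hij hC
      unfold RectDisjoint
      split_ifs at this <;> omega
    · have := P.disjoint (P.container_mem i hi) (P.container_mem j hj) hC
      have := P.holds i hi
      have := P.holds j hj
      unfold Container.Disjoint Container.Holds RectDisjoint at *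
      omega

theorem ContainerPacking.exists_numbering (P : ContainerPacking s w h W H) :
    ∃ (C : ℕ → Container) (c : ι → ℕ), (∀ m < #P.containers, C m ∈ P.containers) ∧
      (∀ m < #P.containers, ∀ m' < #P.containers, m ≠ m' → (C m).Disjoint (C m')) ∧
      ∀ i ∈ s, c i < #P.containers ∧ C (c i) = P.container i := by
  obtain ⟨C, idx, hC, hinj, hidx⟩ := exists_enumeration P.containers
  exact ⟨C, idx ∘ P.container, hC, fun m hm m' hm' hne =>
    P.disjoint (hC m hm) (hC m' hm') fun h => hne (hinj m hm m' hm' h),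
    fun i hi => hidx _ (P.container_mem i hi)⟩

theorem lt_nat_mul_of_mul_lt {ε : ℝ} {e V v : ℕ} (he : 1 ≤ e * ε) (hv : ε * V < v) :
    V < e * v := by
  have he0 : (0 : ℝ) < e := (Nat.cast_nonneg e).lt_of_ne fun h => by
    norm_num [← h] at he
  have : (V : ℝ) < e * v := calc
    (V : ℝ) ≤ e * ε * V := le_mul_of_one_le_left (Nat.cast_nonneg V) he
    _ = e * (ε * V) := mul_assoc ..
    _ < e * v := mul_lt_mul_of_pos_left hv he0
  exact_mod_cast this

theorem div_le_ceil_mul {ε : ℝ} {e : ℕ} (he : 1 ≤ e * ε) (H : ℕ) :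
    (4 * e + 3) * H / (3 * e) ≤ ⌈(4 / 3 + ε) * H⌉₊ := by
  refine Nat.div_le_of_le_mul ?_
  have hceil := Nat.le_ceil ((4 / 3 + ε) * H)
  have : ((4 * e + 3) * H : ℝ) ≤ 3 * e * ⌈(4 / 3 + ε) * H⌉₊ := calc
    ((4 * e + 3) * H : ℝ) ≤ (4 * e + 3 * (e * ε)) * H := by gcongr; linarith
    _ = 3 * e * ((4 / 3 + ε) * H) := by ring
    _ ≤ 3 * e * ⌈(4 / 3 + ε) * H⌉₊ := by gcongr
  exact_mod_cast this

theorem exists_containerPacking_of_real {ε : ℝ} (hε : 0 < ε) : ∃ K : ℕ,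
    ∀ {ι : Type u} {s : Finset ι} {w h x y : ι → ℕ} {W H : ℕ}, IsPackingOn s w h x y W H →
      (∀ i ∈ s, ε * H < h i ∨ ε * W < w i) →
      ∃ P : ContainerPacking s w h W ⌈(4 / 3 + ε) * H⌉₊, #P.containers ≤ K := by
  obtain ⟨e, he⟩ := exists_nat_gt (1 / ε)
  have heε : 1 ≤ e * ε := ((div_lt_iff₀ hε).1 he).le
  obtain ⟨K, hK⟩ := exists_containerPacking.{u} e (Nat.cast_pos.1 ((one_div_pos.2 hε).trans he))
  refine ⟨K, fun hP hs => ?_⟩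
  obtain ⟨P, hPK⟩ := hK hP fun i hi =>
    (hs i hi).imp (lt_nat_mul_of_mul_lt heε) (lt_nat_mul_of_mul_lt heε)
  exact ⟨P.mono le_rfl (div_le_ceil_mul heε _), hPK⟩

end Conclusion

end StripPacking

/-- Structural container lemma (Lemma 4.3 with α = 1/3): for every `ε ∈ (0,1)` there is a
constant `K = K(ε)` such that whenever a family of rectangles of width at most `W` admits a
feasible packing into `[0,W]×[0,H]`, all the non-small rectangles (those with `h_i > ε·H`
or `w_i > ε·W`) can be feasibly packed into at most `K` horizontal/vertical containers with
pairwise disjoint interiors inside `[0,W]×[0,⌈(4/3+ε)·H⌉]`. -/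
theorem structural_container_packing
    (ε : ℝ) (hε : ε ∈ Set.Ioo (0 : ℝ) 1) :
    ∃ K : ℕ, 0 < K ∧
      ∀ (W H : ℕ), 0 < W → 0 < H →
      ∀ (ι : Type) (_ : Fintype ι) (w h : ι → ℕ),
        (∀ i, 0 < w i ∧ 0 < h i ∧ w i ≤ W) →
        (∃ x y : ι → ℕ, IsPacking w h x y W H) →
        ∃ (n : ℕ) (cx cy cw ch : ℕ → ℝ) (vert : ℕ → Bool) (x y : ι → ℕ) (c : ι → ℕ),
          n ≤ K ∧
          (∀ m < n, 0 ≤ cx m ∧ 0 ≤ cy m ∧ 0 ≤ cw m ∧ 0 ≤ ch m ∧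
            cx m + cw m ≤ W ∧ cy m + ch m ≤ (⌈(4 / 3 + ε) * H⌉₊ : ℝ)) ∧
          (∀ m < n, ∀ m' < n, m ≠ m' →
            RegionDisjoint (cx m) (cy m) (cw m) (ch m) (cx m') (cy m') (cw m') (ch m')) ∧
          (∀ i, (ε * H < (h i : ℝ) ∨ ε * W < (w i : ℝ)) →
            x i + w i ≤ W ∧ y i + h i ≤ ⌈(4 / 3 + ε) * H⌉₊) ∧
          (∀ i j, (ε * H < (h i : ℝ) ∨ ε * W < (w i : ℝ)) →
            (ε * H < (h j : ℝ) ∨ ε * W < (w j : ℝ)) → i ≠ j →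
            RectDisjoint (x i) (y i) (w i) (h i) (x j) (y j) (w j) (h j)) ∧
          (∀ i, (ε * H < (h i : ℝ) ∨ ε * W < (w i : ℝ)) →
            c i < n ∧
            InRegion (x i) (y i) (w i) (h i) (cx (c i)) (cy (c i)) (cw (c i)) (ch (c i))) ∧
          (∀ i j, (ε * H < (h i : ℝ) ∨ ε * W < (w i : ℝ)) →
            (ε * H < (h j : ℝ) ∨ ε * W < (w j : ℝ)) → i ≠ j → c i = c j →
            (vert (c i) = true → x i + w i ≤ x j ∨ x j + w j ≤ x i) ∧
            (vert (c i) = false → y i + h i ≤ y j ∨ y j + h j ≤ y i)) := by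
  obtain ⟨K, hK⟩ := StripPacking.exists_containerPacking_of_real.{0} hε.1
  refine ⟨K + 1, K.succ_pos, fun W H _ _ ι _ w h hpos ⟨x, y, hxy⟩ => ?_⟩
  set s : Finset ι := {i | ε * H < h i ∨ ε * W < w i}
  have hs : ∀ i, ε * H < h i ∨ ε * W < w i → i ∈ s := fun i hi => by simpa [s] using hi
  obtain ⟨P, hPK⟩ := hK (.of_isPacking hxy (fun i => (hpos i).1) (fun i => (hpos i).2.1) s)
    fun i hi => (Finset.mem_filter.1 hi).2
  have hP := P.isPackingOn (fun i _ => (hpos i).1) fun i _ => (hpos i).2.1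
  obtain ⟨C, c, hC, hdisj, hc⟩ := P.exists_numbering
  refine ⟨P.containers.card, fun m => (C m).left, fun m => (C m).bottom, fun m => (C m).width,
    fun m => (C m).height, fun m => (C m).vertical, P.x, P.y, c, hPK.trans K.le_succ,
    fun m hm => ⟨by positivity, by positivity, by positivity, by positivity,
      by beta_reduce; exact_mod_cast P.right_le _ (hC m hm),
      by beta_reduce; exact_mod_cast P.top_le _ (hC m hm)⟩,
    fun m hm m' hm' hne => (hdisj m hm m' hm' hne).regionDisjoint,
    fun i hi => ⟨hP.right_le i (hs i hi), hP.top_le i (hs i hi)⟩,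
    fun i j hi hj hij => hP.disjoint (hs i hi) (hs j hj) hij,
    fun i hi => ⟨(hc i (hs i hi)).1, ?_⟩, fun i j hi hj hij hcij => ?_⟩
  · simpa only [(hc i (hs i hi)).2] using (P.holds i (hs i hi)).inRegion
  · have hsep := P.separated (hs i hi) (hs j hj) hij
      (by rw [← (hc i (hs i hi)).2, hcij, (hc j (hs j hj)).2])
    simp only [(hc i (hs i hi)).2]
    split_ifs at hsep with hv <;> simp [hv, hsep]
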